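/- Let α, β > -1, s ∈ ℕ, 1 ≤ p ≤ ∞, and fix an admissible function η. Suppose either (1) θ ∈ (-1,1); or (2) θ = -1 and β < p-1 if 1 < p ≤ ∞, β ≤ 0 if p = 1; or (3) θ = 1 and α < p-1 if 1 < p ≤ ∞, α ≤ 0 if p = 1. Then there is a constant c > 0 independent of f and n such that for every f ∈ W_p^s(w_{α,β}) (f ∈ C^s[-1,1] when p = ∞) and every n ≥ 1, ‖f - 𝒱_{n,θ}^{α-s,β-s} f‖_{W_p^s(w_{α,β})} ≤ c · E_n(f^{(s)})_{L^p(w_{α,β})}. -/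

import Mathlib

open MeasureTheory Set ENNReal NNReal

noncomputable section

namespace JacobiApprox

/-- The Jacobi weight `w_{α,β}(x) = (1-x)^α (1+x)^β` on `(-1,1)`. -/
def w (α β x : ℝ) : ℝ := (1 - x) ^ α * (1 + x) ^ β

/-- The weighted `L^p` norm `‖f‖_{L^p(w_{α,β})}`; for `p = ∞` it is the uniform
norm on `[-1,1]`. -/
def LpW (α β : ℝ) (p : ℝ≥0∞) (f : ℝ → ℝ) : ℝ :=
  if p = ⊤ then sSup ((fun x => |f x|) '' Icc (-1 : ℝ) 1)
  else (∫ x in Ioo (-1 : ℝ) 1, |f x| ^ p.toReal * w α β x) ^ (1 / p.toReal)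

/-- Membership in `L^p(w_{α,β})` (`f ∈ C[-1,1]` when `p = ∞`). -/
def MemLpW (α β : ℝ) (p : ℝ≥0∞) (f : ℝ → ℝ) : Prop :=
  Measurable f ∧
    (p ≠ ⊤ → IntegrableOn (fun x => |f x| ^ p.toReal * w α β x) (Ioo (-1 : ℝ) 1)) ∧
    (p = ⊤ → ContinuousOn f (Icc (-1 : ℝ) 1))

/-- `E_n(f)_{L^p(w_{α,β})}`: the error of best approximation of `f` by polynomials
of degree at most `n` in `L^p(w_{α,β})`. -/
def E (α β : ℝ) (p : ℝ≥0∞) (n : ℕ) (f : ℝ → ℝ) : ℝ :=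
  sInf {r : ℝ | ∃ q : Polynomial ℝ, q.natDegree ≤ n ∧
    r = LpW α β p (fun x => f x - q.eval x)}

/-- Membership in the Sobolev space `W_p^s(w_{α,β})`: `f` has `s` continuous
derivatives and `f^{(s)} ∈ L^p(w_{α,β})` (for `p = ∞` this is `f ∈ C^s[-1,1]`). -/
def MemW (α β : ℝ) (p : ℝ≥0∞) (s : ℕ) (f : ℝ → ℝ) : Prop :=
  ContDiff ℝ (s : ℕ∞) f ∧
    (p ≠ ⊤ → IntegrableOn (fun x => |iteratedDeriv s f x| ^ p.toReal * w α β x)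
      (Ioo (-1 : ℝ) 1))

/-- The Sobolev norm `‖f‖_{W_p^s(w_{α,β})}` (max over derivatives when `p = ∞`). -/
def WNorm (α β : ℝ) (p : ℝ≥0∞) (s : ℕ) (f : ℝ → ℝ) : ℝ :=
  if p = ⊤ then
    (Finset.range (s + 1)).sup' (Finset.nonempty_range_iff.mpr (Nat.succ_ne_zero s))
      (fun k => LpW α β ⊤ (iteratedDeriv k f))
  else (∑ k ∈ Finset.range (s + 1), (LpW α β p (iteratedDeriv k f)) ^ p.toReal) ^
    (1 / p.toReal)

/-- Pochhammer symbol (rising factorial) `(a)_k`. -/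
def poch (a : ℝ) (k : ℕ) : ℝ := ∏ i ∈ Finset.range k, (a + i)

/-- The Jacobi polynomial `P_n^{(α,β)}`. -/
def JP (α β : ℝ) (n : ℕ) (t : ℝ) : ℝ :=
  (poch (α + 1) n / n.factorial) *
    ∑ k ∈ Finset.range (n + 1),
      poch (-(n : ℝ)) k * poch ((n : ℝ) + α + β + 1) k /
        (poch (α + 1) k * k.factorial) * ((1 - t) / 2) ^ k

/-- The renormalized Jacobi polynomial `J_n^{α,β} = 2^n/(n+α+β+1)_n · P_n^{(α,β)}`. -/
def J (α β : ℝ) (n : ℕ) (t : ℝ) : ℝ :=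
  2 ^ n / poch ((n : ℝ) + α + β + 1) n * JP α β n t

/-- The inner product `⟨f,g⟩_{α,β} = ∫_{-1}^1 f g w_{α,β}`. -/
def ip (α β : ℝ) (f g : ℝ → ℝ) : ℝ := ∫ x in Ioo (-1 : ℝ) 1, f x * g x * w α β x

/-- `h_n^{α,β} = ⟨J_n^{α,β}, J_n^{α,β}⟩_{α,β}`. -/
def hJ (α β : ℝ) (n : ℕ) : ℝ := ip α β (J α β n) (J α β n)

/-- The Fourier–Jacobi coefficient `\hat f_n^{α,β}`. -/
def coeff (α β : ℝ) (n : ℕ) (f : ℝ → ℝ) : ℝ := ip α β f (J α β n) / hJ α β n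

/-- The `n`-th partial sum `S_n^{α,β} f` of the Fourier–Jacobi series. -/
def S (α β : ℝ) (n : ℕ) (f : ℝ → ℝ) (x : ℝ) : ℝ :=
  ∑ k ∈ Finset.range (n + 1), coeff α β k f * J α β k x

/-- An admissible cut-off function: `C^∞`, `η ≡ 1` on `[0,1]`, `η ≡ 0` on `[2,∞)`. -/
def Admissible (η : ℝ → ℝ) : Prop :=
  ContDiff ℝ (⊤ : ℕ∞) η ∧ (∀ t : ℝ, 0 ≤ t → t ≤ 1 → η t = 1) ∧ ∀ t : ℝ, 2 ≤ t → η t = 0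

/-- The de la Vallée Poussin type operator `V_n^{α,β} f`. -/
def V (η : ℝ → ℝ) (α β : ℝ) (n : ℕ) (f : ℝ → ℝ) (x : ℝ) : ℝ :=
  ∑ k ∈ Finset.range (2 * n + 1), η ((k : ℝ) / (n : ℝ)) * coeff α β k f * J α β k x

/-- The Sobolev orthogonal polynomial `𝒥_{n,θ}^{α-s,β-s}`. -/
def SJ (α β : ℝ) (s : ℕ) (θ : ℝ) (n : ℕ) (x : ℝ) : ℝ :=
  if n < s then (x - θ) ^ n / n.factorial
  else ∫ t in θ..x, (x - t) ^ (s - 1) / (s - 1).factorial * J α β (n - s) t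

/-- The Sobolev inner product `⟨f,g⟩_{α,β}^{-s}`. -/
def ipS (α β : ℝ) (s : ℕ) (θ : ℝ) (lam : ℕ → ℝ) (f g : ℝ → ℝ) : ℝ :=
  ip α β (iteratedDeriv s f) (iteratedDeriv s g) +
    ∑ k ∈ Finset.range s, lam k * iteratedDeriv k f θ * iteratedDeriv k g θ

/-- The Fourier coefficient `\hat{𝔣}_n^{α-s,β-s}` in the Sobolev orthogonal system. -/
def coeffS (α β : ℝ) (s : ℕ) (θ : ℝ) (lam : ℕ → ℝ) (n : ℕ) (f : ℝ → ℝ) : ℝ :=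
  ipS α β s θ lam f (SJ α β s θ n) / ipS α β s θ lam (SJ α β s θ n) (SJ α β s θ n)

/-- The `n`-th partial sum `𝒮_{n,θ}^{α-s,β-s} f` of the Sobolev orthogonal expansion. -/
def SS (α β : ℝ) (s : ℕ) (θ : ℝ) (lam : ℕ → ℝ) (n : ℕ) (f : ℝ → ℝ) (x : ℝ) : ℝ :=
  ∑ k ∈ Finset.range (n + 1), coeffS α β s θ lam k f * SJ α β s θ k x

/-- The operator `𝒱_{n,θ}^{α-s,β-s} f`. -/
def VS (η : ℝ → ℝ) (α β : ℝ) (s : ℕ) (θ : ℝ) (n : ℕ) (f : ℝ → ℝ) (x : ℝ) : ℝ :=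
  (∑ k ∈ Finset.range s, iteratedDeriv k f θ * (x - θ) ^ k / k.factorial) +
    ∫ t in θ..x, (x - t) ^ (s - 1) / (s - 1).factorial *
      V η α β n (iteratedDeriv s f) t

/-- `A_j^{α,β} = (α+β+2)_{2j}/(α+1)_j`. -/
def Acoef (α β : ℝ) (j : ℕ) : ℝ := poch (α + β + 2) (2 * j) / poch (α + 1) j

/-- `B_n^{α,β} = (α+1)_{n+1}/(α+β+2)_{2n+1}`. -/
def Bcoef (α β : ℝ) (n : ℕ) : ℝ := poch (α + 1) (n + 1) / poch (α + β + 2) (2 * n + 1)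

/-- `D_j^{α,β} = (j+β+1)/((2j+α+β+2)(2j+α+β+3))`. -/
def Dcoef (α β : ℝ) (j : ℕ) : ℝ :=
  ((j : ℝ) + β + 1) / ((2 * (j : ℝ) + α + β + 2) * (2 * (j : ℝ) + α + β + 3))

/-- The function `u_{g,k}` of the Aubin–Nitsche duality argument. -/
def u (α β : ℝ) (s k : ℕ) (g : ℝ → ℝ) (x : ℝ) : ℝ :=
  ∫ t in (-1 : ℝ)..x, (x - t) ^ (s - 1) / (s - 1).factorial * (1 / w α β t) *
    ∫ y in t..(1 : ℝ), (y - t) ^ (s - k - 1) / (s - k - 1).factorial * g y * w α β y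

/-- The `s`-th derivative of `u_{g,k}`, given by its explicit formula. -/
def uDs (α β : ℝ) (s k : ℕ) (g : ℝ → ℝ) (x : ℝ) : ℝ :=
  (1 / w α β x) *
    ∫ y in x..(1 : ℝ), (y - x) ^ (s - k - 1) / (s - k - 1).factorial * g y * w α β y

/-!
By Taylor's formula `f - 𝒱 f` is the `s`-fold iterated integral from `θ` of `f⁽ˢ⁾ - V f⁽ˢ⁾`, so
Hardy's inequality bounds its Sobolev norm by the `Lᵖ` norm of `f⁽ˢ⁾ - V f⁽ˢ⁾`. As `V` reproduces
polynomials of degree at most `n`, that norm is controlled by the error of best approximation once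
`V` is bounded on `Lᵖ` uniformly in `n`.

For the uniform bound, write `η (k / n)` as a superposition of cosines `cos (τ (k + ρ) / n)` with
`ρ = (α + β + 1) / 2`. In the variable `arccos x` the corresponding multipliers solve a wave
equation. Its energy, weighted by a function that decays away from a given point on the scale
`1 / n`, grows at most polynomially in `τ`: this is finite propagation speed, and it gives a
weighted `L²` bound for `V f`. A pointwise inequality for polynomials of degree at most `2 n` turns
it into a bound for `V` in the uniform norm, hence for the `L¹` norms of its kernel, and Schur's
test yields all finite `p`.
-/

open Polynomial (C X derivative)
open scoped Polynomial

/-! ### The Jacobi weight and its measure -/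

section JacobiMeasure

variable {α β : ℝ}

/-- The measure `w_{α,β}(x) dx` on `(-1, 1)`. -/
def jacobiMeasure (α β : ℝ) : Measure ℝ :=
  (volume.restrict (Ioo (-1 : ℝ) 1)).withDensity fun x => ENNReal.ofReal (w α β x)

lemma measurable_w (α β : ℝ) : Measurable (w α β) := by
  unfold w; fun_prop

lemma w_pos (α β : ℝ) {x : ℝ} (hx : x ∈ Ioo (-1 : ℝ) 1) : 0 < w α β x :=
  mul_pos (Real.rpow_pos_of_pos (by linarith [hx.2]) _)
    (Real.rpow_pos_of_pos (by linarith [hx.1]) _)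

lemma continuousOn_w (hα : 0 ≤ α) (hβ : 0 ≤ β) (s : Set ℝ) : ContinuousOn (w α β) s :=
  ContinuousOn.mul (ContinuousOn.rpow_const (by fun_prop) fun _ _ => Or.inr hα)
    (ContinuousOn.rpow_const (by fun_prop) fun _ _ => Or.inr hβ)

lemma hasDerivAt_w_add_one (α β : ℝ) {y : ℝ} (hy : y ∈ Ioo (-1 : ℝ) 1) :
    HasDerivAt (w (α + 1) (β + 1)) (((β - α) - (α + β + 2) * y) * w α β y) y := by
  have h1 : 0 < 1 - y := by linarith [hy.2]
  have h2 : 0 < 1 + y := by linarith [hy.1]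
  have hd1 : HasDerivAt (fun y : ℝ => (1 - y) ^ (α + 1)) (-1 * (α + 1) * (1 - y) ^ (α + 1 - 1)) y :=
    ((hasDerivAt_id y).const_sub 1).rpow_const (Or.inl h1.ne')
  have hd2 : HasDerivAt (fun y : ℝ => (1 + y) ^ (β + 1)) (1 * (β + 1) * (1 + y) ^ (β + 1 - 1)) y :=
    ((hasDerivAt_id y).const_add 1).rpow_const (Or.inl h2.ne')
  refine (hd1.mul hd2).congr_deriv ?_
  rw [add_sub_cancel_right, add_sub_cancel_right, Real.rpow_add h1, Real.rpow_add h2,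
    Real.rpow_one, Real.rpow_one, w]
  ring

lemma w_add_one_eq_mul (α β : ℝ) {x : ℝ} (hx : x ∈ Ioo (-1 : ℝ) 1) :
    w (α + 1) (β + 1) x = (1 - x ^ 2) * w α β x := by
  rw [w, w, Real.rpow_add (by linarith [hx.2]), Real.rpow_add (by linarith [hx.1]),
    Real.rpow_one, Real.rpow_one]
  ring

lemma rpow_le_two_rpow_abs (a : ℝ) {y : ℝ} (h1 : 1 ≤ y) (h2 : y ≤ 2) : y ^ a ≤ 2 ^ |a| :=
  (Real.rpow_le_rpow_of_exponent_le h1 (le_abs_self a)).trans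
    (Real.rpow_le_rpow (by linarith) h2 (abs_nonneg a))

/-- Each factor of the weight is bounded on the half of `(-1, 1)` away from its singularity. -/
lemma w_le_add (α β : ℝ) {x : ℝ} (hx : x ∈ Ioo (-1 : ℝ) 1) :
    w α β x ≤ 2 ^ |β| * (1 - x) ^ α + 2 ^ |α| * (1 + x) ^ β := by
  have h1 : 0 ≤ (1 - x) ^ α := Real.rpow_nonneg (by linarith [hx.2]) _
  have h2 : 0 ≤ (1 + x) ^ β := Real.rpow_nonneg (by linarith [hx.1]) _
  have hα : (0 : ℝ) ≤ 2 ^ |α| := by positivity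
  have hβ : (0 : ℝ) ≤ 2 ^ |β| := by positivity
  unfold w
  rcases le_total x 0 with h0 | h0
  · have := rpow_le_two_rpow_abs α (y := 1 - x) (by linarith) (by linarith [hx.1])
    nlinarith
  · have := rpow_le_two_rpow_abs β (y := 1 + x) (by linarith) (by linarith [hx.2])
    nlinarith

lemma integrableOn_one_sub_rpow (hα : -1 < α) :
    IntegrableOn (fun x : ℝ => (1 - x) ^ α) (Ioo (-1 : ℝ) 1) := by
  have h := (intervalIntegral.intervalIntegrable_rpow' (a := 0) (b := 2) hα).comp_sub_left 1
  norm_num at h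
  exact (intervalIntegrable_iff_integrableOn_Ioo_of_le (by norm_num)).1 h.symm

lemma integrableOn_one_add_rpow (hβ : -1 < β) :
    IntegrableOn (fun x : ℝ => (1 + x) ^ β) (Ioo (-1 : ℝ) 1) := by
  have h := (intervalIntegral.intervalIntegrable_rpow' (a := 0) (b := 2) hβ).comp_add_left 1
  norm_num at h
  exact (intervalIntegrable_iff_integrableOn_Ioo_of_le (by norm_num)).1 h

lemma integrableOn_w (hα : -1 < α) (hβ : -1 < β) : IntegrableOn (w α β) (Ioo (-1 : ℝ) 1) := by
  refine (((integrableOn_one_sub_rpow hα).const_mul (2 ^ |β|)).add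
    ((integrableOn_one_add_rpow hβ).const_mul (2 ^ |α|))).mono'
    (measurable_w α β).aestronglyMeasurable ?_
  filter_upwards [ae_restrict_mem measurableSet_Ioo] with x hx
  rw [Real.norm_of_nonneg (w_pos α β hx).le]
  exact w_le_add α β hx

lemma integral_jacobiMeasure (α β : ℝ) (F : ℝ → ℝ) :
    ∫ x, F x ∂(jacobiMeasure α β) = ∫ x in Ioo (-1 : ℝ) 1, F x * w α β x := by
  unfold jacobiMeasure
  rw [integral_withDensity_eq_integral_toReal_smul (measurable_w α β).ennreal_ofReal (by simp)]
  refine setIntegral_congr_fun measurableSet_Ioo fun x hx => ?_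
  simp only [smul_eq_mul]
  rw [ENNReal.toReal_ofReal (w_pos α β hx).le, mul_comm]

lemma integrable_jacobiMeasure_iff (α β : ℝ) (F : ℝ → ℝ) :
    Integrable F (jacobiMeasure α β) ↔
      IntegrableOn (fun x => F x * w α β x) (Ioo (-1 : ℝ) 1) := by
  unfold jacobiMeasure
  rw [integrable_withDensity_iff_integrable_smul' (measurable_w α β).ennreal_ofReal (by simp)]
  refine integrableOn_congr_fun (fun x hx => ?_) measurableSet_Ioo
  simp only [smul_eq_mul]
  rw [ENNReal.toReal_ofReal (w_pos α β hx).le, mul_comm]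

lemma isFiniteMeasure_jacobiMeasure (hα : -1 < α) (hβ : -1 < β) :
    IsFiniteMeasure (jacobiMeasure α β) :=
  isFiniteMeasure_withDensity_ofReal (integrableOn_w hα hβ).2

lemma jacobiMeasure_absolutelyContinuous (α β : ℝ) :
    jacobiMeasure α β ≪ volume.restrict (Ioo (-1 : ℝ) 1) :=
  withDensity_absolutelyContinuous _ _

lemma ae_jacobiMeasure_mem_Ioo (α β : ℝ) : ∀ᵐ x ∂(jacobiMeasure α β), x ∈ Ioo (-1 : ℝ) 1 :=
  (jacobiMeasure_absolutelyContinuous α β).ae_le (ae_restrict_mem measurableSet_Ioo)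

lemma jacobiMeasure_univ_pos (α β : ℝ) : 0 < jacobiMeasure α β univ := by
  refine Measure.measure_univ_pos.2 fun h => ?_
  rw [jacobiMeasure, withDensity_eq_zero_iff (measurable_w α β).ennreal_ofReal.aemeasurable] at h
  have hfalse : ∀ᵐ _ ∂(volume.restrict (Ioo (-1 : ℝ) 1)), False := by
    filter_upwards [h, ae_restrict_mem measurableSet_Ioo] with x hx hmem
    exact (ENNReal.ofReal_pos.2 (w_pos α β hmem)).ne' hx
  rw [Filter.eventually_false_iff_eq_bot, ae_eq_bot, Measure.restrict_eq_zero] at hfalse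
  norm_num at hfalse

lemma integrable_jacobiMeasure_of_abs_le (hα : -1 < α) (hβ : -1 < β) {F : ℝ → ℝ} (B : ℝ)
    (hF : AEStronglyMeasurable F (jacobiMeasure α β)) (hB : ∀ x ∈ Ioo (-1 : ℝ) 1, |F x| ≤ B) :
    Integrable F (jacobiMeasure α β) := by
  have := isFiniteMeasure_jacobiMeasure hα hβ
  exact Integrable.of_bound hF B ((ae_jacobiMeasure_mem_Ioo α β).mono hB)

lemma integrable_jacobiMeasure_of_continuousOn (hα : -1 < α) (hβ : -1 < β) {F : ℝ → ℝ}
    (hF : ContinuousOn F (Icc (-1 : ℝ) 1)) : Integrable F (jacobiMeasure α β) := by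
  obtain ⟨B, hB⟩ := isCompact_Icc.exists_bound_of_continuousOn hF
  exact integrable_jacobiMeasure_of_abs_le hα hβ B
    (((hF.mono Ioo_subset_Icc_self).aestronglyMeasurable measurableSet_Ioo).mono_ac
      (jacobiMeasure_absolutelyContinuous α β)) fun x hx => hB x (Ioo_subset_Icc_self hx)

lemma ip_eq_integral (α β : ℝ) (f g : ℝ → ℝ) :
    ip α β f g = ∫ x, f x * g x ∂(jacobiMeasure α β) :=
  (integral_jacobiMeasure α β fun x => f x * g x).symm

lemma integral_eval_sq_pos (hα : -1 < α) (hβ : -1 < β) {q : ℝ[X]} (hq : q ≠ 0) :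
    0 < ∫ x, q.eval x ^ 2 ∂(jacobiMeasure α β) := by
  have : NullSingletonClass (jacobiMeasure α β) := by unfold jacobiMeasure; infer_instance
  rw [integral_pos_iff_support_of_nonneg (fun x => sq_nonneg _)
    (integrable_jacobiMeasure_of_continuousOn hα hβ (q.continuousOn.pow 2))]
  have hsupp : (Function.support fun x => q.eval x ^ 2) = (q.roots.toFinset : Set ℝ)ᶜ := by
    ext x; simp [hq]
  rw [hsupp, measure_compl₀ (q.roots.toFinset.measurableSet.nullMeasurableSet)]
  · rw [q.roots.toFinset.finite_toSet.measure_zero, tsub_zero]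
    exact jacobiMeasure_univ_pos α β
  · rw [q.roots.toFinset.finite_toSet.measure_zero]
    exact ENNReal.zero_ne_top

end JacobiMeasure

/-! ### Jacobi polynomials as eigenfunctions of the Jacobi operator -/

section JacobiOperator

variable {α β : ℝ}

/-- The Jacobi differential operator
`p ↦ -((1 - x²) p'' + (β - α - (α + β + 2) x) p')`, with the sign that makes it positive. -/
def jacobiOperator (α β : ℝ) : ℝ[X] →ₗ[ℝ] ℝ[X] :=
  -(LinearMap.mulLeft ℝ (1 - X ^ 2) ∘ₗ derivative ∘ₗ derivative +
    LinearMap.mulLeft ℝ (C (β - α) - C (α + β + 2) * X) ∘ₗ derivative)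

lemma jacobiOperator_apply (α β : ℝ) (p : ℝ[X]) :
    jacobiOperator α β p = -((1 - X ^ 2) * derivative (derivative p) +
      (C (β - α) - C (α + β + 2) * X) * derivative p) :=
  rfl

lemma hasDerivAt_mul_derivative_mul_w (α β : ℝ) {φ : ℝ → ℝ} {φ' y : ℝ} (p : ℝ[X])
    (hy : y ∈ Ioo (-1 : ℝ) 1) (hφ : HasDerivAt φ φ' y) :
    HasDerivAt (fun y => φ y * (derivative p).eval y * w (α + 1) (β + 1) y)
      ((φ' * ((derivative p).eval y * (1 - y ^ 2)) - φ y * (jacobiOperator α β p).eval y) *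
        w α β y) y := by
  refine ((hφ.mul ((derivative p).hasDerivAt y)).mul (hasDerivAt_w_add_one α β hy)).congr_deriv ?_
  simp only [Pi.mul_apply, w_add_one_eq_mul α β hy, jacobiOperator_apply, Polynomial.eval_neg,
    Polynomial.eval_add, Polynomial.eval_mul, Polynomial.eval_sub, Polynomial.eval_one,
    Polynomial.eval_pow, Polynomial.eval_X, Polynomial.eval_C]
  ring

/-- Integration by parts; the boundary terms vanish because `α + 1` and `β + 1` are positive. -/
lemma integral_mul_jacobiOperator (hα : -1 < α) (hβ : -1 < β) {φ φ' : ℝ → ℝ} (p : ℝ[X])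
    (hφ : ContinuousOn φ (Icc (-1 : ℝ) 1)) (hd : ∀ y ∈ Ioo (-1 : ℝ) 1, HasDerivAt φ (φ' y) y)
    (hi : Integrable (fun y => φ' y * ((derivative p).eval y * (1 - y ^ 2)))
      (jacobiMeasure α β)) :
    ∫ y, φ y * (jacobiOperator α β p).eval y ∂(jacobiMeasure α β)
      = ∫ y, φ' y * ((derivative p).eval y * (1 - y ^ 2)) ∂(jacobiMeasure α β) := by
  have hi' : Integrable (fun y => φ y * (jacobiOperator α β p).eval y) (jacobiMeasure α β) :=
    integrable_jacobiMeasure_of_continuousOn hα hβ (hφ.mul (by fun_prop))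
  have hcont : ContinuousOn (fun y => φ y * (derivative p).eval y * w (α + 1) (β + 1) y)
      (Icc (-1) 1) :=
    (hφ.mul (by fun_prop)).mul (continuousOn_w (by linarith) (by linarith) _)
  have hFTC := intervalIntegral.integral_eq_sub_of_hasDerivAt_of_le (by norm_num : (-1 : ℝ) ≤ 1)
    hcont (fun y hy => hasDerivAt_mul_derivative_mul_w α β p hy (hd y hy))
    ((intervalIntegrable_iff_integrableOn_Ioo_of_le (by norm_num)).2
      ((integrable_jacobiMeasure_iff _ _ _).1 (hi.sub hi')))
  have hw1 : w (α + 1) (β + 1) 1 = 0 := by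
    rw [w, sub_self, Real.zero_rpow (by linarith), zero_mul]
  have hw2 : w (α + 1) (β + 1) (-1) = 0 := by
    rw [w, add_neg_cancel, Real.zero_rpow (by linarith), mul_zero]
  rw [hw1, hw2, mul_zero, mul_zero, sub_zero, intervalIntegral.integral_of_le (by norm_num),
    integral_Ioc_eq_integral_Ioo, ← integral_jacobiMeasure, integral_sub hi hi'] at hFTC
  exact (sub_eq_zero.1 hFTC).symm

lemma integral_eval_mul_jacobiOperator (hα : -1 < α) (hβ : -1 < β) (q p : ℝ[X]) :
    ∫ y, q.eval y * (jacobiOperator α β p).eval y ∂(jacobiMeasure α β) =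
      ∫ y, (derivative q).eval y * ((derivative p).eval y * (1 - y ^ 2)) ∂(jacobiMeasure α β) :=
  integral_mul_jacobiOperator hα hβ p (by fun_prop) (fun y _ => q.hasDerivAt y)
    (integrable_jacobiMeasure_of_continuousOn hα hβ (by fun_prop))

lemma integral_jacobiOperator_symm (hα : -1 < α) (hβ : -1 < β) (q p : ℝ[X]) :
    ∫ y, q.eval y * (jacobiOperator α β p).eval y ∂(jacobiMeasure α β) =
      ∫ y, p.eval y * (jacobiOperator α β q).eval y ∂(jacobiMeasure α β) := by
  rw [integral_eval_mul_jacobiOperator hα hβ, integral_eval_mul_jacobiOperator hα hβ]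
  exact integral_congr_ae (.of_forall fun y => by ring)

lemma poch_succ (a : ℝ) (k : ℕ) : poch a (k + 1) = poch a k * (a + k) :=
  Finset.prod_range_succ _ _

lemma poch_pos {a : ℝ} (ha : 0 < a) (k : ℕ) : 0 < poch a k :=
  Finset.prod_pos fun i _ => by positivity

lemma poch_natCast_add_pos (hα : -1 < α) (hβ : -1 < β) (n : ℕ) :
    0 < poch ((n : ℝ) + α + β + 1) n := by
  rcases Nat.eq_zero_or_pos n with rfl | hn
  · simp [poch]
  · have : (1 : ℝ) ≤ n := by exact_mod_cast hn
    exact poch_pos (by linarith) n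

lemma poch_neg_natCast_eq_zero {n k : ℕ} (h : n < k) : poch (-(n : ℝ)) k = 0 :=
  Finset.prod_eq_zero (Finset.mem_range.2 h) (by simp)

lemma poch_neg_natCast_ne_zero {n k : ℕ} (h : k ≤ n) : poch (-(n : ℝ)) k ≠ 0 := by
  refine Finset.prod_ne_zero_iff.2 fun i hi => ?_
  have : (i : ℝ) < n := by exact_mod_cast (Finset.mem_range.1 hi).trans_le h
  linarith

/-- The coefficient of `z^k` in the hypergeometric polynomial `₂F₁(-n, n + α + β + 1; α + 1; z)`. -/
def hypergeometricCoeff (α β : ℝ) (n k : ℕ) : ℝ :=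
  poch (-(n : ℝ)) k * poch ((n : ℝ) + α + β + 1) k / (poch (α + 1) k * k.factorial)

lemma hypergeometricCoeff_succ (hα : -1 < α) (β : ℝ) (n k : ℕ) :
    hypergeometricCoeff α β n (k + 1) * ((k + 1) * (k + α + 1)) =
      hypergeometricCoeff α β n k * ((k - n) * (k + n + α + β + 1)) := by
  have h1 := (poch_pos (by linarith : 0 < α + 1) k).ne'
  have h2 : α + 1 + k ≠ 0 := by positivity [show 0 < α + 1 by linarith]
  have h3 : (k.factorial : ℝ) ≠ 0 := by positivity
  rw [hypergeometricCoeff, hypergeometricCoeff, poch_succ, poch_succ, poch_succ,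
    Nat.factorial_succ]
  push_cast
  field_simp
  ring

/-- The hypergeometric polynomial `₂F₁(-n, n + α + β + 1; α + 1; z)`, i.e. the Jacobi polynomial up
to normalization in the variable `z = (1 - t) / 2`. -/
def hypergeometricPoly (α β : ℝ) (n : ℕ) : ℝ[X] :=
  ∑ k ∈ Finset.range (n + 1), C (hypergeometricCoeff α β n k) * X ^ k

lemma coeff_hypergeometricPoly (α β : ℝ) (n k : ℕ) :
    (hypergeometricPoly α β n).coeff k = hypergeometricCoeff α β n k := by
  simp only [hypergeometricPoly, Polynomial.finsetSum_coeff, Polynomial.coeff_C_mul,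
    Polynomial.coeff_X_pow, mul_ite, mul_one, mul_zero, Finset.sum_ite_eq, Finset.mem_range,
    ite_eq_left_iff, not_lt]
  intro h
  simp [hypergeometricCoeff, poch_neg_natCast_eq_zero h]

lemma hypergeometricPoly_ode (hα : -1 < α) (β : ℝ) (n : ℕ) :
    (X - X ^ 2) * derivative (derivative (hypergeometricPoly α β n)) +
      (C (α + 1) - C (α + β + 2) * X) * derivative (hypergeometricPoly α β n) +
      C ((n : ℝ) * (n + α + β + 1)) * hypergeometricPoly α β n = 0 := by
  ext k
  have key := hypergeometricCoeff_succ hα β n k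
  simp only [sub_mul, Polynomial.coeff_add, Polynomial.coeff_sub, mul_assoc,
    Polynomial.coeff_C_mul, Polynomial.coeff_zero]
  rcases k with _ | _ | k <;>
  · simp [Polynomial.coeff_X_pow_mul', Polynomial.coeff_derivative, coeff_hypergeometricPoly,
      Polynomial.coeff_X_mul] at key ⊢
    linear_combination key

lemma natDegree_hypergeometricPoly (hα : -1 < α) (hβ : -1 < β) (n : ℕ) :
    (hypergeometricPoly α β n).natDegree = n := by
  refine le_antisymm ?_ (Polynomial.le_natDegree_of_ne_zero ?_)
  · exact Polynomial.natDegree_sum_le_of_forall_le _ _ fun k hk =>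
      (Polynomial.natDegree_C_mul_X_pow_le _ _).trans (Nat.lt_succ_iff.1 (Finset.mem_range.1 hk))
  · rw [coeff_hypergeometricPoly]
    exact div_ne_zero
      (mul_ne_zero (poch_neg_natCast_ne_zero le_rfl) (poch_natCast_add_pos hα hβ n).ne')
      (mul_ne_zero (poch_pos (by linarith) n).ne' (by positivity))

/-- The factor relating the hypergeometric polynomial to `J_n^{α,β}`. -/
def jacobiNormalization (α β : ℝ) (n : ℕ) : ℝ :=
  2 ^ n / poch ((n : ℝ) + α + β + 1) n * (poch (α + 1) n / n.factorial)

lemma jacobiNormalization_ne_zero (hα : -1 < α) (hβ : -1 < β) (n : ℕ) :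
    jacobiNormalization α β n ≠ 0 :=
  mul_ne_zero (div_ne_zero (by positivity) (poch_natCast_add_pos hα hβ n).ne')
    (div_ne_zero (poch_pos (by linarith) n).ne' (by positivity))

/-- The function `J_n^{α,β}` as an element of `ℝ[X]`. -/
def jacobiPoly (α β : ℝ) (n : ℕ) : ℝ[X] :=
  C (jacobiNormalization α β n) * (hypergeometricPoly α β n).comp (C (1 / 2) * (1 - X))

@[simp]
lemma eval_jacobiPoly (α β : ℝ) (n : ℕ) (t : ℝ) : (jacobiPoly α β n).eval t = J α β n t := by
  simp only [jacobiPoly, J, JP, hypergeometricPoly, jacobiNormalization, Polynomial.eval_mul,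
    Polynomial.eval_C, Polynomial.eval_comp, Polynomial.eval_finsetSum, Polynomial.eval_pow,
    Polynomial.eval_X, Polynomial.eval_sub, Polynomial.eval_one, hypergeometricCoeff, mul_assoc]
  congr! 5
  ring

lemma continuous_J (α β : ℝ) (n : ℕ) : Continuous (J α β n) := by
  simp only [← funext (eval_jacobiPoly α β n)]
  exact Polynomial.continuous _

lemma natDegree_jacobiPoly (hα : -1 < α) (hβ : -1 < β) (n : ℕ) :
    (jacobiPoly α β n).natDegree = n := by
  have hX : (1 - X : ℝ[X]).natDegree = 1 := by
    rw [← Polynomial.natDegree_neg, neg_sub]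
    exact Polynomial.natDegree_X_sub_C 1
  rw [jacobiPoly, Polynomial.natDegree_C_mul (jacobiNormalization_ne_zero hα hβ n),
    Polynomial.natDegree_comp, natDegree_hypergeometricPoly hα hβ,
    Polynomial.natDegree_C_mul (by norm_num), hX, mul_one]

lemma jacobiPoly_ne_zero (hα : -1 < α) (hβ : -1 < β) (n : ℕ) : jacobiPoly α β n ≠ 0 := by
  rcases n.eq_zero_or_pos with rfl | hn
  · intro h
    have := congrArg (Polynomial.eval 1) h
    simp [J, JP, poch] at this
  · exact Polynomial.ne_zero_of_natDegree_gt (n := 0) (by rwa [natDegree_jacobiPoly hα hβ])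

/-- The eigenvalue of the Jacobi operator on `J_n^{α,β}`. -/
def jacobiEigenvalue (α β : ℝ) (n : ℕ) : ℝ := (n : ℝ) * (n + α + β + 1)

lemma jacobiEigenvalue_ne (hα : -1 < α) (hβ : -1 < β) {m n : ℕ} (h : m ≠ n) :
    jacobiEigenvalue α β m ≠ jacobiEigenvalue α β n := by
  have hfactor : jacobiEigenvalue α β m - jacobiEigenvalue α β n =
      ((m : ℝ) - n) * (m + n + α + β + 1) := by
    unfold jacobiEigenvalue; ring
  have hone : (1 : ℝ) ≤ m + n := by exact_mod_cast (show 1 ≤ m + n by lia)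
  rw [← sub_ne_zero, hfactor]
  exact mul_ne_zero (sub_ne_zero.2 (by exact_mod_cast h)) (by linarith)

lemma derivative_C_mul_comp (a b : ℝ) (q : ℝ[X]) :
    derivative (C a * q.comp (C b * (1 - X))) =
      C (-(a * b)) * (derivative q).comp (C b * (1 - X)) := by
  simp only [Polynomial.derivative_comp, Polynomial.derivative_mul, Polynomial.derivative_C,
    Polynomial.derivative_sub, Polynomial.derivative_one, Polynomial.derivative_X,
    Polynomial.C_neg, Polynomial.C_mul]
  ring

lemma jacobiOperator_jacobiPoly (hα : -1 < α) (β : ℝ) (n : ℕ) :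
    jacobiOperator α β (jacobiPoly α β n) = jacobiEigenvalue α β n • jacobiPoly α β n := by
  refine Polynomial.funext fun t => ?_
  have hode := congrArg (Polynomial.eval (2⁻¹ * (1 - t))) (hypergeometricPoly_ode hα β n)
  simp only [Polynomial.eval_add, Polynomial.eval_mul, Polynomial.eval_sub, Polynomial.eval_pow,
    Polynomial.eval_X, Polynomial.eval_C, Polynomial.eval_zero] at hode
  simp only [jacobiOperator_apply, jacobiPoly, derivative_C_mul_comp, jacobiEigenvalue,
    Polynomial.eval_neg, Polynomial.eval_add, Polynomial.eval_mul, Polynomial.eval_sub,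
    Polynomial.eval_pow, Polynomial.eval_X, Polynomial.eval_C, Polynomial.eval_comp,
    Polynomial.eval_one, Polynomial.eval_smul, smul_eq_mul, one_div]
  linear_combination (-jacobiNormalization α β n) * hode

end JacobiOperator

/-! ### Jacobi expansions -/

section JacobiExpansion

variable {α β : ℝ}

lemma hJ_pos (hα : -1 < α) (hβ : -1 < β) (n : ℕ) : 0 < hJ α β n := by
  have := integral_eval_sq_pos hα hβ (jacobiPoly_ne_zero hα hβ n)
  simpa only [hJ, ip_eq_integral, eval_jacobiPoly, sq] using this

lemma ip_J_eq_zero (hα : -1 < α) (hβ : -1 < β) {m n : ℕ} (h : m ≠ n) :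
    ip α β (J α β m) (J α β n) = 0 := by
  have hsymm := integral_jacobiOperator_symm hα hβ (jacobiPoly α β m) (jacobiPoly α β n)
  simp only [jacobiOperator_jacobiPoly hα, Polynomial.eval_smul, smul_eq_mul,
    eval_jacobiPoly, mul_left_comm (J α β _ _), integral_const_mul] at hsymm
  simp only [mul_comm (J α β n _), ← ip_eq_integral] at hsymm
  by_contra hne
  exact jacobiEigenvalue_ne hα hβ h.symm (mul_right_cancel₀ hne hsymm)

lemma ip_sum_left (hα : -1 < α) (hβ : -1 < β) {ι : Type*} (s : Finset ι) (c : ι → ℝ)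
    {F : ι → ℝ → ℝ} {g : ℝ → ℝ} (hF : ∀ i ∈ s, ContinuousOn (F i) (Icc (-1) 1))
    (hg : ContinuousOn g (Icc (-1) 1)) :
    ip α β (fun x => ∑ i ∈ s, c i * F i x) g = ∑ i ∈ s, c i * ip α β (F i) g := by
  simp only [ip_eq_integral, Finset.sum_mul, ← integral_const_mul, mul_assoc]
  exact integral_finsetSum _ fun i hi => (integrable_jacobiMeasure_of_continuousOn hα hβ
    ((hF i hi).mul hg)).const_mul _

lemma coeff_sum_mul_J (hα : -1 < α) (hβ : -1 < β) (s : Finset ℕ) (c : ℕ → ℝ) (m : ℕ) :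
    coeff α β m (fun x => ∑ k ∈ s, c k * J α β k x) = if m ∈ s then c m else 0 := by
  rw [coeff, ip_sum_left hα hβ s c (fun k _ => (continuous_J α β k).continuousOn)
    (continuous_J α β m).continuousOn, Finset.sum_div]
  rw [← Finset.sum_ite_eq' s m c]
  refine Finset.sum_congr rfl fun k _ => ?_
  split_ifs with h
  · rw [h, ← hJ, mul_div_cancel_right₀ _ (hJ_pos hα hβ m).ne']
  · rw [ip_J_eq_zero hα hβ h, mul_zero, zero_div]

/-- `J_0^{α,β}, J_1^{α,β}, …` as a sequence of polynomials with `deg J_n = n`. -/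
def jacobiSequence (hα : -1 < α) (hβ : -1 < β) : Polynomial.Sequence ℝ where
  elems' := jacobiPoly α β
  degree_eq' n := by
    rw [Polynomial.degree_eq_natDegree (jacobiPoly_ne_zero hα hβ n), natDegree_jacobiPoly hα hβ]

lemma exists_eq_sum_jacobiPoly (hα : -1 < α) (hβ : -1 < β) {N : ℕ} {f : ℝ[X]}
    (hf : f.natDegree < N) : ∃ c : ℕ → ℝ, f = ∑ k ∈ Finset.range N, c k • jacobiPoly α β k := by
  have hmem : f ∈ Polynomial.degreeLT ℝ N :=
    Polynomial.mem_degreeLT.2 (Polynomial.degree_le_natDegree.trans_lt (by exact_mod_cast hf))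
  rw [← (jacobiSequence hα hβ).span_degreeLT fun i _ =>
    (Polynomial.leadingCoeff_ne_zero.2 ((jacobiSequence hα hβ).ne_zero i)).isUnit,
    ← Finset.coe_range, Submodule.mem_span_image_finset_iff_exists_fun'] at hmem
  obtain ⟨c, hc⟩ := hmem
  exact ⟨c, hc.symm⟩

lemma eval_eq_sum_coeff_mul_J (hα : -1 < α) (hβ : -1 < β) {N : ℕ} {f : ℝ[X]}
    (hf : f.natDegree < N) (x : ℝ) :
    f.eval x = ∑ k ∈ Finset.range N, coeff α β k (fun x => f.eval x) * J α β k x := by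
  obtain ⟨c, hc⟩ := exists_eq_sum_jacobiPoly hα hβ hf
  have heval : ∀ x, f.eval x = ∑ k ∈ Finset.range N, c k * J α β k x := fun x => by
    simp [hc, Polynomial.eval_finsetSum]
  simp only [heval, coeff_sum_mul_J hα hβ]
  exact Finset.sum_congr rfl fun k hk => by rw [if_pos hk]

lemma coeff_eval_eq_zero_of_natDegree_lt (hα : -1 < α) (hβ : -1 < β) {f : ℝ[X]} {k : ℕ}
    (hf : f.natDegree < k) : coeff α β k (fun x => f.eval x) = 0 := by
  rw [funext (eval_eq_sum_coeff_mul_J hα hβ f.natDegree.lt_succ_self), coeff_sum_mul_J hα hβ,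
    if_neg (by simp; lia)]

end JacobiExpansion

/-! ### Weighted energy decay for the Jacobi wave equation -/

section WaveEnergy

variable {α β : ℝ}

lemma hasDerivAt_integral_jacobiMeasure (hα : -1 < α) (hβ : -1 < β) {e e' : ℝ → ℝ → ℝ} {a τ : ℝ}
    (hτ : a < τ) (he : ∀ σ > a, Continuous (e σ))
    (hd : ∀ σ > a, ∀ y, HasDerivAt (fun σ => e σ y) (e' σ y) σ)
    (he' : ContinuousOn (fun z : ℝ × ℝ => e' z.1 z.2) (Ioi a ×ˢ univ)) :
    HasDerivAt (fun σ => ∫ y, e σ y ∂(jacobiMeasure α β))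
      (∫ y, e' τ y ∂(jacobiMeasure α β)) τ := by
  have := isFiniteMeasure_jacobiMeasure hα hβ
  obtain ⟨b, hab, hbτ⟩ := exists_between hτ
  have hgt : ∀ σ ∈ Icc b (τ + 1), a < σ := fun σ hσ => hab.trans_le hσ.1
  obtain ⟨K, hK⟩ := (isCompact_Icc.prod isCompact_Icc :
    IsCompact (Icc b (τ + 1) ×ˢ Icc (-1 : ℝ) 1)).exists_bound_of_continuousOn
    (he'.mono fun z hz => ⟨hgt z.1 hz.1, mem_univ _⟩)
  have hcont : Continuous (e' τ) := continuousOn_univ.1 <|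
    he'.comp (f := fun y => (τ, y)) (by fun_prop) fun y _ => ⟨hτ, mem_univ _⟩
  refine (hasDerivAt_integral_of_dominated_loc_of_deriv_le (bound := fun _ => K)
    (Icc_mem_nhds hbτ (lt_add_one τ)) ?_
    (integrable_jacobiMeasure_of_continuousOn hα hβ (he τ hτ).continuousOn)
    hcont.aestronglyMeasurable ?_ (integrable_const K) ?_).2
  · filter_upwards [Ioi_mem_nhds hτ] with σ hσ using (he σ hσ).aestronglyMeasurable
  · filter_upwards [ae_jacobiMeasure_mem_Ioo α β] with y hy σ hσ
    exact hK (σ, y) ⟨hσ, Ioo_subset_Icc_self hy⟩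
  · exact .of_forall fun y σ hσ => hd σ (hgt σ hσ) y

/-- `sin (τ m) / m`, extended continuously to `m = 0`. -/
def sinDiv (m τ : ℝ) : ℝ := if m = 0 then τ else Real.sin (τ * m) / m

@[simp]
lemma sinDiv_zero_right (m : ℝ) : sinDiv m 0 = 0 := by
  unfold sinDiv; split_ifs <;> simp

lemma hasDerivAt_sinDiv (m τ : ℝ) : HasDerivAt (sinDiv m) (Real.cos (τ * m)) τ := by
  unfold sinDiv
  split_ifs with h
  · simpa [h] using hasDerivAt_id' τ
  · refine (((hasDerivAt_id τ).mul_const m).sin.div_const m).congr_deriv ?_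
    simp [h]

lemma continuous_sinDiv (m : ℝ) : Continuous (sinDiv m) :=
  continuous_iff_continuousAt.2 fun τ => (hasDerivAt_sinDiv m τ).continuousAt

lemma hasDerivAt_cos_mul (m τ : ℝ) :
    HasDerivAt (fun τ => Real.cos (τ * m)) (-(m ^ 2 * sinDiv m τ)) τ := by
  refine ((hasDerivAt_id τ).mul_const m).cos.congr_deriv ?_
  by_cases h : m = 0
  · simp [h]
  · simp only [id, one_mul, sinDiv, if_neg h]
    field_simp

section Waves

variable {ι : Type*} (s : Finset ι) (P : ι → ℝ[X]) (m : ι → ℝ)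

/-- The wave `v(τ) = ∑ sin (τ m_k) / m_k • P_k`. If `P_k` is an eigenvector of the Jacobi operator
`L` for `m_k ^ 2 - ρ ^ 2`, it solves `v'' + (L + ρ ^ 2) v = 0` with `v(0) = 0`. -/
def sineWave (τ : ℝ) : ℝ[X] := ∑ k ∈ s, sinDiv (m k) τ • P k

/-- The time derivative `∑ cos (τ m_k) • P_k` of `sineWave`. -/
def cosineWave (τ : ℝ) : ℝ[X] := ∑ k ∈ s, Real.cos (τ * m k) • P k

lemma map_sineWave (T : ℝ[X] →ₗ[ℝ] ℝ[X]) (τ : ℝ) :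
    T (sineWave s P m τ) = sineWave s (fun k => T (P k)) m τ := by
  simp only [sineWave, map_sum, map_smul]

lemma map_cosineWave (T : ℝ[X] →ₗ[ℝ] ℝ[X]) (τ : ℝ) :
    T (cosineWave s P m τ) = cosineWave s (fun k => T (P k)) m τ := by
  simp only [cosineWave, map_sum, map_smul]

lemma eval_sineWave (τ y : ℝ) :
    (sineWave s P m τ).eval y = ∑ k ∈ s, sinDiv (m k) τ * (P k).eval y := by
  simp [sineWave, Polynomial.eval_finsetSum]

lemma eval_cosineWave (τ y : ℝ) :
    (cosineWave s P m τ).eval y = ∑ k ∈ s, Real.cos (τ * m k) * (P k).eval y := by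
  simp [cosineWave, Polynomial.eval_finsetSum]

@[simp]
lemma sineWave_zero : sineWave s P m 0 = 0 := by simp [sineWave]

lemma continuous_eval_map_sineWave (T : ℝ[X] →ₗ[ℝ] ℝ[X]) :
    Continuous fun z : ℝ × ℝ => (T (sineWave s P m z.1)).eval z.2 := by
  simp only [map_sineWave, eval_sineWave]
  have := fun k => continuous_sinDiv (m k)
  fun_prop

lemma continuous_eval_map_cosineWave (T : ℝ[X] →ₗ[ℝ] ℝ[X]) :
    Continuous fun z : ℝ × ℝ => (T (cosineWave s P m z.1)).eval z.2 := by
  simp only [map_cosineWave, eval_cosineWave]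
  fun_prop

lemma hasDerivAt_eval_map_sineWave (T : ℝ[X] →ₗ[ℝ] ℝ[X]) (τ y : ℝ) :
    HasDerivAt (fun τ => (T (sineWave s P m τ)).eval y) ((T (cosineWave s P m τ)).eval y) τ := by
  simp only [map_sineWave, map_cosineWave, eval_sineWave, eval_cosineWave]
  exact HasDerivAt.fun_sum fun k _ => (hasDerivAt_sinDiv (m k) τ).mul_const _

variable {s P m}

lemma hasDerivAt_eval_cosineWave {ρ : ℝ}
    (hP : ∀ k ∈ s, jacobiOperator α β (P k) = (m k ^ 2 - ρ ^ 2) • P k) (τ y : ℝ) :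
    HasDerivAt (fun τ => (cosineWave s P m τ).eval y)
      (-((jacobiOperator α β (sineWave s P m τ)).eval y + ρ ^ 2 * (sineWave s P m τ).eval y))
      τ := by
  simp only [map_sineWave, eval_cosineWave, eval_sineWave, Finset.mul_sum,
    ← Finset.sum_add_distrib, ← Finset.sum_neg_distrib]
  refine HasDerivAt.fun_sum fun k hk => ((hasDerivAt_cos_mul (m k) τ).mul_const _).congr_deriv ?_
  rw [hP k hk, Polynomial.eval_smul, smul_eq_mul]
  ring

end Waves

/-- The smooth substitute `1 + √(1 + (ν (arccos y - θ))²)` for `1 + ν |arccos y - θ|`. -/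
def arccosWeight (ν θ y : ℝ) : ℝ := 1 + √(1 + (ν * (Real.arccos y - θ)) ^ 2)

lemma continuous_arccosWeight (ν θ : ℝ) : Continuous (arccosWeight ν θ) := by
  unfold arccosWeight
  have := Real.continuous_arccos
  fun_prop

lemma one_lt_arccosWeight (ν θ y : ℝ) : 1 < arccosWeight ν θ y :=
  lt_add_of_pos_right 1 (by positivity)

/-- The derivative of `arccosWeight` with respect to the angle `arccos y`. -/
def arccosWeightSlope (ν θ y : ℝ) : ℝ :=
  ν * (ν * (Real.arccos y - θ)) / √(1 + (ν * (Real.arccos y - θ)) ^ 2)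

lemma continuous_arccosWeightSlope (ν θ : ℝ) : Continuous (arccosWeightSlope ν θ) := by
  unfold arccosWeightSlope
  have := Real.continuous_arccos
  exact Continuous.div (by fun_prop) (by fun_prop) fun y => by positivity

lemma abs_arccosWeightSlope_le {ν : ℝ} (hν : 0 ≤ ν) (θ y : ℝ) : |arccosWeightSlope ν θ y| ≤ ν := by
  rw [arccosWeightSlope, abs_div, abs_mul, abs_of_nonneg hν, abs_of_nonneg (Real.sqrt_nonneg _),
    div_le_iff₀ (by positivity)]
  exact mul_le_mul_of_nonneg_left (Real.abs_le_sqrt (by linarith)) hν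

lemma hasDerivAt_arccosWeight (ν θ : ℝ) {y : ℝ} (hy : y ∈ Ioo (-1 : ℝ) 1) :
    HasDerivAt (arccosWeight ν θ) (-(arccosWeightSlope ν θ y / √(1 - y ^ 2))) y := by
  have hbase : (1 : ℝ) + (ν * (Real.arccos y - θ)) ^ 2 ≠ 0 := by positivity
  have harg := ((Real.hasDerivAt_arccos hy.1.ne' hy.2.ne).sub_const θ).const_mul ν
  refine ((((harg.pow 2).const_add 1).sqrt hbase).const_add 1).congr_deriv ?_
  simp only [arccosWeightSlope, Pi.pow_apply]
  norm_num
  field_simp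

section Dissipation

variable {B r : ℝ → ℝ} {ν : ℝ}

lemma hasDerivAt_div_pow {f : ℝ → ℝ} {f' b' y : ℝ} (hf : HasDerivAt f f' y)
    (hB : HasDerivAt B b' y) (hpos : 0 < B y) (M : ℕ) :
    HasDerivAt (fun y => f y / B y ^ M) (f' / B y ^ M - M * b' * f y / B y ^ (M + 1)) y := by
  refine (hf.div (hB.pow M) (pow_pos hpos M).ne').congr_deriv ?_
  rcases M with _ | M
  · simp
  · simp only [Pi.pow_apply, Nat.add_sub_cancel]
    field_simp
    ring

lemma integral_div_pow_mul_jacobiOperator (hα : -1 < α) (hβ : -1 < β) (hB : Continuous B)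
    (hr : Continuous r) (hpos : ∀ y, 0 < B y)
    (hd : ∀ y ∈ Ioo (-1 : ℝ) 1, HasDerivAt B (-(r y / √(1 - y ^ 2))) y) (M : ℕ) (U V : ℝ[X]) :
    ∫ y, U.eval y / B y ^ M * (jacobiOperator α β V).eval y ∂(jacobiMeasure α β) =
      ∫ y, (derivative V).eval y * ((derivative U).eval y * (1 - y ^ 2) / B y ^ M +
        M * U.eval y * (r y * √(1 - y ^ 2)) / B y ^ (M + 1)) ∂(jacobiMeasure α β) := by
  have hne : ∀ k y, B y ^ k ≠ 0 := fun k y => (pow_pos (hpos y) k).ne'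
  have hae : ∀ᵐ y ∂(jacobiMeasure α β), (derivative V).eval y *
      ((derivative U).eval y * (1 - y ^ 2) / B y ^ M +
        M * U.eval y * (r y * √(1 - y ^ 2)) / B y ^ (M + 1)) =
      ((derivative U).eval y / B y ^ M - M * -(r y / √(1 - y ^ 2)) * U.eval y / B y ^ (M + 1)) *
        ((derivative V).eval y * (1 - y ^ 2)) := by
    filter_upwards [ae_jacobiMeasure_mem_Ioo α β] with y hy
    have hy2 : 0 < 1 - y ^ 2 := by nlinarith [hy.1, hy.2]
    have hB0 := (hpos y).ne'
    have hs : √(1 - y ^ 2) ≠ 0 := by positivity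
    have hsq : 1 - y ^ 2 = √(1 - y ^ 2) ^ 2 := (Real.sq_sqrt hy2.le).symm
    field_simp
    linear_combination -(M * U.eval y * r y * (derivative V).eval y * B y ^ M) * hsq
  rw [integral_congr_ae hae]
  refine integral_mul_jacobiOperator hα hβ V
    (Continuous.div (by fun_prop) (by fun_prop) (hne M)).continuousOn
    (fun y hy => hasDerivAt_div_pow (U.hasDerivAt y) (hd y hy) (hpos y) M)
    ((integrable_jacobiMeasure_of_continuousOn hα hβ (Continuous.continuousOn ?_)).congr hae)
  exact Continuous.mul (by fun_prop) ((Continuous.div (by fun_prop) (by fun_prop) (hne M)).add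
    (Continuous.div (by fun_prop) (by fun_prop) (hne (M + 1))))

/-- The cross term is dominated because the weight has slope at most `ν` in the angle, the speed at
which it grows in time. -/
lemma dissipation_nonneg {r t U V' V ρ : ℝ} (hr : |r| ≤ ν) :
    0 ≤ ν * (U ^ 2 + t ^ 2 * V' ^ 2 + ρ ^ 2 * V ^ 2) + 2 * r * t * U * V' := by
  obtain ⟨hrl, hru⟩ := abs_le.1 hr
  have hsub := mul_nonneg (by linarith : 0 ≤ ν - r) (sq_nonneg (U - t * V'))
  have hadd := mul_nonneg (by linarith : 0 ≤ ν + r) (sq_nonneg (U + t * V'))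
  have hmass : 0 ≤ ν * (ρ * V) ^ 2 := mul_nonneg (by linarith) (sq_nonneg _)
  linarith

/-- The energy density `v_t² + (1 - y²) v_y² + ρ² v²` of a wave `v` with value `V` and velocity `U`
at a given time. -/
def waveEnergy (ρ : ℝ) (U V : ℝ[X]) (y : ℝ) : ℝ :=
  U.eval y ^ 2 + (1 - y ^ 2) * (derivative V).eval y ^ 2 + ρ ^ 2 * V.eval y ^ 2

/-- The time derivative of `waveEnergy` along the equation `v_tt + (L + ρ²) v = 0`, where `L` is the
Jacobi operator. -/
def waveEnergyDeriv (α β : ℝ) (U V : ℝ[X]) (y : ℝ) : ℝ :=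
  2 * ((1 - y ^ 2) * (derivative V).eval y * (derivative U).eval y -
    U.eval y * (jacobiOperator α β V).eval y)

lemma continuous_waveEnergy (ρ : ℝ) (U V : ℝ[X]) : Continuous (waveEnergy ρ U V) := by
  unfold waveEnergy; fun_prop

lemma integral_waveEnergyDeriv_sub_eq (hα : -1 < α) (hβ : -1 < β) (hB : Continuous B)
    (hr : Continuous r) (hpos : ∀ y, 0 < B y)
    (hd : ∀ y ∈ Ioo (-1 : ℝ) 1, HasDerivAt B (-(r y / √(1 - y ^ 2))) y)
    (ν ρ : ℝ) (M : ℕ) (U V : ℝ[X]) :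
    ∫ y, (waveEnergyDeriv α β U V y / B y ^ M - M * ν * waveEnergy ρ U V y / B y ^ (M + 1))
        ∂(jacobiMeasure α β) =
      ∫ y, ((-(M * ν * waveEnergy ρ U V y)) / B y ^ (M + 1) -
        2 * M * r y * √(1 - y ^ 2) * U.eval y * (derivative V).eval y / B y ^ (M + 1))
        ∂(jacobiMeasure α β) := by
  have hE := continuous_waveEnergy ρ U V
  have hint : ∀ (f : ℝ → ℝ) (k : ℕ), Continuous f →
      Integrable (fun y => f y / B y ^ k) (jacobiMeasure α β) := fun f k hf =>
    integrable_jacobiMeasure_of_continuousOn hα hβ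
      (hf.div (by fun_prop) fun y => (pow_pos (hpos y) k).ne').continuousOn
  have hrest := (hint (fun y => 2 * ((1 - y ^ 2) * (derivative V).eval y * (derivative U).eval y))
    M (by fun_prop)).sub (hint (fun y => M * ν * waveEnergy ρ U V y) (M + 1) (by fun_prop))
  have hLV := hint (fun y => U.eval y * (jacobiOperator α β V).eval y) M (by fun_prop)
  have hflux := (hint (fun y => (derivative V).eval y * ((derivative U).eval y * (1 - y ^ 2))) M
    (by fun_prop)).add (hint (fun y => (derivative V).eval y * (M * U.eval y *
      (r y * √(1 - y ^ 2)))) (M + 1) (by fun_prop))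
  have hparts : ∫ y, U.eval y * (jacobiOperator α β V).eval y / B y ^ M ∂(jacobiMeasure α β) =
      ∫ y, ((derivative V).eval y * ((derivative U).eval y * (1 - y ^ 2)) / B y ^ M +
        (derivative V).eval y * (M * U.eval y * (r y * √(1 - y ^ 2))) / B y ^ (M + 1))
        ∂(jacobiMeasure α β) := by
    simpa only [div_mul_eq_mul_div, mul_add, mul_div_assoc'] using
      integral_div_pow_mul_jacobiOperator hα hβ hB hr hpos hd M U V
  have hsplit := (integral_sub hrest (hLV.const_mul 2)).trans
    ((congrArg _ ((integral_const_mul _ _).trans ((congrArg _ hparts).trans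
      (integral_const_mul _ _).symm))).trans (integral_sub hrest (hflux.const_mul 2)).symm)
  convert hsplit using 2 <;> ext y
  · simp only [waveEnergyDeriv, Pi.sub_apply]
    ring
  · simp only [Pi.sub_apply, Pi.add_apply]
    ring

lemma integral_waveEnergyDeriv_sub_nonpos (hα : -1 < α) (hβ : -1 < β) (hB : Continuous B)
    (hr : Continuous r) (hpos : ∀ y, 0 < B y)
    (hd : ∀ y ∈ Ioo (-1 : ℝ) 1, HasDerivAt B (-(r y / √(1 - y ^ 2))) y)
    (hrν : ∀ y, |r y| ≤ ν) (ρ : ℝ) (M : ℕ) (U V : ℝ[X]) :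
    ∫ y, (waveEnergyDeriv α β U V y / B y ^ M - M * ν * waveEnergy ρ U V y / B y ^ (M + 1))
        ∂(jacobiMeasure α β) ≤ 0 := by
  rw [integral_waveEnergyDeriv_sub_eq hα hβ hB hr hpos hd]
  refine integral_nonpos_of_ae ?_
  filter_upwards [ae_jacobiMeasure_mem_Ioo α β] with y hy
  have hy2 : 0 < 1 - y ^ 2 := by nlinarith [hy.1, hy.2]
  have hdiss := mul_nonneg (show (0 : ℝ) ≤ M / B y ^ (M + 1) by positivity [hpos y])
    (dissipation_nonneg (t := √(1 - y ^ 2)) (U := U.eval y) (V' := (derivative V).eval y)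
      (V := V.eval y) (ρ := ρ) (hrν y))
  rw [Real.sq_sqrt hy2.le] at hdiss
  refine le_of_eq_of_le ?_ (neg_nonpos.2 hdiss)
  simp only [waveEnergy]
  ring

end Dissipation

section WeightedEnergy

variable {ι : Type*} {s : Finset ι} {P : ι → ℝ[X]} {m : ι → ℝ} {ρ ν : ℝ}

lemma hasDerivAt_waveEnergy (hP : ∀ k ∈ s, jacobiOperator α β (P k) = (m k ^ 2 - ρ ^ 2) • P k)
    (τ y : ℝ) :
    HasDerivAt (fun τ => waveEnergy ρ (cosineWave s P m τ) (sineWave s P m τ) y)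
      (waveEnergyDeriv α β (cosineWave s P m τ) (sineWave s P m τ) y) τ := by
  have hU := (hasDerivAt_eval_cosineWave hP τ y).pow 2
  have hV' := ((hasDerivAt_eval_map_sineWave s P m derivative τ y).pow 2).const_mul (1 - y ^ 2)
  have hV := ((hasDerivAt_eval_map_sineWave s P m LinearMap.id τ y).pow 2).const_mul (ρ ^ 2)
  refine ((hU.add hV').add hV).congr_deriv ?_
  simp only [waveEnergyDeriv, LinearMap.id_apply]
  ring

lemma arccosWeight_add_pos (hν : 0 < ν) {τ : ℝ} (hτ : -(1 / ν) < τ) (θ y : ℝ) :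
    0 < arccosWeight ν θ y + ν * τ := by
  have h := mul_lt_mul_of_pos_left hτ hν
  rw [mul_neg, mul_one_div_cancel hν.ne'] at h
  linarith [one_lt_arccosWeight ν θ y]

variable (s P m ρ) in
lemma continuous_waveEnergy_uncurry : Continuous fun z : ℝ × ℝ =>
    waveEnergy ρ (cosineWave s P m z.1) (sineWave s P m z.1) z.2 := by
  have hU := continuous_eval_map_cosineWave s P m LinearMap.id
  have hV := continuous_eval_map_sineWave s P m LinearMap.id
  have hV' := continuous_eval_map_sineWave s P m derivative
  simp only [LinearMap.id_apply] at hU hV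
  unfold waveEnergy
  fun_prop

variable (α β s P m) in
lemma continuous_waveEnergyDeriv_uncurry : Continuous fun z : ℝ × ℝ =>
    waveEnergyDeriv α β (cosineWave s P m z.1) (sineWave s P m z.1) z.2 := by
  have hU := continuous_eval_map_cosineWave s P m LinearMap.id
  have hU' := continuous_eval_map_cosineWave s P m derivative
  have hV' := continuous_eval_map_sineWave s P m derivative
  have hLV := continuous_eval_map_sineWave s P m (jacobiOperator α β)
  simp only [LinearMap.id_apply] at hU
  unfold waveEnergyDeriv
  fun_prop

lemma antitoneOn_integral_waveEnergy (hα : -1 < α) (hβ : -1 < β) (hν : 0 < ν)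
    (hP : ∀ k ∈ s, jacobiOperator α β (P k) = (m k ^ 2 - ρ ^ 2) • P k) (θ : ℝ) (M : ℕ) :
    AntitoneOn (fun τ => ∫ y, waveEnergy ρ (cosineWave s P m τ) (sineWave s P m τ) y /
      (arccosWeight ν θ y + ν * τ) ^ M ∂(jacobiMeasure α β)) (Ici 0) := by
  have hpos := fun τ (hτ : -(1 / ν) < τ) y => arccosWeight_add_pos hν hτ θ y
  have hA := continuous_arccosWeight ν θ
  have hE := continuous_waveEnergy_uncurry s P m ρ
  have hE' := continuous_waveEnergyDeriv_uncurry α β s P m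
  have hne : ∀ k, ∀ z ∈ Ioi (-(1 / ν)) ×ˢ univ, (arccosWeight ν θ z.2 + ν * z.1) ^ k ≠ 0 :=
    fun k z hz => (pow_pos (hpos z.1 hz.1 z.2) k).ne'
  have hderiv : ∀ τ, -(1 / ν) < τ → HasDerivAt _ _ τ := fun τ hτ =>
    hasDerivAt_integral_jacobiMeasure hα hβ hτ
      (e := fun τ y => waveEnergy ρ (cosineWave s P m τ) (sineWave s P m τ) y /
        (arccosWeight ν θ y + ν * τ) ^ M)
      (fun τ hτ => (continuous_waveEnergy ρ _ _).div (by fun_prop)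
        fun y => (pow_pos (hpos τ hτ y) M).ne')
      (fun τ hτ y => hasDerivAt_div_pow (hasDerivAt_waveEnergy hP τ y)
        (((hasDerivAt_id τ).const_mul ν).const_add _) (hpos τ hτ y) M)
      ((hE'.continuousOn.div (by fun_prop) (hne M)).sub
        ((Continuous.continuousOn (by fun_prop)).div (by fun_prop) (hne (M + 1))))
  have hν' : -(1 / ν) < 0 := neg_neg_of_pos (by positivity)
  refine antitoneOn_of_deriv_nonpos (convex_Ici 0)
    (fun τ hτ => (hderiv τ (hν'.trans_le hτ)).continuousAt.continuousWithinAt) ?_ ?_ <;>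
    rw [interior_Ici] <;> intro τ hτ
  · exact (hderiv τ (hν'.trans hτ)).differentiableAt.differentiableWithinAt
  · rw [(hderiv τ (hν'.trans hτ)).deriv, mul_one]
    exact integral_waveEnergyDeriv_sub_nonpos hα hβ (by fun_prop)
      (continuous_arccosWeightSlope ν θ) (hpos τ (hν'.trans hτ))
      (fun y hy => (hasDerivAt_arccosWeight ν θ hy).add_const _)
      (abs_arccosWeightSlope_le hν.le θ) ρ M _ _

lemma integral_cosineWave_sq_div_le (hα : -1 < α) (hβ : -1 < β) (hν : 0 < ν)
    (hP : ∀ k ∈ s, jacobiOperator α β (P k) = (m k ^ 2 - ρ ^ 2) • P k) (θ : ℝ) (M : ℕ) {τ : ℝ}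
    (hτ : 0 ≤ τ) :
    ∫ y, (cosineWave s P m τ).eval y ^ 2 / (arccosWeight ν θ y + ν * τ) ^ M
        ∂(jacobiMeasure α β) ≤
      ∫ y, (cosineWave s P m 0).eval y ^ 2 / arccosWeight ν θ y ^ M ∂(jacobiMeasure α β) := by
  have hA := continuous_arccosWeight ν θ
  have hpos : ∀ y, 0 < arccosWeight ν θ y + ν * τ := fun y => by
    positivity [one_lt_arccosWeight ν θ y]
  have hint : ∀ f : ℝ → ℝ, Continuous f →
      Integrable (fun y => f y / (arccosWeight ν θ y + ν * τ) ^ M) (jacobiMeasure α β) :=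
    fun f hf => integrable_jacobiMeasure_of_continuousOn hα hβ
      (hf.div (by fun_prop) fun y => (pow_pos (hpos y) M).ne').continuousOn
  have hanti := antitoneOn_integral_waveEnergy hα hβ hν hP θ M self_mem_Ici hτ hτ
  simp only [sineWave_zero, mul_zero, add_zero] at hanti
  refine (integral_mono_ae (hint _ (by fun_prop)) (hint _ (continuous_waveEnergy ρ _ _)) ?_).trans
    (hanti.trans_eq (by simp [waveEnergy]))
  filter_upwards [ae_jacobiMeasure_mem_Ioo α β] with y hy
  have hy2 : 0 ≤ 1 - y ^ 2 := by nlinarith [hy.1, hy.2]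
  refine div_le_div_of_nonneg_right ?_ (pow_pos (hpos y) M).le
  rw [waveEnergy, add_assoc]
  exact le_add_of_nonneg_right (by positivity)

end WeightedEnergy

end WaveEnergy

/-! ### Cosine transforms of smooth even functions -/

section CosineTransform

open FourierTransform

variable {H : ℝ → ℂ} {R : ℝ}

lemma hasCompactSupport_of_lt_abs {E : Type*} [Zero E] {f : ℝ → E}
    (hf : ∀ ξ, R < |ξ| → f ξ = 0) : HasCompactSupport f :=
  .intro (isCompact_Icc (a := -R) (b := R)) fun ξ hξ =>
    hf ξ (not_le.1 fun h => hξ (abs_le.1 h))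

lemma iteratedDeriv_eq_zero_of_lt_abs (hH : ∀ ξ, R < |ξ| → H ξ = 0) (j : ℕ) (ξ : ℝ)
    (hξ : R < |ξ|) : iteratedDeriv j H ξ = 0 := by
  have : H =ᶠ[nhds ξ] fun _ => 0 := by
    filter_upwards [(isOpen_lt continuous_const continuous_abs).mem_nhds hξ] with z hz using hH z hz
  rw [this.iteratedDeriv_eq, iteratedDeriv_const, ite_self]

lemma pow_mul_norm_fourier_le {B : ℝ} {j : ℕ} (hsmooth : ContDiff ℝ (⊤ : ℕ∞) H) (hR : 0 ≤ R)
    (hH : ∀ ξ, R < |ξ| → H ξ = 0) (hB : ∀ ξ, ‖iteratedDeriv j H ξ‖ ≤ B) (s : ℝ) :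
    (2 * Real.pi * |s|) ^ j * ‖𝓕 H s‖ ≤ B * (2 * R) := by
  have hint : ∀ i : ℕ, Integrable (iteratedDeriv i H) := fun i =>
    (hsmooth.continuous_iteratedDeriv i (mod_cast le_top)).integrable_of_hasCompactSupport
      (hasCompactSupport_of_lt_abs (iteratedDeriv_eq_zero_of_lt_abs hH i))
  have hfourier : ‖𝓕 (iteratedDeriv j H) s‖ = (2 * Real.pi * |s|) ^ j * ‖𝓕 H s‖ := by
    rw [Real.fourier_iteratedDeriv (N := ⊤) hsmooth (fun i _ => hint i) le_top, norm_smul, norm_pow]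
    simp [abs_of_pos Real.pi_pos]
  calc (2 * Real.pi * |s|) ^ j * ‖𝓕 H s‖
    _ = ‖𝓕 (iteratedDeriv j H) s‖ := hfourier.symm
    _ ≤ ∫ v, ‖iteratedDeriv j H v‖ :=
      VectorFourier.norm_fourierIntegral_le_integral_norm _ _ _ _ _
    _ = ∫ v in Icc (-R) R, ‖iteratedDeriv j H v‖ := by
      refine (setIntegral_eq_integral_of_forall_compl_eq_zero fun ξ hξ => ?_).symm
      rw [iteratedDeriv_eq_zero_of_lt_abs hH j ξ (not_le.1 fun h => hξ (abs_le.1 h)), norm_zero]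
    _ ≤ ∫ _ in Icc (-R) R, B :=
      setIntegral_mono (hint j).norm.integrableOn (by simp) hB
    _ = B * (2 * R) := by
      rw [setIntegral_const, Real.volume_real_Icc_of_le (by linarith), smul_eq_mul]
      ring

lemma continuous_fourier_and_integrable_fourier (hsmooth : ContDiff ℝ (⊤ : ℕ∞) H)
    (hH : HasCompactSupport H) : Continuous (𝓕 H) ∧ Integrable (𝓕 H) := by
  have hcoe : ⇑(𝓕 (hH.toSchwartzMap hsmooth) : SchwartzMap ℝ ℂ) = 𝓕 H := by
    rw [SchwartzMap.fourier_coe]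
    rfl
  exact hcoe ▸ ⟨SchwartzMap.continuous _, SchwartzMap.integrable _⟩

lemma re_eq_integral_re_fourier_mul_cos (hH : Continuous H) (hHi : Integrable H)
    (hFi : Integrable (𝓕 H)) (heven : ∀ ξ, H (-ξ) = H ξ) (ξ : ℝ) :
    (H ξ).re = ∫ v, (𝓕 H v).re * Real.cos (2 * Real.pi * v * ξ) := by
  have hinv : ∀ z : ℝ, H z =
      ∫ v : ℝ, Complex.exp (↑(2 * Real.pi * (v * z)) * Complex.I) * 𝓕 H v := by
    intro z
    conv_lhs => rw [← hH.fourierInv_fourier_eq hHi hFi, Real.fourierInv_eq']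
    simp [mul_comm]
  have hexp : ∀ z : ℝ, Integrable
      (fun v : ℝ => Complex.exp (↑(2 * Real.pi * (v * z)) * Complex.I) * 𝓕 H v) := fun z =>
    hFi.bdd_mul (by fun_prop) (.of_forall fun v => (Complex.norm_exp_ofReal_mul_I _).le)
  have hcos : H ξ = ∫ v : ℝ, (Real.cos (2 * Real.pi * v * ξ) : ℂ) * 𝓕 H v := by
    calc H ξ = (1 / 2 : ℂ) * (H ξ + H (-ξ)) := by rw [heven]; ring
      _ = _ := by
        rw [hinv ξ, hinv (-ξ), ← integral_add (hexp _) (hexp _), ← integral_const_mul]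
        congr 1 with v
        rw [Complex.ofReal_cos, Complex.cos]
        push_cast
        ring_nf
  have hint : Integrable (fun v : ℝ => (Real.cos (2 * Real.pi * v * ξ) : ℂ) * 𝓕 H v) :=
    hFi.bdd_mul (by fun_prop) (.of_forall fun v => by
      rw [Complex.norm_real]; exact Real.abs_cos_le_one _)
  rw [hcos, ← RCLike.re_eq_complex_re, ← integral_re hint]
  simp only [RCLike.re_eq_complex_re, Complex.re_ofReal_mul, mul_comm]

lemma mul_one_add_pow_le {F K₀ K₁ x s : ℝ} {M : ℕ} (hF : 0 ≤ F) (hx : |s| ≤ x) (h₀ : F ≤ K₀)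
    (h₁ : x ^ (M + 2) * F ≤ K₁) :
    F * (1 + x) ^ M ≤ 2 ^ (M + 1) * (K₀ + K₁) * (1 + s ^ 2)⁻¹ := by
  have hx0 : 0 ≤ x := (abs_nonneg s).trans hx
  have hsq : 1 + s ^ 2 ≤ (1 + x) ^ 2 := by
    rw [← sq_abs]
    nlinarith [abs_nonneg s]
  rw [← div_eq_mul_inv, le_div_iff₀ (by positivity)]
  calc F * (1 + x) ^ M * (1 + s ^ 2) ≤ F * (1 + x) ^ M * (1 + x) ^ 2 := by gcongr
    _ = F * (1 + x) ^ (M + 2) := by ring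
    _ ≤ F * (2 ^ (M + 1) * (1 ^ (M + 2) + x ^ (M + 2))) := by
      gcongr
      exact add_pow_le zero_le_one hx0 (M + 2)
    _ = 2 ^ (M + 1) * (F + x ^ (M + 2) * F) := by ring
    _ ≤ 2 ^ (M + 1) * (K₀ + K₁) := by gcongr

lemma exists_cosine_representation_of_even {B₀ B₁ : ℝ} (M : ℕ) (hsmooth : ContDiff ℝ (⊤ : ℕ∞) H)
    (hR : 0 ≤ R) (hH : ∀ ξ, R < |ξ| → H ξ = 0) (heven : ∀ ξ, H (-ξ) = H ξ)
    (hB₀ : ∀ ξ, ‖H ξ‖ ≤ B₀) (hB₁ : ∀ ξ, ‖iteratedDeriv (M + 2) H ξ‖ ≤ B₁) :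
    ∃ g : ℝ → ℝ, Continuous g ∧ Integrable (fun s => |g s| * (1 + 2 * Real.pi * |s|) ^ M) ∧
      ∫ s, |g s| * (1 + 2 * Real.pi * |s|) ^ M ≤
        2 ^ (M + 1) * (B₀ * (2 * R) + B₁ * (2 * R)) * Real.pi ∧
      ∀ ξ, (H ξ).re = ∫ s, g s * Real.cos (2 * Real.pi * s * ξ) := by
  have hsupp := hasCompactSupport_of_lt_abs hH
  obtain ⟨hFc, hFi⟩ := continuous_fourier_and_integrable_fourier hsmooth hsupp
  set K := 2 ^ (M + 1) * (B₀ * (2 * R) + B₁ * (2 * R))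
  have hdecay : ∀ s, |(𝓕 H s).re| * (1 + 2 * Real.pi * |s|) ^ M ≤ K * (1 + s ^ 2)⁻¹ := by
    intro s
    have hx : |s| ≤ 2 * Real.pi * |s| :=
      le_mul_of_one_le_left (abs_nonneg s) (by linarith [Real.pi_gt_three])
    have h₀ := pow_mul_norm_fourier_le (j := 0) hsmooth hR hH (by simpa using hB₀) s
    have h₁ := pow_mul_norm_fourier_le hsmooth hR hH hB₁ s
    refine le_trans ?_ (mul_one_add_pow_le (norm_nonneg (𝓕 H s)) hx (by simpa using h₀) h₁)
    gcongr
    exact Complex.abs_re_le_norm _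
  have hint : Integrable (fun s => |(𝓕 H s).re| * (1 + 2 * Real.pi * |s|) ^ M) := by
    refine (integrable_inv_one_add_sq.const_mul K).mono' (by fun_prop) (.of_forall fun s => ?_)
    rw [Real.norm_of_nonneg (by positivity)]
    exact hdecay s
  refine ⟨fun s => (𝓕 H s).re, by fun_prop, hint, ?_, re_eq_integral_re_fourier_mul_cos
    hsmooth.continuous (hsmooth.continuous.integrable_of_hasCompactSupport hsupp) hFi heven⟩
  calc _ ≤ ∫ s : ℝ, K * (1 + s ^ 2)⁻¹ :=
        integral_mono hint (integrable_inv_one_add_sq.const_mul K) hdecay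
    _ = K * Real.pi := by rw [integral_const_mul, integral_univ_inv_one_add_sq]

end CosineTransform

/-! ### The cut-off function as a superposition of cosines -/

section Cutoff

variable {η : ℝ → ℝ} {a t : ℝ}

/-- A cut-off function `η` on `[0, ∞)`, continued to the whole line by the value `1` and viewed
as complex valued. The junction is placed at `1 / 2`, inside the region where an admissible `η`
equals `1`, which makes the continuation smooth. -/
def cutoffExt (η : ℝ → ℝ) (t : ℝ) : ℂ := if t ≤ 1 / 2 then 1 else (η t : ℂ)

lemma cutoffExt_of_le_one (hη : Admissible η) (ht : t ≤ 1) : cutoffExt η t = 1 := by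
  rw [cutoffExt]
  split_ifs with h
  · rfl
  · rw [hη.2.1 t (by linarith) ht, Complex.ofReal_one]

lemma cutoffExt_of_nonneg (hη : Admissible η) (ht : 0 ≤ t) : cutoffExt η t = η t := by
  rw [cutoffExt]
  split_ifs with h
  · rw [hη.2.1 t ht (by linarith), Complex.ofReal_one]
  · rfl

lemma cutoffExt_of_two_le (hη : Admissible η) (ht : 2 ≤ t) : cutoffExt η t = 0 := by
  rw [cutoffExt_of_nonneg hη (by linarith), hη.2.2 t ht, Complex.ofReal_zero]

lemma contDiff_cutoffExt (hη : Admissible η) : ContDiff ℝ (⊤ : ℕ∞) (cutoffExt η) := by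
  rw [contDiff_iff_contDiffAt]
  intro t
  rcases lt_or_ge t 1 with h | h
  · refine contDiffAt_const (c := 1) |>.congr_of_eventuallyEq ?_
    filter_upwards [Iio_mem_nhds h] with s hs using cutoffExt_of_le_one hη (le_of_lt hs)
  · refine (Complex.ofRealCLM.contDiff.comp hη.1).contDiffAt.congr_of_eventuallyEq ?_
    filter_upwards [Ioi_mem_nhds (zero_lt_one.trans_le h)] with s hs
      using cutoffExt_of_nonneg hη (le_of_lt hs)

lemma exists_norm_iteratedDeriv_cutoffExt_le (hη : Admissible η) (j : ℕ) :
    ∃ B, ∀ t, ‖iteratedDeriv j (cutoffExt η) t‖ ≤ B := by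
  have hcont : Continuous (iteratedDeriv j (cutoffExt η)) :=
    (contDiff_cutoffExt hη).continuous_iteratedDeriv j (mod_cast le_top)
  obtain ⟨B, hB⟩ := (isCompact_Icc (a := (1 : ℝ)) (b := 2)).exists_bound_of_continuousOn
    hcont.continuousOn
  have hconst : ∀ {t : ℝ} {c : ℂ}, ‖c‖ ≤ 1 → cutoffExt η =ᶠ[nhds t] (fun _ => c) →
      ‖iteratedDeriv j (cutoffExt η) t‖ ≤ max B 1 := by
    intro t c hc h
    rw [h.iteratedDeriv_eq, iteratedDeriv_const]
    split_ifs
    · exact hc.trans (le_max_right _ _)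
    · simp
  refine ⟨max B 1, fun t => ?_⟩
  rcases lt_or_ge t 1 with h1 | h1
  · refine hconst norm_one.le ?_
    filter_upwards [Iio_mem_nhds h1] with s hs using cutoffExt_of_le_one hη (le_of_lt hs)
  rcases lt_or_ge 2 t with h2 | h2
  · refine hconst (c := 0) (by simp) ?_
    filter_upwards [Ioi_mem_nhds h2] with s hs using cutoffExt_of_two_le hη (le_of_lt hs)
  · exact (hB t ⟨h1, h2⟩).trans (le_max_left _ _)

/-- The even function which, for `ξ ≥ -(a + 1)`, is the translate `η (ξ - a)` of the continued
cut-off function `η`: the two translates of `η` and of its reflection overlap where both equal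
`1`, and the overlap is corrected by `-1`. -/
def evenCutoff (η : ℝ → ℝ) (a ξ : ℝ) : ℂ := cutoffExt η (ξ - a) + cutoffExt η (-a - ξ) - 1

lemma evenCutoff_neg (η : ℝ → ℝ) (a ξ : ℝ) : evenCutoff η a (-ξ) = evenCutoff η a ξ := by
  rw [evenCutoff, evenCutoff, show -ξ - a = -a - ξ by ring, show -a - -ξ = ξ - a by ring,
    add_comm (cutoffExt η _)]

lemma evenCutoff_add (hη : Admissible η) (ht : 0 ≤ t) (ha : -(1 : ℝ) ≤ t + 2 * a) :
    evenCutoff η a (t + a) = η t := by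
  rw [evenCutoff, add_sub_cancel_right, cutoffExt_of_nonneg hη ht,
    cutoffExt_of_le_one hη (by linarith), add_sub_cancel_right]

lemma contDiff_evenCutoff (hη : Admissible η) (a : ℝ) :
    ContDiff ℝ (⊤ : ℕ∞) (evenCutoff η a) := by
  have := contDiff_cutoffExt hη
  unfold evenCutoff
  fun_prop

lemma evenCutoff_eq_zero (hη : Admissible η) {ξ : ℝ} (hξ : 2 + |a| < |ξ|) :
    evenCutoff η a ξ = 0 := by
  wlog h : 0 ≤ ξ generalizing ξ
  · rw [← evenCutoff_neg]
    exact this (by rwa [abs_neg]) (by linarith)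
  rw [abs_of_nonneg h] at hξ
  have h1 := neg_abs_le a
  have h2 := le_abs_self a
  rw [evenCutoff, cutoffExt_of_two_le hη (by linarith), cutoffExt_of_le_one hη (by linarith),
    zero_add, sub_self]

lemma exists_norm_iteratedDeriv_evenCutoff_le (hη : Admissible η) (j : ℕ) :
    ∃ B, ∀ a ξ, ‖iteratedDeriv j (evenCutoff η a) ξ‖ ≤ B := by
  obtain ⟨B, hB⟩ := exists_norm_iteratedDeriv_cutoffExt_le hη j
  refine ⟨B + B + 1, fun a ξ => ?_⟩
  have hs : ContDiff ℝ j (cutoffExt η) := (contDiff_cutoffExt hη).of_le (mod_cast le_top)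
  have hsplit : iteratedDeriv j (evenCutoff η a) ξ =
      iteratedDeriv j (fun z => cutoffExt η (z - a)) ξ +
      iteratedDeriv j (fun z => cutoffExt η (-a - z)) ξ - iteratedDeriv j (fun _ => (1 : ℂ)) ξ := by
    unfold evenCutoff
    rw [iteratedDeriv_fun_sub (by fun_prop) (by fun_prop),
      iteratedDeriv_fun_add (by fun_prop) (by fun_prop)]
  rw [hsplit, iteratedDeriv_comp_sub_const, iteratedDeriv_comp_const_sub, iteratedDeriv_const]
  refine (norm_sub_le _ _).trans (add_le_add ((norm_add_le _ _).trans (add_le_add (hB _) ?_)) ?_)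
  · simpa only [norm_smul, norm_pow, norm_neg, norm_one, one_pow, one_mul] using hB _
  · split_ifs <;> simp

/-- The frequencies `(k + ρ) / n` are those of the Jacobi wave equation with `ρ = (α + β + 1) / 2`;
the moments of `|g|` control the growth in time of its weighted energy. -/
lemma Admissible.exists_cosine_representation (hη : Admissible η) {ρ : ℝ} (hρ : -(1 / 2) < ρ)
    (M : ℕ) : ∃ C, 0 ≤ C ∧ ∀ n : ℕ, 1 ≤ n → ∃ g : ℝ → ℝ, Continuous g ∧
      Integrable (fun s => |g s| * (1 + 2 * Real.pi * |s|) ^ M) ∧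
      ∫ s, |g s| * (1 + 2 * Real.pi * |s|) ^ M ≤ C ∧
      ∀ k : ℕ, η (k / n) = ∫ s, g s * Real.cos (2 * Real.pi * s * ((k + ρ) / n)) := by
  obtain ⟨B₀, hB₀⟩ := exists_norm_iteratedDeriv_evenCutoff_le hη 0
  obtain ⟨B₁, hB₁⟩ := exists_norm_iteratedDeriv_evenCutoff_le hη (M + 2)
  have hB₀nn : 0 ≤ B₀ := (norm_nonneg _).trans (hB₀ 0 0)
  have hB₁nn : 0 ≤ B₁ := (norm_nonneg _).trans (hB₁ 0 0)
  set R := 2 + |ρ|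
  refine ⟨2 ^ (M + 1) * (B₀ * (2 * R) + B₁ * (2 * R)) * Real.pi, by positivity, fun n hn => ?_⟩
  have hn1 : (1 : ℝ) ≤ n := mod_cast hn
  have hn0 : (0 : ℝ) < n := by linarith
  have hR : 2 + |ρ / n| ≤ R := by
    rw [abs_div, abs_of_pos hn0]
    exact add_le_add_right (div_le_self (abs_nonneg ρ) hn1) 2
  obtain ⟨g, hgc, hgi, hgC, hg⟩ := exists_cosine_representation_of_even M
    (contDiff_evenCutoff hη (ρ / n)) (by positivity)
    (fun ξ hξ => evenCutoff_eq_zero hη (hR.trans_lt hξ))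
    (evenCutoff_neg η _) (by simpa using hB₀ (ρ / n)) (hB₁ _)
  refine ⟨g, hgc, hgi, hgC, fun k => ?_⟩
  have hk : -(1 : ℝ) ≤ k / n + 2 * (ρ / n) := by
    rw [show (k : ℝ) / n + 2 * (ρ / n) = (k + 2 * ρ) / n by ring, le_div_iff₀ hn0]
    linarith [(Nat.cast_nonneg k : (0 : ℝ) ≤ k)]
  rw [← hg, add_div, evenCutoff_add hη (by positivity) hk, Complex.ofReal_re]

end Cutoff

/-! ### Weighted `L²` boundedness of the de la Vallée Poussin operator -/

section Superposition

variable {X Y : Type*} [MeasurableSpace X] [MeasurableSpace Y] {ν : Measure X} {μ : Measure Y}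
  {g : X → ℝ}

lemma rpow_integral_le [IsFiniteMeasure ν] {U : X → ℝ} {p : ℝ} (hp : 1 ≤ p)
    (hU : ∀ x, 0 ≤ U x) (hint : Integrable U ν) (hintp : Integrable (fun x => U x ^ p) ν) :
    (∫ x, U x ∂ν) ^ p ≤ ν.real univ ^ (p - 1) * ∫ x, U x ^ p ∂ν := by
  rcases eq_or_ne ν 0 with rfl | hν
  · simp [Real.zero_rpow (by linarith : p ≠ 0)]
  have : NeZero ν := ⟨hν⟩
  have hmass : 0 < ν.real univ := measureReal_univ_pos
  have hjensen := (convexOn_rpow hp).map_average_le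
    (continuousOn_id.rpow_const fun _ _ => Or.inr (by linarith)) isClosed_Ici (ae_of_all _ hU)
    hint hintp
  simp only [average_eq, smul_eq_mul] at hjensen
  rw [Real.mul_rpow (by positivity) (integral_nonneg hU), Real.inv_rpow hmass.le,
    inv_mul_le_iff₀ (by positivity)] at hjensen
  rwa [Real.rpow_sub_one hmass.ne', div_mul_eq_mul_div, ← mul_div_assoc', div_eq_inv_mul]

lemma abs_integral_mul_rpow_le {U : X → ℝ} {p : ℝ} (hp : 1 ≤ p) (hg : Integrable g ν)
    (hgU : Integrable (fun x => g x * U x) ν)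
    (hgUp : Integrable (fun x => |g x| * |U x| ^ p) ν) :
    |∫ x, g x * U x ∂ν| ^ p ≤ (∫ x, |g x| ∂ν) ^ (p - 1) * ∫ x, |g x| * |U x| ^ p ∂ν := by
  have hm : AEMeasurable (fun x => ENNReal.ofReal |g x|) ν :=
    hg.abs.aestronglyMeasurable.aemeasurable.ennreal_ofReal
  have hfin : ∀ᵐ x ∂ν, ENNReal.ofReal |g x| < ∞ := ae_of_all _ fun _ => ofReal_lt_top
  have hwd : ∀ F : X → ℝ, ∫ x, F x ∂ν.withDensity (fun x => ENNReal.ofReal |g x|) =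
      ∫ x, |g x| * F x ∂ν := fun F => by
    simp only [integral_withDensity_eq_integral_toReal_smul₀ hm hfin,
      toReal_ofReal (abs_nonneg _), smul_eq_mul]
  have hwi : ∀ {F : X → ℝ}, Integrable (fun x => |g x| * F x) ν →
      Integrable F (ν.withDensity fun x => ENNReal.ofReal |g x|) := fun hF => by
    simpa only [integrable_withDensity_iff_integrable_smul₀' hm hfin,
      toReal_ofReal (abs_nonneg _), smul_eq_mul] using hF
  have := isFiniteMeasure_withDensity_ofReal hg.abs.2
  have hmass : (ν.withDensity fun x => ENNReal.ofReal |g x|).real univ = ∫ x, |g x| ∂ν := by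
    simpa using hwd fun _ => 1
  have hjensen := rpow_integral_le hp (fun x => abs_nonneg (U x))
    (hwi (by simpa only [abs_mul] using hgU.abs)) (hwi hgUp)
  rw [hwd, hwd, hmass] at hjensen
  refine (Real.rpow_le_rpow (abs_nonneg _) ?_ (by linarith)).trans hjensen
  simpa only [abs_mul] using abs_integral_le_integral_abs (f := fun x => g x * U x)

lemma sq_integral_mul_le {U : X → ℝ} (hg : Integrable g ν)
    (hgU : Integrable (fun x => g x * U x) ν) (hgU2 : Integrable (fun x => |g x| * U x ^ 2) ν) :
    (∫ x, g x * U x ∂ν) ^ 2 ≤ (∫ x, |g x| ∂ν) * ∫ x, |g x| * U x ^ 2 ∂ν := by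
  have h := abs_integral_mul_rpow_le one_le_two hg hgU (by simpa using hgU2)
  norm_num at h
  exact h

lemma integrable_abs_mul_sq [SFinite ν] {U : X → Y → ℝ} {B : Y → ℝ} (hg : Integrable g ν)
    (hU : Measurable fun z : X × Y => U z.1 z.2) (hUB : ∀ x y, U x y ^ 2 ≤ B y ^ 2)
    (hB : Integrable (fun y => B y ^ 2) μ) :
    Integrable (fun z : X × Y => |g z.1| * U z.1 z.2 ^ 2) (ν.prod μ) := by
  refine (hg.abs.mul_prod hB).mono' ?_ (.of_forall fun z => ?_)
  · exact hg.abs.aestronglyMeasurable.comp_fst.mul (hU.pow_const 2).aestronglyMeasurable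
  · rw [Real.norm_of_nonneg (by positivity)]
    exact mul_le_mul_of_nonneg_left (hUB z.1 z.2) (abs_nonneg _)

/-- A form of Minkowski's integral inequality in `L²(μ)`: `G` bounds the squared norms of the
superposed functions relative to `I`. -/
lemma integral_sq_integral_mul_le [SFinite ν] [SFinite μ] {U : X → Y → ℝ} {B : Y → ℝ} {G : X → ℝ}
    {A I : ℝ} (hg : Integrable g ν) (hU : Measurable fun z : X × Y => U z.1 z.2)
    (hUB : ∀ x y, |U x y| ≤ B y) (hB : Integrable (fun y => B y ^ 2) μ)
    (hI : 0 ≤ I) (hUG : ∀ x, ∫ y, U x y ^ 2 ∂μ ≤ G x * I)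
    (hgG : Integrable (fun x => |g x| * G x) ν) (hA : ∫ x, |g x| ∂ν ≤ A)
    (hAG : ∫ x, |g x| * G x ∂ν ≤ A) :
    ∫ y, (∫ x, g x * U x y ∂ν) ^ 2 ∂μ ≤ A * A * I := by
  have hA0 : 0 ≤ A := (integral_nonneg fun x => abs_nonneg (g x)).trans hA
  have hU2B : ∀ x y, U x y ^ 2 ≤ B y ^ 2 := fun x y => by
    rw [← sq_abs]
    exact pow_le_pow_left₀ (abs_nonneg _) (hUB x y) 2
  have hUy : ∀ y, Measurable fun x => U x y := fun y => hU.comp measurable_prodMk_right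
  have hprod : Integrable (Function.uncurry fun x y => |g x| * U x y ^ 2) (ν.prod μ) :=
    integrable_abs_mul_sq hg hU hU2B hB
  have hpointwise : ∀ y, (∫ x, g x * U x y ∂ν) ^ 2 ≤ A * ∫ x, |g x| * U x y ^ 2 ∂ν := by
    intro y
    refine (sq_integral_mul_le hg ?_ ?_).trans
      (mul_le_mul_of_nonneg_right hA (integral_nonneg fun x => by positivity))
    · exact hg.mul_bdd (hUy y).aestronglyMeasurable (.of_forall fun x => hUB x y)
    · refine hg.abs.mul_bdd ((hUy y).pow_const 2).aestronglyMeasurable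
        (.of_forall fun x => ?_) (c := B y ^ 2)
      rw [Real.norm_of_nonneg (sq_nonneg _)]
      exact hU2B x y
  calc ∫ y, (∫ x, g x * U x y ∂ν) ^ 2 ∂μ
    _ ≤ ∫ y, A * ∫ x, |g x| * U x y ^ 2 ∂ν ∂μ :=
      integral_mono_of_nonneg (.of_forall fun y => sq_nonneg _)
        (hprod.integral_prod_right.const_mul A) (.of_forall hpointwise)
    _ = A * ∫ x, ∫ y, |g x| * U x y ^ 2 ∂μ ∂ν := by
      rw [integral_const_mul, integral_integral_swap hprod]
    _ ≤ A * ∫ x, |g x| * G x * I ∂ν := by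
      refine mul_le_mul_of_nonneg_left (integral_mono hprod.integral_prod_left
        (hgG.mul_const I) fun x => ?_) hA0
      simp only [integral_const_mul, mul_assoc]
      exact mul_le_mul_of_nonneg_left (hUG x) (abs_nonneg _)
    _ ≤ A * (A * I) := by
      rw [integral_mul_const]
      gcongr
    _ = A * A * I := (mul_assoc _ _ _).symm

end Superposition

section WeightedL2

variable {α β : ℝ}

/-- The de la Vallée Poussin sum `V η α β n f` as a polynomial. -/
def valleePoussinPoly (η : ℝ → ℝ) (α β : ℝ) (n : ℕ) (f : ℝ → ℝ) : ℝ[X] :=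
  ∑ k ∈ Finset.range (2 * n + 1), (η ((k : ℝ) / n) * coeff α β k f) • jacobiPoly α β k

@[simp]
lemma eval_valleePoussinPoly (η : ℝ → ℝ) (α β : ℝ) (n : ℕ) (f : ℝ → ℝ) (x : ℝ) :
    (valleePoussinPoly η α β n f).eval x = V η α β n f x := by
  simp [valleePoussinPoly, V, Polynomial.eval_finsetSum]

lemma continuous_V (η : ℝ → ℝ) (α β : ℝ) (n : ℕ) (f : ℝ → ℝ) : Continuous (V η α β n f) := by
  simpa only [eval_valleePoussinPoly] using (valleePoussinPoly η α β n f).continuous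

lemma natDegree_valleePoussinPoly_le (hα : -1 < α) (hβ : -1 < β) (η : ℝ → ℝ) (n : ℕ)
    (f : ℝ → ℝ) : (valleePoussinPoly η α β n f).natDegree ≤ 2 * n := by
  refine Polynomial.natDegree_sum_le_of_forall_le _ _ fun k hk => ?_
  refine (Polynomial.natDegree_smul_le _ _).trans ?_
  rw [natDegree_jacobiPoly hα hβ]
  exact Nat.lt_succ_iff.1 (Finset.mem_range.1 hk)

lemma continuous_div_arccosWeight_pow (ν θ : ℝ) (M : ℕ) {F : ℝ → ℝ} (hF : Continuous F) :
    Continuous fun y => F y / arccosWeight ν θ y ^ M :=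
  hF.div ((continuous_arccosWeight ν θ).pow M) fun y =>
    (pow_pos (zero_lt_one.trans (one_lt_arccosWeight ν θ y)) M).ne'

lemma integral_cosineWave_sq_div_arccosWeight_le (hα : -1 < α) (hβ : -1 < β) {ι : Type*}
    {s : Finset ι} {P : ι → ℝ[X]} {m : ι → ℝ} {ρ ν : ℝ} (hν : 0 < ν)
    (hP : ∀ k ∈ s, jacobiOperator α β (P k) = (m k ^ 2 - ρ ^ 2) • P k) (θ : ℝ) (M : ℕ) (τ : ℝ) :
    ∫ y, (cosineWave s P m τ).eval y ^ 2 / arccosWeight ν θ y ^ M ∂(jacobiMeasure α β) ≤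
      (1 + ν * |τ|) ^ M *
        ∫ y, (cosineWave s P m 0).eval y ^ 2 / arccosWeight ν θ y ^ M ∂(jacobiMeasure α β) := by
  have heven : cosineWave s P m |τ| = cosineWave s P m τ := by
    rcases abs_choice τ with h | h <;> simp [h, cosineWave]
  have henergy := integral_cosineWave_sq_div_le hα hβ hν hP θ M (abs_nonneg τ)
  rw [heven] at henergy
  refine le_trans ?_ (mul_le_mul_of_nonneg_left henergy (by positivity))
  rw [← integral_const_mul]
  have hντ : 0 ≤ ν * |τ| := by positivity
  have hA := one_lt_arccosWeight ν θ
  have hcont := continuous_arccosWeight ν θ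
  refine integral_mono ?_ ?_ fun y => ?_
  · exact integrable_jacobiMeasure_of_continuousOn hα hβ
      (continuous_div_arccosWeight_pow ν θ M (by fun_prop)).continuousOn
  · refine integrable_jacobiMeasure_of_continuousOn hα hβ (Continuous.continuousOn ?_)
    refine continuous_const.mul (Continuous.div (by fun_prop) (by fun_prop) fun y => ?_)
    exact (pow_pos (by linarith [hA y]) M).ne'
  · have hpos := zero_lt_one.trans (hA y)
    have hshift : arccosWeight ν θ y + ν * |τ| ≤ (1 + ν * |τ|) * arccosWeight ν θ y := by
      nlinarith [hA y]
    rw [← mul_div_assoc, div_le_div_iff₀ (by positivity) (by positivity), mul_comm _ (_ ^ 2),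
      mul_assoc, ← mul_pow]
    gcongr

/-- The component of the polynomial `f` in the `k`-th eigenspace of the Jacobi operator. -/
def jacobiMode (α β : ℝ) (f : ℝ[X]) (k : ℕ) : ℝ[X] :=
  coeff α β k (fun x => f.eval x) • jacobiPoly α β k

lemma jacobiOperator_jacobiMode (hα : -1 < α) (β : ℝ) (f : ℝ[X]) (k : ℕ) :
    jacobiOperator α β (jacobiMode α β f k) =
      ((k + (α + β + 1) / 2) ^ 2 - ((α + β + 1) / 2) ^ 2) • jacobiMode α β f k := by
  rw [jacobiMode, map_smul, jacobiOperator_jacobiPoly hα, smul_comm, jacobiEigenvalue]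
  congr 1
  ring

lemma V_eq_sum_jacobiMode (hα : -1 < α) (hβ : -1 < β) {η : ℝ → ℝ} (hη : Admissible η) {n : ℕ}
    (hn : 1 ≤ n) (f : ℝ[X]) (y : ℝ) :
    V η α β n (fun x => f.eval x) y =
      ∑ k ∈ Finset.range (f.natDegree + 1), η (k / n) * (jacobiMode α β f k).eval y := by
  refine Finset.sum_congr_of_eq_on_inter (fun k _ hk => ?_) (fun k _ hk => ?_) fun k _ _ => ?_
  · rw [Finset.mem_range, not_lt, Nat.succ_le_iff] at hk
    rw [coeff_eval_eq_zero_of_natDegree_lt hα hβ hk, mul_zero, zero_mul]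
  · have hk2 : ((2 * n : ℕ) : ℝ) ≤ k := mod_cast by
      rw [Finset.mem_range] at hk; omega
    rw [hη.2.2 _ ((le_div_iff₀ (by positivity)).2 (by simpa using hk2)), zero_mul]
  · simp [jacobiMode, mul_assoc]

/-- The solution at time `τ` of the Jacobi wave equation `∂²_τ u = -(jacobiOperator + ρ²) u`,
`ρ = (α + β + 1) / 2`, with initial position `f` and initial velocity `0`. -/
def jacobiWave (α β : ℝ) (f : ℝ[X]) (τ : ℝ) : ℝ[X] :=
  cosineWave (Finset.range (f.natDegree + 1)) (jacobiMode α β f)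
    (fun k => k + (α + β + 1) / 2) τ

lemma eval_jacobiWave_zero (hα : -1 < α) (hβ : -1 < β) (f : ℝ[X]) (y : ℝ) :
    (jacobiWave α β f 0).eval y = f.eval y := by
  rw [eval_eq_sum_coeff_mul_J hα hβ f.natDegree.lt_succ_self y]
  simp [jacobiWave, eval_cosineWave, jacobiMode]

lemma continuous_eval_jacobiWave (α β : ℝ) (f : ℝ[X]) :
    Continuous fun z : ℝ × ℝ => (jacobiWave α β f z.1).eval z.2 := by
  simp only [jacobiWave, eval_cosineWave]
  fun_prop

lemma abs_eval_jacobiWave_le (α β : ℝ) (f : ℝ[X]) (τ y : ℝ) :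
    |(jacobiWave α β f τ).eval y| ≤
      ∑ k ∈ Finset.range (f.natDegree + 1), |(jacobiMode α β f k).eval y| := by
  rw [jacobiWave, eval_cosineWave]
  refine (Finset.abs_sum_le_sum_abs _ _).trans (Finset.sum_le_sum fun k _ => ?_)
  rw [abs_mul]
  exact mul_le_of_le_one_left (abs_nonneg _) (Real.abs_cos_le_one _)

lemma integral_jacobiWave_sq_div_le (hα : -1 < α) (hβ : -1 < β) {ν : ℝ} (hν : 0 < ν) (θ : ℝ)
    (M : ℕ) (f : ℝ[X]) (τ : ℝ) :
    ∫ y, (jacobiWave α β f τ).eval y ^ 2 / arccosWeight ν θ y ^ M ∂(jacobiMeasure α β) ≤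
      (1 + ν * |τ|) ^ M * ∫ y, f.eval y ^ 2 / arccosWeight ν θ y ^ M ∂(jacobiMeasure α β) := by
  simp only [← eval_jacobiWave_zero hα hβ f]
  exact integral_cosineWave_sq_div_arccosWeight_le hα hβ hν
    (fun k _ => jacobiOperator_jacobiMode hα β f k) θ M τ

lemma V_eq_integral_jacobiWave (hα : -1 < α) (hβ : -1 < β) {η g : ℝ → ℝ} (hη : Admissible η)
    {n : ℕ} (hn : 1 ≤ n) (hg : Integrable g)
    (hηg : ∀ k : ℕ, η (k / n) =
      ∫ t, g t * Real.cos (2 * Real.pi * t * ((k + (α + β + 1) / 2) / n)))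
    (f : ℝ[X]) (y : ℝ) :
    V η α β n (fun x => f.eval x) y =
      ∫ t, g t * (jacobiWave α β f (2 * Real.pi * t / n)).eval y := by
  simp only [V_eq_sum_jacobiMode hα hβ hη hn, jacobiWave, eval_cosineWave, Finset.mul_sum]
  rw [integral_finsetSum]
  · refine Finset.sum_congr rfl fun k _ => ?_
    rw [hηg k]
    simp only [← mul_assoc, integral_mul_const, mul_div_assoc', div_mul_eq_mul_div]
  · intro k _
    refine hg.mul_bdd (c := |(jacobiMode α β f k).eval y|) (by fun_prop) (.of_forall fun t => ?_)
    rw [norm_mul]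
    exact mul_le_of_le_one_left (abs_nonneg _) (Real.abs_cos_le_one _)

lemma exists_integral_V_sq_div_le (hα : -1 < α) (hβ : -1 < β) {η : ℝ → ℝ} (hη : Admissible η)
    (M : ℕ) : ∃ D, 0 ≤ D ∧ ∀ n : ℕ, 1 ≤ n → ∀ (θ : ℝ) (f : ℝ[X]),
      ∫ y, V η α β n (fun x => f.eval x) y ^ 2 / arccosWeight n θ y ^ M ∂(jacobiMeasure α β) ≤
        D * ∫ y, f.eval y ^ 2 / arccosWeight n θ y ^ M ∂(jacobiMeasure α β) := by
  have := isFiniteMeasure_jacobiMeasure hα hβ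
  obtain ⟨A, hA0, hA⟩ := hη.exists_cosine_representation (ρ := (α + β + 1) / 2) (by linarith) M
  refine ⟨A * A, by positivity, fun n hn θ f => ?_⟩
  obtain ⟨g, hgc, hgi, hgA, hηg⟩ := hA n hn
  have hmoment : ∀ t, |g t| ≤ |g t| * (1 + 2 * Real.pi * |t|) ^ M := fun t =>
    le_mul_of_one_le_right (abs_nonneg _) (one_le_pow₀ (le_add_of_nonneg_right (by positivity)))
  have hg : Integrable g := hgi.mono' hgc.aestronglyMeasurable (.of_forall hmoment)
  let Q := fun y => √(arccosWeight n θ y ^ M)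
  have hcont := continuous_arccosWeight n θ
  have hQ : ∀ p y : ℝ, p ^ 2 / arccosWeight n θ y ^ M = (p / Q y) ^ 2 := fun p y => by
    rw [div_pow, Real.sq_sqrt (pow_nonneg (zero_lt_one.trans (one_lt_arccosWeight n θ y)).le M)]
  have hV : ∀ y, V η α β n (fun x => f.eval x) y / Q y =
      ∫ t, g t * ((jacobiWave α β f (2 * Real.pi * t / n)).eval y / Q y) := fun y => by
    simp only [← mul_div_assoc, integral_div, V_eq_integral_jacobiWave hα hβ hη hn hg hηg]
  simp only [hQ, hV]
  refine integral_sq_integral_mul_le hg ?_ (B := fun y =>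
      (∑ k ∈ Finset.range (f.natDegree + 1), |(jacobiMode α β f k).eval y|) / Q y)
    (fun t y => ?_) ?_ (integral_nonneg fun y => sq_nonneg _) (fun t => ?_) hgi
    ((integral_mono hg.abs hgi hmoment).trans hgA) hgA
  · exact ((continuous_eval_jacobiWave α β f).comp (f := fun z : ℝ × ℝ =>
      (2 * Real.pi * z.1 / n, z.2)) (by fun_prop)).measurable.div (by fun_prop)
  · rw [abs_div, abs_of_nonneg (Real.sqrt_nonneg _)]
    gcongr
    exact abs_eval_jacobiWave_le α β f _ y
  · simp only [← hQ]
    exact integrable_jacobiMeasure_of_continuousOn hα hβ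
      (continuous_div_arccosWeight_pow n θ M (by fun_prop)).continuousOn
  · have hn0 : (0 : ℝ) < n := mod_cast hn
    have hnt : n * |2 * Real.pi * t / n| = 2 * Real.pi * |t| := by
      rw [abs_div, abs_mul, abs_of_pos hn0, abs_of_pos Real.two_pi_pos, mul_div_cancel₀ _ hn0.ne']
    simp only [← hQ, ← hnt]
    exact integral_jacobiWave_sq_div_le hα hβ hn0 θ M f _

end WeightedL2

/-! ### Polynomials on the unit circle -/

section CircleExp

lemma norm_circleExp_sub (s t : ℝ) :
    ‖(Circle.exp s : ℂ) - Circle.exp t‖ = 2 * |Real.sin ((s - t) / 2)| := by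
  have hfactor : (Circle.exp s : ℂ) - Circle.exp t =
      Circle.exp t * (Complex.exp (Complex.I * ↑(s - t)) - 1) := by
    rw [mul_comm Complex.I, ← Circle.coe_exp, Circle.exp_sub, Circle.coe_div, mul_sub, mul_one,
      mul_div_cancel₀ _ (Circle.coe_ne_zero _)]
  rw [hfactor, norm_mul, Circle.norm_coe, one_mul, Complex.norm_exp_I_mul_ofReal_sub_one,
    Real.norm_eq_abs, abs_mul, abs_two]

lemma norm_circleExp_sub_le (s t : ℝ) : ‖(Circle.exp s : ℂ) - Circle.exp t‖ ≤ |s - t| := by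
  have := Real.abs_sin_le_abs (x := (s - t) / 2)
  rw [abs_div, abs_two] at this
  linarith [norm_circleExp_sub s t]

lemma abs_sin_abs_sub_half_le {t τ : ℝ} (hτ : 0 ≤ τ) (hτπ : τ ≤ Real.pi) (ht : |t| ≤ Real.pi) :
    |Real.sin ((|t| - τ) / 2)| ≤ |Real.sin ((t - τ) / 2)| := by
  rcases le_total 0 t with h0 | h0
  · rw [abs_of_nonneg h0]
  have hreflect : (t - τ) / 2 = -(|t| / 2 + τ / 2) := by rw [abs_of_nonpos h0]; ring
  have h1 : 0 ≤ Real.sin (|t| / 2) * Real.cos (τ / 2) := mul_nonneg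
    (Real.sin_nonneg_of_nonneg_of_le_pi (by positivity) (by linarith))
    (Real.cos_nonneg_of_mem_Icc ⟨by linarith, by linarith⟩)
  have h2 : 0 ≤ Real.cos (|t| / 2) * Real.sin (τ / 2) := mul_nonneg
    (Real.cos_nonneg_of_mem_Icc ⟨by linarith [abs_nonneg t], by linarith⟩)
    (Real.sin_nonneg_of_nonneg_of_le_pi (by positivity) (by linarith))
  rw [hreflect, Real.sin_neg, abs_neg, sub_div |t|, Real.sin_sub, Real.sin_add,
    abs_of_nonneg (add_nonneg h1 h2), abs_le]
  constructor <;> linarith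

lemma two_div_pi_mul_le_norm_circleExp_sub {t τ : ℝ} (hτ : 0 ≤ τ) (hτπ : τ ≤ Real.pi)
    (ht : |t| ≤ Real.pi) :
    2 / Real.pi * |(|t|) - τ| ≤ ‖(Circle.exp t : ℂ) - Circle.exp τ‖ := by
  have hjordan := Real.mul_abs_le_abs_sin (x := (|t| - τ) / 2) (by
    rw [abs_div, abs_two]
    have : |(|t|) - τ| ≤ Real.pi := abs_le.2 ⟨by linarith [abs_nonneg t], by linarith⟩
    linarith)
  rw [abs_div, abs_two] at hjordan
  rw [norm_circleExp_sub]
  linarith [abs_sin_abs_sub_half_le hτ hτπ ht]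

lemma norm_eval_circleExp_sub_sq_le {T : ℂ[X]} {D : ℕ} (hD : T.natDegree ≤ D) (s t : ℝ) :
    ‖T.eval (Circle.exp s : ℂ) - T.eval (Circle.exp t : ℂ)‖ ^ 2 ≤
      (s - t) ^ 2 * ((∑ i ∈ T.support, ‖T.coeff i‖ ^ 2) * (D : ℝ) ^ 3) := by
  have hterm : ‖T.eval (Circle.exp s : ℂ) - T.eval (Circle.exp t : ℂ)‖ ≤
      |s - t| * ∑ i ∈ T.support, ‖T.coeff i‖ * i := by
    rw [Polynomial.eval_eq_sum, Polynomial.eval_eq_sum, Polynomial.sum, Polynomial.sum,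
      ← Finset.sum_sub_distrib, Finset.mul_sum]
    refine (norm_sum_le _ _).trans (Finset.sum_le_sum fun i _ => ?_)
    have hle := norm_circleExp_sub_le (i * s) (i * t)
    rw [Circle.exp_natCast_mul, Circle.exp_natCast_mul, Circle.coe_pow, Circle.coe_pow, ← mul_sub,
      abs_mul, Nat.abs_cast] at hle
    rw [← mul_sub, norm_mul]
    calc _ ≤ ‖T.coeff i‖ * (i * |s - t|) := by gcongr
      _ = _ := by ring
  have hsquares : ∑ i ∈ T.support, (i : ℝ) ^ 2 ≤ (D : ℝ) ^ 3 := by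
    calc ∑ i ∈ T.support, (i : ℝ) ^ 2 ≤ ∑ i ∈ Finset.range (D + 1), (i : ℝ) ^ 2 :=
          Finset.sum_le_sum_of_subset_of_nonneg (fun i hi => Finset.mem_range_succ_iff.2
            ((Polynomial.le_natDegree_of_mem_supp i hi).trans hD)) fun _ _ _ => by positivity
      _ = ∑ i ∈ Finset.range D, ((i + 1 : ℕ) : ℝ) ^ 2 := by rw [Finset.sum_range_succ']; simp
      _ ≤ ∑ i ∈ Finset.range D, (D : ℝ) ^ 2 := by
          refine Finset.sum_le_sum fun i hi => ?_
          have : i + 1 ≤ D := Finset.mem_range.1 hi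
          gcongr
      _ = (D : ℝ) ^ 3 := by simp; ring
  calc _ ≤ (|s - t| * ∑ i ∈ T.support, ‖T.coeff i‖ * i) ^ 2 := by gcongr
    _ = (s - t) ^ 2 * (∑ i ∈ T.support, ‖T.coeff i‖ * i) ^ 2 := by rw [mul_pow, sq_abs]
    _ ≤ (s - t) ^ 2 * ((∑ i ∈ T.support, ‖T.coeff i‖ ^ 2) * ∑ i ∈ T.support, (i : ℝ) ^ 2) := by
        gcongr
        exact Finset.sum_mul_sq_le_sq_mul_sq _ _ _
    _ ≤ _ := by gcongr

end CircleExp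

section Parseval

variable {ν : ℝ}

lemma integrable_inv_one_add_mul_add_sq (hν : 0 < ν) (b : ℝ) :
    Integrable fun t : ℝ => (1 + (ν * (t + b)) ^ 2)⁻¹ :=
  (integrable_inv_one_add_sq.comp_mul_left' hν.ne').comp_add_right b

lemma integral_inv_one_add_mul_add_sq (hν : 0 < ν) (b : ℝ) :
    ∫ t : ℝ, (1 + (ν * (t + b)) ^ 2)⁻¹ = Real.pi / ν := by
  rw [integral_add_right_eq_self (μ := volume) (fun t : ℝ => (1 + (ν * t) ^ 2)⁻¹) b,
    Measure.integral_comp_mul_left (fun t : ℝ => (1 + t ^ 2)⁻¹), integral_univ_inv_one_add_sq,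
    abs_of_pos (by positivity), smul_eq_mul, inv_mul_eq_div]

lemma sq_le_inv_one_add_sq_add_inv_one_add_sq {y t τ B : ℝ} (hν : 0 < ν) (hy : 0 ≤ y)
    (h : y * (1 + ν * |(|t|) - τ|) ≤ B) :
    y ^ 2 ≤ B ^ 2 * ((1 + (ν * (t + -τ)) ^ 2)⁻¹ + (1 + (ν * (t + τ)) ^ 2)⁻¹) := by
  have hmul : y ^ 2 * (1 + (ν * (|t| - τ)) ^ 2) ≤ B ^ 2 := by
    calc _ ≤ y ^ 2 * (1 + ν * |(|t|) - τ|) ^ 2 := by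
          gcongr
          rw [← sq_abs, abs_mul, abs_of_pos hν]
          nlinarith [mul_nonneg hν.le (abs_nonneg (|t| - τ))]
      _ = (y * (1 + ν * |(|t|) - τ|)) ^ 2 := by ring
      _ ≤ B ^ 2 := by gcongr
  rw [← le_div_iff₀ (by positivity), div_eq_mul_inv] at hmul
  refine hmul.trans (mul_le_mul_of_nonneg_left ?_ (sq_nonneg B))
  rcases abs_choice t with ht | ht <;> rw [ht]
  · exact le_add_of_nonneg_right (by positivity)
  · rw [show ν * (-t - τ) = -(ν * (t + τ)) by ring, neg_sq]
    exact le_add_of_nonneg_left (by positivity)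

lemma sum_sq_norm_coeff_le (T : ℂ[X]) (hν : 0 < ν) {τ B : ℝ}
    (h : ∀ t, |t| ≤ Real.pi → ‖T.eval (Circle.exp t : ℂ)‖ * (1 + ν * |(|t|) - τ|) ≤ B) :
    ∑ i ∈ T.support, ‖T.coeff i‖ ^ 2 ≤ B ^ 2 / ν := by
  have hcircle : ∀ t, circleMap 0 1 t = Circle.exp t := fun t => by simp [circleMap]
  rw [Polynomial.sum_sq_norm_coeff_eq_circleAverage,
    Real.circleAverage_eq_integral_add (-Real.pi),
    intervalIntegral.integral_comp_add_right (fun θ => ‖T.eval (circleMap 0 1 θ)‖ ^ 2), zero_add,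
    show 2 * Real.pi + -Real.pi = Real.pi by ring,
    intervalIntegral.integral_of_le (by linarith [Real.pi_pos]), smul_eq_mul]
  simp only [hcircle]
  let F : ℝ → ℝ := fun t => B ^ 2 * ((1 + (ν * (t + -τ)) ^ 2)⁻¹ + (1 + (ν * (t + τ)) ^ 2)⁻¹)
  have hint₁ := integrable_inv_one_add_mul_add_sq hν (-τ)
  have hint₂ := integrable_inv_one_add_mul_add_sq hν τ
  have hF : Integrable F := (hint₁.add hint₂).const_mul _
  have hT : Continuous fun t : ℝ => ‖T.eval (Circle.exp t : ℂ)‖ ^ 2 := by fun_prop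
  have hbound : ∫ t in Ioc (-Real.pi) Real.pi, ‖T.eval (Circle.exp t : ℂ)‖ ^ 2 ≤
      B ^ 2 * (Real.pi / ν + Real.pi / ν) := by
    calc _ ≤ ∫ t in Ioc (-Real.pi) Real.pi, F t :=
          setIntegral_mono_on hT.integrableOn_Ioc hF.integrableOn measurableSet_Ioc fun t ht =>
            sq_le_inv_one_add_sq_add_inv_one_add_sq hν (norm_nonneg _)
              (h t (abs_le.2 (Ioc_subset_Icc_self ht)))
      _ ≤ ∫ t, F t :=
          setIntegral_le_integral hF (.of_forall fun t => by
            change 0 ≤ B ^ 2 * _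
            positivity)
      _ = _ := by
          rw [integral_const_mul, integral_add hint₁ hint₂, integral_inv_one_add_mul_add_sq hν,
            integral_inv_one_add_mul_add_sq hν]
  calc _ ≤ (2 * Real.pi)⁻¹ * (B ^ 2 * (Real.pi / ν + Real.pi / ν)) := by gcongr
    _ = _ := by field_simp; ring

end Parseval

section CircleLift

variable {n : ℕ} {q : ℝ[X]}

/-- The polynomial of degree at most `2n` whose value at `e^{it}` is `e^{int} q(cos t)` when
`deg q ≤ n`: the algebraic form of a cosine polynomial on the unit circle. -/
def circleLift (n : ℕ) (q : ℝ[X]) : ℂ[X] :=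
  ∑ k ∈ Finset.range (n + 1),
    C (q.coeff k : ℂ) * (X ^ (n - k) * (C (1 / 2) * (X ^ 2 + 1)) ^ k)

lemma natDegree_circleLift_le (n : ℕ) (q : ℝ[X]) : (circleLift n q).natDegree ≤ 2 * n := by
  refine Polynomial.natDegree_sum_le_of_forall_le _ _ fun k hk => ?_
  refine (Polynomial.natDegree_C_mul_le _ _).trans (Polynomial.natDegree_mul_le.trans ?_)
  have hquad : (C (1 / 2 : ℂ) * (X ^ 2 + 1)).natDegree ≤ 2 := by
    refine (Polynomial.natDegree_C_mul_le _ _).trans ?_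
    compute_degree
  have hpow := Polynomial.natDegree_pow_le_of_le k hquad
  have hkn := Finset.mem_range.1 hk
  rw [Polynomial.natDegree_X_pow]
  lia

lemma eval_circleLift (hq : q.natDegree ≤ n) (t : ℝ) :
    (circleLift n q).eval (Circle.exp t : ℂ) =
      (Circle.exp t : ℂ) ^ n * ((q.eval (Real.cos t) : ℝ) : ℂ) := by
  have hcos : (1 / 2 : ℂ) * ((Circle.exp t : ℂ) ^ 2 + 1) = Circle.exp t * (Real.cos t : ℂ) := by
    have hinv : Complex.exp (t * Complex.I) * Complex.exp (-t * Complex.I) = 1 := by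
      rw [← Complex.exp_add, neg_mul, add_neg_cancel, Complex.exp_zero]
    rw [Circle.coe_exp, Complex.ofReal_cos, Complex.cos]
    linear_combination (-1 / 2 : ℂ) * hinv
  rw [Polynomial.eval_eq_sum_range' (Nat.lt_succ_of_le hq)]
  simp only [circleLift, Polynomial.eval_finsetSum, Polynomial.eval_mul, Polynomial.eval_C,
    Polynomial.eval_pow, Polynomial.eval_X, Polynomial.eval_add, Polynomial.eval_one, hcos]
  push_cast
  rw [Finset.mul_sum]
  refine Finset.sum_congr rfl fun k hk => ?_
  rw [← Nat.sub_add_cancel (Finset.mem_range_succ_iff.1 hk), pow_add, Nat.add_sub_cancel]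
  ring

lemma norm_eval_circleLift (hq : q.natDegree ≤ n) (t : ℝ) :
    ‖(circleLift n q).eval (Circle.exp t : ℂ)‖ = |q.eval (Real.cos t)| := by
  rw [eval_circleLift hq, norm_mul, norm_pow, Circle.norm_coe, one_pow, one_mul, Complex.norm_real,
    Real.norm_eq_abs]

end CircleLift

section GeometricKernel

variable {n : ℕ}

/-- The normalized geometric sum `n⁻¹ ∑_{k<n} (e^{-iτ} z)^k`, a polynomial with value `1` at
`z = e^{iτ}` which decays away from that point on the scale `1/n`. -/
def geometricKernel (n : ℕ) (τ : ℝ) : ℂ[X] :=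
  ∑ k ∈ Finset.range n, C ((n : ℂ)⁻¹ * (Circle.exp (-τ) : ℂ) ^ k) * X ^ k

lemma natDegree_geometricKernel_le (n : ℕ) (τ : ℝ) : (geometricKernel n τ).natDegree ≤ n :=
  Polynomial.natDegree_sum_le_of_forall_le _ _ fun _ hk =>
    (Polynomial.natDegree_C_mul_X_pow_le _ _).trans (Finset.mem_range.1 hk).le

lemma eval_geometricKernel (n : ℕ) (τ t : ℝ) :
    (geometricKernel n τ).eval (Circle.exp t : ℂ) =
      (n : ℂ)⁻¹ * ∑ k ∈ Finset.range n, (Circle.exp (t - τ) : ℂ) ^ k := by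
  simp only [geometricKernel, Polynomial.eval_finsetSum, Polynomial.eval_mul, Polynomial.eval_C,
    Polynomial.eval_pow, Polynomial.eval_X, Finset.mul_sum]
  refine Finset.sum_congr rfl fun k _ => ?_
  rw [mul_assoc, ← mul_pow, ← Circle.coe_mul, ← Circle.exp_add, neg_add_eq_sub]

lemma eval_geometricKernel_self (hn : 1 ≤ n) (τ : ℝ) :
    (geometricKernel n τ).eval (Circle.exp τ : ℂ) = 1 := by
  have hn0 : (n : ℂ) ≠ 0 := mod_cast (by lia : n ≠ 0)
  rw [eval_geometricKernel]
  simp [hn0]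

lemma norm_eval_geometricKernel_le_one (hn : 1 ≤ n) (τ t : ℝ) :
    ‖(geometricKernel n τ).eval (Circle.exp t : ℂ)‖ ≤ 1 := by
  have hn0 : (0 : ℝ) < n := mod_cast hn
  rw [eval_geometricKernel, norm_mul, norm_inv, Complex.norm_natCast, inv_mul_le_one₀ hn0]
  exact (norm_sum_le _ _).trans (by simp)

lemma norm_eval_geometricKernel_mul_le_two (hn : 1 ≤ n) (τ t : ℝ) :
    ‖(geometricKernel n τ).eval (Circle.exp t : ℂ)‖ *
      (n * ‖(Circle.exp t : ℂ) - Circle.exp τ‖) ≤ 2 := by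
  have hn0 : (n : ℝ) ≠ 0 := mod_cast (by lia : n ≠ 0)
  have hrotate : ‖(Circle.exp t : ℂ) - Circle.exp τ‖ = ‖(Circle.exp (t - τ) : ℂ) - 1‖ := by
    have := norm_circleExp_sub (t - τ) 0
    rw [sub_zero, ← norm_circleExp_sub t τ, Circle.exp_zero, Circle.coe_one] at this
    exact this.symm
  rw [hrotate, eval_geometricKernel, norm_mul, norm_inv, Complex.norm_natCast]
  calc _ = ‖(∑ k ∈ Finset.range n, (Circle.exp (t - τ) : ℂ) ^ k) * (Circle.exp (t - τ) - 1)‖ := by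
        rw [norm_mul]; field_simp
    _ = ‖(Circle.exp (t - τ) : ℂ) ^ n - 1‖ := by rw [geom_sum_mul]
    _ ≤ ‖(Circle.exp (t - τ) : ℂ) ^ n‖ + ‖(1 : ℂ)‖ := norm_sub_le _ _
    _ = 2 := by rw [norm_pow, Circle.norm_coe]; norm_num

lemma norm_eval_geometricKernel_mul_le_five (hn : 1 ≤ n) {τ t : ℝ} (hτ : 0 ≤ τ)
    (hτπ : τ ≤ Real.pi) (ht : |t| ≤ Real.pi) :
    ‖(geometricKernel n τ).eval (Circle.exp t : ℂ)‖ * (1 + n * |(|t|) - τ|) ≤ 5 := by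
  have hle := norm_eval_geometricKernel_le_one hn τ t
  have hdecay := norm_eval_geometricKernel_mul_le_two hn τ t
  set G := ‖(geometricKernel n τ).eval (Circle.exp t : ℂ)‖
  have : 0 ≤ G := norm_nonneg _
  have hdist : G * (n * |(|t|) - τ|) * (2 / Real.pi) ≤ 2 := by
    calc _ = G * (n * (2 / Real.pi * |(|t|) - τ|)) := by ring
      _ ≤ G * (n * ‖(Circle.exp t : ℂ) - Circle.exp τ‖) := by
          gcongr
          exact two_div_pi_mul_le_norm_circleExp_sub hτ hτπ ht
      _ ≤ 2 := hdecay
  rw [← le_div_iff₀ (by positivity), div_div_cancel₀ two_ne_zero] at hdist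
  linarith [Real.pi_lt_four]

end GeometricKernel

section WeightedMaximum

variable {n K : ℕ} {q : ℝ[X]} {τ : ℝ}

lemma norm_eval_circleLift_mul_geometricKernel_pow (hq : q.natDegree ≤ n) (m : ℕ) (t : ℝ) :
    ‖(circleLift n q * geometricKernel m τ ^ K).eval (Circle.exp t : ℂ)‖ =
      |q.eval (Real.cos t)| * ‖(geometricKernel m τ).eval (Circle.exp t : ℂ)‖ ^ K := by
  rw [Polynomial.eval_mul, Polynomial.eval_pow, norm_mul, norm_pow, norm_eval_circleLift hq]

lemma norm_eval_circleLift_mul_geometricKernel_pow_mul_le (hn : 1 ≤ n) (hq : q.natDegree ≤ 2 * n)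
    (hτ : 0 ≤ τ) (hτπ : τ ≤ Real.pi)
    (hmax : ∀ t, 0 ≤ t → t ≤ Real.pi →
      |q.eval (Real.cos t)| ≤ |q.eval (Real.cos τ)| * (1 + n * |t - τ|) ^ K)
    {t : ℝ} (ht : |t| ≤ Real.pi) :
    ‖(circleLift (2 * n) q * geometricKernel n τ ^ (K + 1)).eval (Circle.exp t : ℂ)‖ *
      (1 + n * |(|t|) - τ|) ≤ |q.eval (Real.cos τ)| * 5 ^ (K + 1) := by
  rw [norm_eval_circleLift_mul_geometricKernel_pow hq]
  have hqt := hmax |t| (abs_nonneg t) ht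
  rw [Real.cos_abs] at hqt
  have hG := norm_eval_geometricKernel_mul_le_five hn hτ hτπ ht
  set G := ‖(geometricKernel n τ).eval (Circle.exp t : ℂ)‖
  have : 0 ≤ G := norm_nonneg _
  set d := 1 + (n : ℝ) * |(|t|) - τ|
  have : 0 ≤ d := by positivity
  clear_value G d
  calc _ ≤ |q.eval (Real.cos τ)| * d ^ K * G ^ (K + 1) * d := by gcongr
    _ = |q.eval (Real.cos τ)| * (G * d) ^ (K + 1) := by ring
    _ ≤ _ := by gcongr

/-- Multiplying by a power of the geometric kernel turns the weighted maximum into decay; Parseval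
then bounds the coefficients, hence the oscillation near `τ`. -/
lemma half_abs_eval_cos_le (hn : 1 ≤ n) (hq : q.natDegree ≤ 2 * n) (hτ : 0 ≤ τ)
    (hτπ : τ ≤ Real.pi)
    (hmax : ∀ t, 0 ≤ t → t ≤ Real.pi →
      |q.eval (Real.cos t)| ≤ |q.eval (Real.cos τ)| * (1 + n * |t - τ|) ^ K)
    {t : ℝ} (ht : |t - τ| ≤ 1 / (2 * 5 ^ (K + 1) * ((K : ℝ) + 5) ^ 2) / n) :
    |q.eval (Real.cos τ)| / 2 ≤ |q.eval (Real.cos t)| := by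
  have hn0 : (0 : ℝ) < n := mod_cast hn
  set Z := |q.eval (Real.cos τ)|
  set T := circleLift (2 * n) q * geometricKernel n τ ^ (K + 1)
  have hdeg : T.natDegree ≤ n * (K + 5) := by
    refine Polynomial.natDegree_mul_le.trans ?_
    have := Polynomial.natDegree_pow_le_of_le (K + 1) (natDegree_geometricKernel_le n τ)
    have := natDegree_circleLift_le (2 * n) q
    nlinarith
  have hnorm := norm_eval_circleLift_mul_geometricKernel_pow (K := K + 1) (τ := τ) hq n
  have hTτ : ‖T.eval (Circle.exp τ : ℂ)‖ = Z := by
    rw [hnorm, eval_geometricKernel_self hn, norm_one, one_pow, mul_one]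
  have hTt : ‖T.eval (Circle.exp t : ℂ)‖ ≤ |q.eval (Real.cos t)| := by
    rw [hnorm]
    exact mul_le_of_le_one_right (abs_nonneg _)
      (pow_le_one₀ (norm_nonneg _) (norm_eval_geometricKernel_le_one hn τ t))
  have hcoeff : ∑ i ∈ T.support, ‖T.coeff i‖ ^ 2 ≤ (Z * 5 ^ (K + 1)) ^ 2 / n :=
    sum_sq_norm_coeff_le T hn0 fun s hs =>
      norm_eval_circleLift_mul_geometricKernel_pow_mul_le hn hq hτ hτπ hmax hs
  have hosc : ‖T.eval (Circle.exp t : ℂ) - T.eval (Circle.exp τ : ℂ)‖ ^ 2 ≤ (Z / 2) ^ 2 := by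
    refine (norm_eval_circleExp_sub_sq_le hdeg t τ).trans ?_
    rw [← sq_abs (t - τ)]
    calc _ ≤ (1 / (2 * 5 ^ (K + 1) * ((K : ℝ) + 5) ^ 2) / n) ^ 2 *
            ((Z * 5 ^ (K + 1)) ^ 2 / n * ((n * (K + 5) : ℕ) : ℝ) ^ 3) := by gcongr
      _ = (Z / 2) ^ 2 * (1 / ((K : ℝ) + 5)) := by push_cast; field_simp
      _ ≤ (Z / 2) ^ 2 := by
          refine mul_le_of_le_one_right (sq_nonneg _) ?_
          rw [div_le_one (by positivity)]
          linarith [K.cast_nonneg (α := ℝ)]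
  have hdiff := (abs_le_of_sq_le_sq' hosc (by positivity)).2
  have := norm_sub_norm_le (T.eval (Circle.exp τ : ℂ)) (T.eval (Circle.exp t : ℂ))
  rw [norm_sub_rev, hTτ] at this
  linarith

lemma exists_half_abs_eval_cos_le (K : ℕ) : ∃ c : ℝ, 0 < c ∧ c ≤ 1 ∧ ∀ n : ℕ, 1 ≤ n →
    ∀ q : ℝ[X], q.natDegree ≤ 2 * n → ∀ τ, 0 ≤ τ → τ ≤ Real.pi →
    (∀ t, 0 ≤ t → t ≤ Real.pi →
      |q.eval (Real.cos t)| ≤ |q.eval (Real.cos τ)| * (1 + n * |t - τ|) ^ K) →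
    ∀ t, |t - τ| ≤ c / n → |q.eval (Real.cos τ)| / 2 ≤ |q.eval (Real.cos t)| := by
  refine ⟨1 / (2 * 5 ^ (K + 1) * ((K : ℝ) + 5) ^ 2), by positivity, ?_,
    fun n hn q hq τ hτ hτπ hmax t ht => half_abs_eval_cos_le hn hq hτ hτπ hmax ht⟩
  rw [div_le_one (by positivity)]
  have h5 : (1 : ℝ) ≤ 5 ^ (K + 1) := one_le_pow₀ (by norm_num)
  have hK : (1 : ℝ) ≤ ((K : ℝ) + 5) ^ 2 := one_le_pow₀ (by linarith [K.cast_nonneg (α := ℝ)])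
  nlinarith

end WeightedMaximum

/-! ### Nikolskii-type inequality -/

section RpowComparison

variable {a ν x y : ℝ}

lemma rpow_le_rpow_abs_mul_rpow {K : ℝ} (a : ℝ) (hx : 0 < x) (hy : 0 < y) (hxy : x ≤ K * y)
    (hyx : y ≤ K * x) : x ^ a ≤ K ^ |a| * y ^ a := by
  have hK : 0 < K := pos_of_mul_pos_left (hx.trans_le hxy) hy.le
  rcases le_total 0 a with ha | ha
  · rw [abs_of_nonneg ha, ← Real.mul_rpow hK.le hy.le]
    exact Real.rpow_le_rpow hx.le hxy ha
  · rw [abs_of_nonpos ha, Real.rpow_neg hK.le, ← Real.inv_rpow hK.le,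
      ← Real.mul_rpow (inv_nonneg.2 hK.le) hy.le]
    exact Real.rpow_le_rpow_of_nonpos (by positivity) ((inv_mul_le_iff₀ hK).2 hyx) ha

lemma add_one_div_le_mul_add_one_div (hν : 0 < ν) (hx : 0 ≤ x) (y : ℝ) :
    y + 1 / ν ≤ (1 + ν * |x - y|) * (x + 1 / ν) := by
  have hexpand : (1 + ν * |x - y|) * (x + 1 / ν) = x + 1 / ν + |x - y| + ν * |x - y| * x := by
    field_simp; ring
  have hdiff : y - x ≤ |x - y| := by rw [abs_sub_comm]; exact le_abs_self _
  have hrest : 0 ≤ ν * |x - y| * x := by positivity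
  linarith

lemma add_one_div_rpow_le (a : ℝ) (hν : 0 < ν) (hx : 0 ≤ x) (hy : 0 ≤ y) :
    (x + 1 / ν) ^ a ≤ (1 + ν * |x - y|) ^ |a| * (y + 1 / ν) ^ a := by
  refine rpow_le_rpow_abs_mul_rpow a (by positivity) (by positivity) ?_
    (add_one_div_le_mul_add_one_div hν hx y)
  rw [abs_sub_comm]
  exact add_one_div_le_mul_add_one_div hν hy x

/-- The power `s^a` restricted to `(0,1)`: the integrable singularity of the angular weight at an
endpoint, after rescaling. -/
def truncatedRpow (a : ℝ) : ℝ → ℝ := (Ioo (0 : ℝ) 1).indicator fun s => s ^ a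

lemma truncatedRpow_nonneg (a s : ℝ) : 0 ≤ truncatedRpow a s :=
  indicator_nonneg (fun _ hs => Real.rpow_nonneg hs.1.le a) s

lemma truncatedRpow_of_one_le (a : ℝ) {s : ℝ} (hs : 1 ≤ s) : truncatedRpow a s = 0 :=
  indicator_of_notMem (fun h => h.2.not_ge hs) _

lemma integrable_truncatedRpow (ha : -1 < a) : Integrable (truncatedRpow a) := by
  rw [truncatedRpow, integrable_indicator_iff measurableSet_Ioo]
  exact (intervalIntegrable_iff_integrableOn_Ioo_of_le zero_le_one).1
    (intervalIntegral.intervalIntegrable_rpow' ha)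

lemma div_one_add_rpow_le (a : ℝ) {s : ℝ} (hs : 0 < s) :
    (s / (1 + s)) ^ a ≤ 2 ^ |a| * (1 + truncatedRpow a s) := by
  have hpos : 0 < s / (1 + s) := by positivity
  rcases lt_or_ge s 1 with h1 | h1
  · have htrunc : truncatedRpow a s = s ^ a := indicator_of_mem (Set.mem_Ioo.2 ⟨hs, h1⟩) _
    have hle : s / (1 + s) ≤ s := div_le_self hs.le (by linarith)
    calc (s / (1 + s)) ^ a ≤ 2 ^ |a| * s ^ a :=
          rpow_le_rpow_abs_mul_rpow a hpos hs (by linarith)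
            (by rw [mul_div_assoc', le_div_iff₀ (by positivity)]; nlinarith)
      _ ≤ _ := by rw [htrunc]; gcongr; linarith
  · have hle : s / (1 + s) ≤ 1 := by rw [div_le_one (by positivity)]; linarith
    calc (s / (1 + s)) ^ a ≤ 2 ^ |a| * 1 ^ a :=
          rpow_le_rpow_abs_mul_rpow a hpos one_pos (by linarith)
            (by rw [mul_div_assoc', le_div_iff₀ (by positivity)]; linarith)
      _ = _ := by rw [Real.one_rpow, truncatedRpow_of_one_le a h1, add_zero]

lemma rpow_le_mul_one_add_truncatedRpow (a : ℝ) (hν : 0 < ν) (hx : 0 < x) (hy : 0 ≤ y) :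
    x ^ a ≤ (1 + ν * |x - y|) ^ |a| * (y + 1 / ν) ^ a *
      (2 ^ |a| * (1 + truncatedRpow a (ν * x))) := by
  have hfactor : x = (x + 1 / ν) * (ν * x / (1 + ν * x)) := by field_simp; ring
  calc x ^ a = (x + 1 / ν) ^ a * (ν * x / (1 + ν * x)) ^ a := by
        conv_lhs => rw [hfactor]
        exact Real.mul_rpow (by positivity) (by positivity)
    _ ≤ _ := by
        gcongr
        · exact add_one_div_rpow_le a hν hx.le hy
        · exact div_one_add_rpow_le a (by positivity)

end RpowComparison

section AngularWeight

variable {α β : ℝ}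

/-- The density of the Jacobi measure in the angular variable `t = arccos x`. -/
def angularWeight (α β t : ℝ) : ℝ := w α β (Real.cos t) * Real.sin t

lemma cos_image_Ioo : Real.cos '' Ioo 0 Real.pi = Ioo (-1 : ℝ) 1 := by
  refine Subset.antisymm ?_ fun x hx => ⟨Real.arccos x,
    ⟨Real.arccos_pos.2 hx.2, Real.arccos_lt_pi.2 hx.1⟩, Real.cos_arccos hx.1.le hx.2.le⟩
  rintro _ ⟨t, ht, rfl⟩
  exact ⟨Real.cos_pi ▸ Real.cos_lt_cos_of_nonneg_of_le_pi ht.1.le le_rfl ht.2,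
    Real.cos_zero ▸ Real.cos_lt_cos_of_nonneg_of_le_pi le_rfl ht.2.le ht.1⟩

lemma angularWeight_nonneg (α β : ℝ) {t : ℝ} (ht : t ∈ Ioo 0 Real.pi) : 0 ≤ angularWeight α β t :=
  mul_nonneg (w_pos α β (cos_image_Ioo ▸ mem_image_of_mem _ ht)).le (Real.sin_pos_of_mem_Ioo ht).le

lemma abs_deriv_cos_smul_mul_w (F : ℝ → ℝ) {t : ℝ} (ht : t ∈ Ioo 0 Real.pi) :
    |-Real.sin t| • (F (Real.cos t) * w α β (Real.cos t)) =
      F (Real.cos t) * angularWeight α β t := by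
  rw [abs_neg, abs_of_pos (Real.sin_pos_of_mem_Ioo ht), smul_eq_mul, angularWeight]
  ring

lemma integral_jacobiMeasure_eq_integral_angularWeight (α β : ℝ) (F : ℝ → ℝ) :
    ∫ x, F x ∂jacobiMeasure α β =
      ∫ t in Ioo 0 Real.pi, F (Real.cos t) * angularWeight α β t := by
  rw [integral_jacobiMeasure, ← cos_image_Ioo,
    integral_image_eq_integral_abs_deriv_smul measurableSet_Ioo
      (fun t _ => (Real.hasDerivAt_cos t).hasDerivWithinAt)
      (Real.injOn_cos.mono Ioo_subset_Icc_self)]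
  exact setIntegral_congr_fun measurableSet_Ioo fun t ht => abs_deriv_cos_smul_mul_w F ht

lemma integrableOn_mul_angularWeight {F : ℝ → ℝ} (hF : Integrable F (jacobiMeasure α β)) :
    IntegrableOn (fun t => F (Real.cos t) * angularWeight α β t) (Ioo 0 Real.pi) := by
  rw [integrable_jacobiMeasure_iff, ← cos_image_Ioo,
    integrableOn_image_iff_integrableOn_abs_deriv_smul measurableSet_Ioo
      (fun t _ => (Real.hasDerivAt_cos t).hasDerivWithinAt)
      (Real.injOn_cos.mono Ioo_subset_Icc_self)] at hF
  exact hF.congr_fun (fun t ht => abs_deriv_cos_smul_mul_w F ht) measurableSet_Ioo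

lemma sin_half_pos {t : ℝ} (ht : t ∈ Ioo 0 Real.pi) : 0 < Real.sin (t / 2) :=
  Real.sin_pos_of_pos_of_lt_pi (half_pos ht.1) (by linarith [ht.1, ht.2])

lemma le_pi_mul_sin_half {t : ℝ} (ht : t ∈ Ioo 0 Real.pi) : t ≤ Real.pi * Real.sin (t / 2) := by
  have hjordan := Real.mul_le_sin (x := t / 2) (by linarith [ht.1]) (by linarith [ht.2])
  rw [div_mul_div_comm, mul_comm 2 t, mul_div_mul_right _ _ two_ne_zero,
    div_le_iff₀ Real.pi_pos] at hjordan
  linarith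

lemma sin_half_le_pi_mul {t : ℝ} (ht : t ∈ Ioo 0 Real.pi) : Real.sin (t / 2) ≤ Real.pi * t := by
  have := Real.sin_lt (x := t / 2) (by linarith [ht.1])
  nlinarith [ht.1, Real.pi_gt_three]

lemma angularWeight_eq (α β : ℝ) {t : ℝ} (ht : t ∈ Ioo 0 Real.pi) :
    angularWeight α β t = 2 ^ (α + β + 1) * Real.sin (t / 2) ^ (2 * α + 1) *
      Real.sin ((Real.pi - t) / 2) ^ (2 * β + 1) := by
  have hS := sin_half_pos ht
  have hT := sin_half_pos (t := Real.pi - t) ⟨by linarith [ht.2], by linarith [ht.1]⟩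
  have hcos : Real.cos (t / 2) = Real.sin ((Real.pi - t) / 2) := by
    rw [← Real.sin_pi_div_two_sub, _root_.sub_div]
  have hsub : 1 - Real.cos t = 2 * Real.sin (t / 2) ^ 2 := by
    rw [Real.sin_sq_eq_half_sub, mul_div_cancel₀ _ two_ne_zero]; ring
  have hadd : 1 + Real.cos t = 2 * Real.sin ((Real.pi - t) / 2) ^ 2 := by
    rw [← hcos, Real.cos_sq, mul_div_cancel₀ _ two_ne_zero]; ring
  have hsin : Real.sin t = 2 * Real.sin (t / 2) * Real.sin ((Real.pi - t) / 2) := by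
    rw [← hcos, ← Real.sin_two_mul, mul_div_cancel₀ _ two_ne_zero]
  have hsq : ∀ {x : ℝ} (γ : ℝ), 0 < x → (2 * x ^ 2) ^ γ = 2 ^ γ * x ^ (2 * γ) := fun {x} γ hx => by
    rw [Real.mul_rpow zero_le_two (sq_nonneg x), Real.rpow_mul hx.le, Real.rpow_two]
  rw [angularWeight, w, hsub, hadd, hsin, hsq α hS, hsq β hT, Real.rpow_add_one two_ne_zero,
    Real.rpow_add two_pos, Real.rpow_add_one hS.ne', Real.rpow_add_one hT.ne']
  ring

lemma rpow_mul_rpow_le_of_comparable {a b c d C : ℝ} (γ δ : ℝ) (ha : 0 < a) (hb : 0 < b)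
    (hc : 0 < c) (hd : 0 < d) (hab : a ≤ C * b) (hba : b ≤ C * a) (hcd : c ≤ C * d)
    (hdc : d ≤ C * c) : a ^ γ * c ^ δ ≤ C ^ |γ| * C ^ |δ| * (b ^ γ * d ^ δ) := by
  have hC : 0 < C := pos_of_mul_pos_left (ha.trans_le hab) hb.le
  rw [mul_mul_mul_comm]
  exact mul_le_mul (rpow_le_rpow_abs_mul_rpow γ ha hb hab hba)
    (rpow_le_rpow_abs_mul_rpow δ hc hd hcd hdc) (by positivity) (by positivity)

lemma exists_angularWeight_comparable (α β : ℝ) : ∃ c, 0 < c ∧ ∀ t ∈ Ioo 0 Real.pi,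
    angularWeight α β t ≤ c * (t ^ (2 * α + 1) * (Real.pi - t) ^ (2 * β + 1)) ∧
    t ^ (2 * α + 1) * (Real.pi - t) ^ (2 * β + 1) ≤ c * angularWeight α β t := by
  have := Real.pi_pos
  set P := Real.pi ^ |2 * α + 1| * Real.pi ^ |2 * β + 1|
  have : 0 < P := by positivity
  set D := (2 : ℝ) ^ (α + β + 1)
  have : 0 < D := by positivity
  refine ⟨D * P + P / D, by positivity, fun t ht => ?_⟩
  have ht' : Real.pi - t ∈ Ioo 0 Real.pi := ⟨by linarith [ht.2], by linarith [ht.1]⟩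
  have hS := sin_half_pos ht
  have hT := sin_half_pos ht'
  have hupper := rpow_mul_rpow_le_of_comparable (2 * α + 1) (2 * β + 1) hS ht.1 hT ht'.1
    (sin_half_le_pi_mul ht) (le_pi_mul_sin_half ht) (sin_half_le_pi_mul ht')
    (le_pi_mul_sin_half ht')
  have hlower := rpow_mul_rpow_le_of_comparable (2 * α + 1) (2 * β + 1) ht.1 hS ht'.1 hT
    (le_pi_mul_sin_half ht) (sin_half_le_pi_mul ht) (le_pi_mul_sin_half ht')
    (sin_half_le_pi_mul ht')
  have := ht.1
  have := ht'.1
  rw [angularWeight_eq α β ht, mul_assoc]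
  constructor
  · calc _ ≤ D * (P * (t ^ (2 * α + 1) * (Real.pi - t) ^ (2 * β + 1))) := by gcongr
      _ ≤ _ := by rw [← mul_assoc]; gcongr; exact le_add_of_nonneg_right (by positivity)
  · calc _ ≤ P * (Real.sin (t / 2) ^ (2 * α + 1) *
            Real.sin ((Real.pi - t) / 2) ^ (2 * β + 1)) := hlower
      _ = P / D * (D * (Real.sin (t / 2) ^ (2 * α + 1) *
            Real.sin ((Real.pi - t) / 2) ^ (2 * β + 1))) := by field_simp
      _ ≤ _ := by gcongr; exact le_add_of_nonneg_left (by positivity)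

lemma one_add_mul_abs_le_arccosWeight_cos {ν : ℝ} (θ : ℝ) {t : ℝ} (ht : t ∈ Icc 0 Real.pi) :
    1 + ν * |t - θ| ≤ arccosWeight ν θ (Real.cos t) := by
  rw [arccosWeight, Real.arccos_cos ht.1 ht.2]
  gcongr
  refine Real.le_sqrt_of_sq_le ?_
  rw [mul_pow, mul_pow, sq_abs]
  linarith

lemma arccosWeight_cos_le {ν : ℝ} (hν : 0 ≤ ν) (θ : ℝ) {t : ℝ} (ht : t ∈ Icc 0 Real.pi) :
    arccosWeight ν θ (Real.cos t) ≤ 2 * (1 + ν * |t - θ|) := by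
  have hz : 0 ≤ ν * |t - θ| := by positivity
  have hsqrt : √(1 + (ν * (t - θ)) ^ 2) ≤ 1 + ν * |t - θ| := by
    rw [Real.sqrt_le_left (by positivity), ← sq_abs (ν * (t - θ)), abs_mul, abs_of_nonneg hν]
    nlinarith
  rw [arccosWeight, Real.arccos_cos ht.1 ht.2]
  linarith

end AngularWeight

section LocalWeight

variable {a b ν θ t : ℝ}

/-- The angular weight `t^a (π-t)^b` averaged at scale `1/ν` around `θ`, up to constants. -/
def localWeight (a b ν θ : ℝ) : ℝ := (θ + 1 / ν) ^ a * (Real.pi - θ + 1 / ν) ^ b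

lemma localWeight_pos (a b : ℝ) (hν : 0 < ν) (hθ : θ ∈ Icc 0 Real.pi) :
    0 < localWeight a b ν θ := by
  have hθ0 := hθ.1
  have hθπ := sub_nonneg.2 hθ.2
  unfold localWeight
  positivity

lemma rpow_abs_mul_rpow_abs_le_pow {A : ℕ} (hA : |a| + |b| ≤ A) {d : ℝ} (hd : 1 ≤ d) :
    d ^ |a| * d ^ |b| ≤ d ^ A := by
  rw [← Real.rpow_add (zero_lt_one.trans_le hd), ← Real.rpow_natCast]
  exact Real.rpow_le_rpow_of_exponent_le hd hA

lemma localWeight_le_pow_mul {A : ℕ} (hA : |a| + |b| ≤ A) (hν : 0 < ν) (hθ : θ ∈ Icc 0 Real.pi)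
    (ht : t ∈ Icc 0 Real.pi) :
    localWeight a b ν θ ≤ (1 + ν * |t - θ|) ^ A * localWeight a b ν t := by
  have hθπ := sub_nonneg.2 hθ.2
  have htπ := sub_nonneg.2 ht.2
  have hleft := add_one_div_rpow_le a hν hθ.1 ht.1
  have hright := add_one_div_rpow_le b hν hθπ htπ
  rw [_root_.sub_sub_sub_cancel_left] at hright
  rw [abs_sub_comm] at hleft
  have ht0 := ht.1
  calc localWeight a b ν θ ≤ _ := mul_le_mul hleft hright (by positivity) (by positivity)
    _ = ((1 + ν * |t - θ|) ^ |a| * (1 + ν * |t - θ|) ^ |b|) * localWeight a b ν t := by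
        rw [localWeight, mul_mul_mul_comm]
    _ ≤ _ := by
        gcongr
        · exact (localWeight_pos a b hν ht).le
        · exact rpow_abs_mul_rpow_abs_le_pow hA (le_add_of_nonneg_right (by positivity))

/-- An integrable function of mass `O(1/ν)` dominating the angular weight `t^a (π-t)^b`, normalized
by its local average and localized near `θ`. -/
def angularMajorant (a b ν θ t : ℝ) : ℝ :=
  (1 + (ν * (t + -θ)) ^ 2)⁻¹ + (truncatedRpow a (ν * t) + truncatedRpow b (ν * (Real.pi - t)))

lemma angularMajorant_nonneg (a b ν θ t : ℝ) : 0 ≤ angularMajorant a b ν θ t :=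
  add_nonneg (by positivity) (add_nonneg (truncatedRpow_nonneg _ _) (truncatedRpow_nonneg _ _))

lemma integrable_truncatedRpow_mul (ha : -1 < a) (hν : 0 < ν) :
    Integrable fun t => truncatedRpow a (ν * t) :=
  (integrable_truncatedRpow ha).comp_mul_left' hν.ne'

lemma integrable_angularMajorant (ha : -1 < a) (hb : -1 < b) (hν : 0 < ν) (θ : ℝ) :
    Integrable (angularMajorant a b ν θ) :=
  (integrable_inv_one_add_mul_add_sq hν _).add ((integrable_truncatedRpow_mul ha hν).add
    ((integrable_truncatedRpow_mul hb hν).comp_sub_left Real.pi))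

lemma integral_truncatedRpow_mul (a : ℝ) (hν : 0 < ν) :
    ∫ t, truncatedRpow a (ν * t) = (∫ s, truncatedRpow a s) / ν := by
  rw [Measure.integral_comp_mul_left, abs_of_pos (by positivity), smul_eq_mul, inv_mul_eq_div]

lemma integral_angularMajorant (ha : -1 < a) (hb : -1 < b) (hν : 0 < ν) (θ : ℝ) :
    ∫ t, angularMajorant a b ν θ t =
      (Real.pi + ((∫ s, truncatedRpow a s) + ∫ s, truncatedRpow b s)) / ν := by
  have hleft := integrable_truncatedRpow_mul ha hν
  have hright := (integrable_truncatedRpow_mul hb hν).comp_sub_left Real.pi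
  have hreflect : ∫ t, truncatedRpow b (ν * (Real.pi - t)) = (∫ s, truncatedRpow b s) / ν := by
    rw [integral_sub_left_eq_self (fun t : ℝ => truncatedRpow b (ν * t)) volume Real.pi,
      integral_truncatedRpow_mul b hν]
  have hsum : Integrable fun t =>
      truncatedRpow a (ν * t) + truncatedRpow b (ν * (Real.pi - t)) := hleft.add hright
  unfold angularMajorant
  rw [integral_add (integrable_inv_one_add_mul_add_sq hν _) hsum,
    integral_add hleft hright, integral_inv_one_add_mul_add_sq hν, integral_truncatedRpow_mul a hν,
    hreflect]
  ring

lemma truncatedRpow_mul_truncatedRpow_eq_zero (a b : ℝ) (hν : 1 ≤ ν) (t : ℝ) :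
    truncatedRpow a (ν * t) * truncatedRpow b (ν * (Real.pi - t)) = 0 := by
  rcases le_or_gt 1 (ν * t) with h | h
  · rw [truncatedRpow_of_one_le a h, zero_mul]
  · rw [truncatedRpow_of_one_le b (by nlinarith [Real.pi_gt_three]), mul_zero]

lemma one_add_div_sq_le_angularMajorant (a b θ t : ℝ) (hν : 0 ≤ ν) :
    (1 + truncatedRpow a (ν * t) + truncatedRpow b (ν * (Real.pi - t))) /
      (1 + ν * |t - θ|) ^ 2 ≤ angularMajorant a b ν θ t := by
  have hd : 0 ≤ ν * |t - θ| := by positivity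
  have hd2 : 1 ≤ (1 + ν * |t - θ|) ^ 2 := one_le_pow₀ (by linarith)
  have hsq : 1 + (ν * (t + -θ)) ^ 2 ≤ (1 + ν * |t - θ|) ^ 2 := by
    rw [← sub_eq_add_neg, ← sq_abs, abs_mul, abs_of_nonneg hν]
    nlinarith
  rw [add_div, add_div, add_assoc, one_div]
  exact add_le_add (inv_anti₀ (by positivity) hsq) (add_le_add
    (div_le_self (truncatedRpow_nonneg _ _) hd2) (div_le_self (truncatedRpow_nonneg _ _) hd2))

lemma rpow_mul_rpow_div_pow_le {A : ℕ} (hA : |a| + |b| ≤ A) (hν : 1 ≤ ν)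
    (ht : t ∈ Ioo 0 Real.pi) (hθ : θ ∈ Icc 0 Real.pi) :
    t ^ a * (Real.pi - t) ^ b / (1 + ν * |t - θ|) ^ (A + 2) ≤
      2 ^ |a| * 2 ^ |b| * localWeight a b ν θ * angularMajorant a b ν θ t := by
  have hν0 : 0 < ν := zero_lt_one.trans_le hν
  have hleft := rpow_le_mul_one_add_truncatedRpow a hν0 ht.1 hθ.1
  have hright := rpow_le_mul_one_add_truncatedRpow b hν0 (sub_pos.2 ht.2) (sub_nonneg.2 hθ.2)
  rw [_root_.sub_sub_sub_cancel_left, abs_sub_comm] at hright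
  have hmaj := one_add_div_sq_le_angularMajorant a b θ t hν0.le
  have hdisjoint := truncatedRpow_mul_truncatedRpow_eq_zero a b hν t
  have hnn := truncatedRpow_nonneg a (ν * t)
  have hnn' := truncatedRpow_nonneg b (ν * (Real.pi - t))
  have hL := localWeight_pos a b hν0 hθ
  set d := 1 + ν * |t - θ|
  have hd : 1 ≤ d := le_add_of_nonneg_right (by positivity)
  set u := truncatedRpow a (ν * t)
  set v := truncatedRpow b (ν * (Real.pi - t))
  have hθ0 := hθ.1
  have := sub_nonneg.2 hθ.2
  have htπ := sub_pos.2 ht.2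
  calc t ^ a * (Real.pi - t) ^ b / d ^ (A + 2)
      ≤ (d ^ |a| * (θ + 1 / ν) ^ a * (2 ^ |a| * (1 + u))) *
        (d ^ |b| * (Real.pi - θ + 1 / ν) ^ b * (2 ^ |b| * (1 + v))) / d ^ (A + 2) := by gcongr
    _ = (d ^ |a| * d ^ |b|) *
        (2 ^ |a| * 2 ^ |b| * localWeight a b ν θ * (1 + u + v)) / d ^ (A + 2) := by
        rw [localWeight]
        linear_combination (d ^ |a| * d ^ |b| * (2 ^ |a| * 2 ^ |b| *
          ((θ + 1 / ν) ^ a * (Real.pi - θ + 1 / ν) ^ b)) / d ^ (A + 2)) * hdisjoint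
    _ ≤ d ^ A * (2 ^ |a| * 2 ^ |b| * localWeight a b ν θ * (1 + u + v)) / d ^ (A + 2) := by
        gcongr
        exact rpow_abs_mul_rpow_abs_le_pow hA hd
    _ = 2 ^ |a| * 2 ^ |b| * localWeight a b ν θ * ((1 + u + v) / d ^ 2) := by
        rw [pow_add]; field_simp
    _ ≤ _ := by gcongr

end LocalWeight

section UpperBound

variable {α β : ℝ}

lemma one_div_arccosWeight_mul_angularWeight_le {a b ν θ t c : ℝ} {A : ℕ} (hA : |a| + |b| ≤ A)
    (hν : 1 ≤ ν) (hθ : θ ∈ Icc 0 Real.pi) (ht : t ∈ Ioo 0 Real.pi) (hc : 0 ≤ c)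
    (hw : angularWeight α β t ≤ c * (t ^ a * (Real.pi - t) ^ b)) :
    1 / arccosWeight ν θ (Real.cos t) ^ (A + 2) * angularWeight α β t ≤
      c * (2 ^ |a| * 2 ^ |b| * localWeight a b ν θ * angularMajorant a b ν θ t) := by
  have := angularWeight_nonneg α β ht
  have : 0 < 1 + ν * |t - θ| := by positivity
  calc _ ≤ 1 / (1 + ν * |t - θ|) ^ (A + 2) * (c * (t ^ a * (Real.pi - t) ^ b)) := by
        gcongr
        exact one_add_mul_abs_le_arccosWeight_cos θ (Ioo_subset_Icc_self ht)
    _ = c * (t ^ a * (Real.pi - t) ^ b / (1 + ν * |t - θ|) ^ (A + 2)) := by ring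
    _ ≤ _ := by gcongr; exact rpow_mul_rpow_div_pow_le hA hν ht hθ

lemma exists_integral_one_div_arccosWeight_le (hα : -1 < α) (hβ : -1 < β) {A : ℕ}
    (hA : |2 * α + 1| + |2 * β + 1| ≤ A) : ∃ C, 0 < C ∧ ∀ ν, 1 ≤ ν → ∀ θ ∈ Icc 0 Real.pi,
    ∫ y, 1 / arccosWeight ν θ y ^ (A + 2) ∂jacobiMeasure α β ≤
      C * localWeight (2 * α + 1) (2 * β + 1) ν θ / ν := by
  set a := 2 * α + 1
  set b := 2 * β + 1
  have ha : -1 < a := by linarith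
  have hb : -1 < b := by linarith
  obtain ⟨c, hc, hw⟩ := exists_angularWeight_comparable α β
  have hIa : 0 ≤ ∫ s, truncatedRpow a s := integral_nonneg (truncatedRpow_nonneg a)
  have hIb : 0 ≤ ∫ s, truncatedRpow b s := integral_nonneg (truncatedRpow_nonneg b)
  refine ⟨c * (2 ^ |a| * 2 ^ |b|) *
    (Real.pi + ((∫ s, truncatedRpow a s) + ∫ s, truncatedRpow b s)), by positivity [Real.pi_pos],
    fun ν hν θ hθ => ?_⟩
  have hν0 : 0 < ν := zero_lt_one.trans_le hν
  have hL := localWeight_pos a b hν0 hθ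
  have hG : Integrable fun t =>
      c * (2 ^ |a| * 2 ^ |b| * localWeight a b ν θ * angularMajorant a b ν θ t) :=
    ((integrable_angularMajorant ha hb hν0 θ).const_mul _).const_mul _
  rw [integral_jacobiMeasure_eq_integral_angularWeight]
  calc _ ≤ ∫ t in Ioo 0 Real.pi,
        c * (2 ^ |a| * 2 ^ |b| * localWeight a b ν θ * angularMajorant a b ν θ t) := by
        refine integral_mono_of_nonneg ?_ hG.integrableOn ?_ <;>
          filter_upwards [ae_restrict_mem measurableSet_Ioo] with t ht
        · exact mul_nonneg (by positivity [one_lt_arccosWeight ν θ (Real.cos t)])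
            (angularWeight_nonneg α β ht)
        · exact one_div_arccosWeight_mul_angularWeight_le hA hν hθ ht hc.le (hw t ht).1
    _ ≤ ∫ t, c * (2 ^ |a| * 2 ^ |b| * localWeight a b ν θ * angularMajorant a b ν θ t) :=
        setIntegral_le_integral hG (ae_of_all _ fun t =>
          mul_nonneg hc.le (mul_nonneg (by positivity) (angularMajorant_nonneg a b ν θ t)))
    _ = _ := by
        rw [integral_const_mul, integral_const_mul, integral_angularMajorant ha hb hν0]
        ring

end UpperBound

section LowerBound

variable {α β a b c ν τ θ t : ℝ}

lemma exists_Icc_near {c : ℝ} (hc : 0 < c) (hc1 : c ≤ 1) (hν : 1 ≤ ν) (hτ : τ ∈ Icc 0 Real.pi) :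
    ∃ x y, y - x = c / (2 * ν) ∧ ∀ t ∈ Icc x y, |t - τ| ≤ c / ν ∧
      τ + 1 / ν ≤ 10 / c * t ∧ Real.pi - τ + 1 / ν ≤ 10 / c * (Real.pi - t) := by
  have hscale : c / ν = c * (1 / ν) := by ring
  have hhalf : c / (2 * ν) = c / 2 * (1 / ν) := by ring
  have hdiv : ∀ u v : ℝ, u ≤ 10 / c * v ↔ c * u ≤ 10 * v := fun u v => by
    rw [div_mul_eq_mul_div, le_div_iff₀ hc, mul_comm u]
  simp only [hdiv, hscale, hhalf]
  have hm1 : 1 / ν ≤ 1 := by rw [div_le_one (by linarith)]; exact hν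
  have hm0 : 0 < 1 / ν := by positivity
  set m := 1 / ν
  have hcm : c * m ≤ m := mul_le_of_le_one_left hm0.le hc1
  have hcm0 : 0 < c * m := by positivity
  have hcτ : c * τ ≤ τ := mul_le_of_le_one_left hτ.1 hc1
  have hcτ' : c * (Real.pi - τ) ≤ Real.pi - τ := mul_le_of_le_one_left (sub_nonneg.2 hτ.2) hc1
  have : c * m ≤ 1 := hcm.trans hm1
  have := Real.pi_gt_three
  rcases le_total τ (Real.pi / 2) with h | h
  · refine ⟨τ + c / 2 * m, τ + c * m, by ring, fun t ht => ⟨?_, ?_, ?_⟩⟩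
    · exact abs_le.2 ⟨by linarith [ht.1], by linarith [ht.2]⟩
    · linarith [ht.1, hτ.1]
    · linarith [ht.2]
  · refine ⟨τ - c * m, τ - c / 2 * m, by ring, fun t ht => ⟨?_, ?_, ?_⟩⟩
    · exact abs_le.2 ⟨by linarith [ht.1], by linarith [ht.2]⟩
    · linarith [ht.1]
    · linarith [ht.2, hτ.2]

lemma localWeight_le_rpow_mul_rpow {K : ℝ} (hK : 1 ≤ K) (hν : 0 < ν) (hτ : τ ∈ Icc 0 Real.pi)
    (ht : t ∈ Ioo 0 Real.pi) (htτ : |t - τ| ≤ 1 / ν) (hleft : τ + 1 / ν ≤ K * t)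
    (hright : Real.pi - τ + 1 / ν ≤ K * (Real.pi - t)) :
    localWeight a b ν τ ≤ K ^ |a| * K ^ |b| * (t ^ a * (Real.pi - t) ^ b) := by
  have hdist := abs_le.1 htτ
  have hτ0 := hτ.1
  have hτπ := sub_nonneg.2 hτ.2
  have htπ := sub_pos.2 ht.2
  have ht0 := ht.1
  have ha := rpow_le_rpow_abs_mul_rpow a (by positivity : 0 < τ + 1 / ν) ht0 hleft
    ((by linarith : t ≤ τ + 1 / ν).trans (le_mul_of_one_le_left (by positivity) hK))
  have hb := rpow_le_rpow_abs_mul_rpow b (by positivity : 0 < Real.pi - τ + 1 / ν) htπ hright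
    ((by linarith : Real.pi - t ≤ Real.pi - τ + 1 / ν).trans
      (le_mul_of_one_le_left (by positivity) hK))
  calc localWeight a b ν τ ≤ _ := mul_le_mul ha hb (by positivity) (by positivity)
    _ = _ := mul_mul_mul_comm _ _ _ _

lemma arccosWeight_cos_le_of_near (hν : 0 < ν) (ht : t ∈ Icc 0 Real.pi) (htτ : |t - τ| ≤ 1 / ν) :
    arccosWeight ν θ (Real.cos t) ≤ 4 * (1 + ν * |τ - θ|) := by
  have htri : ν * |t - θ| ≤ 1 + ν * |τ - θ| := by
    calc ν * |t - θ| ≤ ν * (1 / ν + |τ - θ|) := by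
          gcongr
          exact (abs_sub_le _ _ _).trans (by gcongr)
      _ = _ := by field_simp
  have hτθ : 0 ≤ ν * |τ - θ| := by positivity
  linarith [arccosWeight_cos_le hν.le θ ht]

lemma sq_div_mul_localWeight_le {K : ℝ} {q : ℝ[X]} (M : ℕ) (hK : 1 ≤ K) (hc : 0 < c)
    (hν : 0 < ν) (hτ : τ ∈ Icc 0 Real.pi) (ht : t ∈ Ioo 0 Real.pi) (htτ : |t - τ| ≤ 1 / ν)
    (hleft : τ + 1 / ν ≤ K * t) (hright : Real.pi - τ + 1 / ν ≤ K * (Real.pi - t))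
    (hw : t ^ a * (Real.pi - t) ^ b ≤ c * angularWeight α β t)
    (hq : |q.eval (Real.cos τ)| / 2 ≤ |q.eval (Real.cos t)|) :
    q.eval (Real.cos τ) ^ 2 / 4 / (4 * (1 + ν * |τ - θ|)) ^ M *
        (localWeight a b ν τ / (K ^ |a| * K ^ |b| * c)) ≤
      q.eval (Real.cos t) ^ 2 / arccosWeight ν θ (Real.cos t) ^ M * angularWeight α β t := by
  have hweight : localWeight a b ν τ / (K ^ |a| * K ^ |b| * c) ≤ angularWeight α β t := by
    rw [div_le_iff₀' (by positivity), mul_assoc]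
    exact (localWeight_le_rpow_mul_rpow hK hν hτ ht htτ hleft hright).trans
      (mul_le_mul_of_nonneg_left hw (by positivity))
  have hhalf : q.eval (Real.cos τ) ^ 2 / 4 ≤ q.eval (Real.cos t) ^ 2 := by
    rw [← sq_abs, ← sq_abs (q.eval (Real.cos t))]
    nlinarith [hq, abs_nonneg (q.eval (Real.cos τ))]
  have := one_lt_arccosWeight ν θ (Real.cos t)
  have := localWeight_pos a b hν hτ
  gcongr
  exact arccosWeight_cos_le_of_near hν (Ioo_subset_Icc_self ht) htτ

lemma mem_Ioo_zero_pi_of_le_mul {K : ℝ} (hK : 0 ≤ K) (hν : 0 < ν) (hτ : τ ∈ Icc 0 Real.pi)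
    (hleft : τ + 1 / ν ≤ K * t) (hright : Real.pi - τ + 1 / ν ≤ K * (Real.pi - t)) :
    t ∈ Ioo 0 Real.pi := by
  have hτ0 := hτ.1
  have hτπ := sub_nonneg.2 hτ.2
  exact ⟨pos_of_mul_pos_right (lt_of_lt_of_le (by positivity) hleft) hK,
    sub_pos.1 (pos_of_mul_pos_right (lt_of_lt_of_le (by positivity) hright) hK)⟩

lemma mul_sub_le_integral_jacobiMeasure {F : ℝ → ℝ} {x y m : ℝ}
    (hF : Integrable F (jacobiMeasure α β)) (hF0 : ∀ z, 0 ≤ F z) (hxy : x ≤ y)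
    (hsub : Icc x y ⊆ Ioo 0 Real.pi)
    (hm : ∀ t ∈ Icc x y, m ≤ F (Real.cos t) * angularWeight α β t) :
    m * (y - x) ≤ ∫ z, F z ∂jacobiMeasure α β := by
  have hFw := integrableOn_mul_angularWeight hF
  rw [integral_jacobiMeasure_eq_integral_angularWeight, ← Real.volume_real_Icc_of_le hxy]
  refine (setIntegral_ge_of_const_le_real measurableSet_Icc (by simp) hm
    (hFw.mono_set hsub)).trans (setIntegral_mono_set hFw ?_ hsub.eventuallyLE)
  filter_upwards [ae_restrict_mem measurableSet_Ioo] with t ht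
  exact mul_nonneg (hF0 _) (angularWeight_nonneg α β ht)

lemma exists_sq_mul_localWeight_le_integral (hα : -1 < α) (hβ : -1 < β) (hc : 0 < c)
    (hc1 : c ≤ 1) (M : ℕ) : ∃ κ, 0 < κ ∧ ∀ ν, 1 ≤ ν → ∀ τ ∈ Icc 0 Real.pi, ∀ (θ : ℝ) (q : ℝ[X]),
    (∀ t, |t - τ| ≤ c / ν → |q.eval (Real.cos τ)| / 2 ≤ |q.eval (Real.cos t)|) →
    q.eval (Real.cos τ) ^ 2 / (1 + ν * |τ - θ|) ^ M *
        (localWeight (2 * α + 1) (2 * β + 1) ν τ / ν) ≤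
      κ * ∫ y, q.eval y ^ 2 / arccosWeight ν θ y ^ M ∂jacobiMeasure α β := by
  obtain ⟨c', hc', hw⟩ := exists_angularWeight_comparable α β
  set a := 2 * α + 1
  set b := 2 * β + 1
  set D := (10 / c) ^ |a| * (10 / c) ^ |b|
  have hD : 0 < D := by positivity
  refine ⟨4 * 4 ^ M * (D * c') * (2 / c), by positivity, fun ν hν τ hτ θ q hq => ?_⟩
  have hν0 : 0 < ν := zero_lt_one.trans_le hν
  obtain ⟨x, y, hlen, hnear⟩ := exists_Icc_near hc hc1 hν hτ
  set L := localWeight a b ν τ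
  have hL : 0 < L := localWeight_pos a b hν0 hτ
  set B := 1 + ν * |τ - θ|
  have hB : 0 < B := by positivity
  have hmem : Icc x y ⊆ Ioo 0 Real.pi := fun t ht => by
    obtain ⟨-, hleft, hright⟩ := hnear t ht
    exact mem_Ioo_zero_pi_of_le_mul (by positivity) hν0 hτ hleft hright
  let F : ℝ → ℝ := fun y => q.eval y ^ 2 / arccosWeight ν θ y ^ M
  have hF : Integrable F (jacobiMeasure α β) := integrable_jacobiMeasure_of_continuousOn hα hβ
    (continuous_div_arccosWeight_pow ν θ M (by fun_prop)).continuousOn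
  have hF0 : ∀ z, 0 ≤ F z := fun z => by
    positivity [one_lt_arccosWeight ν θ z]
  have hpoint : ∀ t ∈ Icc x y, q.eval (Real.cos τ) ^ 2 / 4 / (4 * B) ^ M * (L / (D * c')) ≤
      F (Real.cos t) * angularWeight α β t := fun t ht => by
    obtain ⟨htτ, hleft, hright⟩ := hnear t ht
    exact sq_div_mul_localWeight_le M ((one_le_div hc).2 (by linarith)) hc' hν0 hτ (hmem ht)
      (htτ.trans (by gcongr)) hleft hright (hw t (hmem ht)).2 (hq t htτ)
  have hlower : q.eval (Real.cos τ) ^ 2 / 4 / (4 * B) ^ M * (L / (D * c')) * (c / (2 * ν)) ≤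
      ∫ y, F y ∂jacobiMeasure α β := by
    have hxy : 0 ≤ y - x := by rw [hlen]; positivity
    rw [← hlen]
    exact mul_sub_le_integral_jacobiMeasure hF hF0 (sub_nonneg.1 hxy) hmem hpoint
  calc _ = 4 * 4 ^ M * (D * c') * (2 / c) *
        (q.eval (Real.cos τ) ^ 2 / 4 / (4 * B) ^ M * (L / (D * c')) * (c / (2 * ν))) := by
        rw [mul_pow]; field_simp
    _ ≤ _ := by gcongr

end LowerBound

section Nikolskii

variable {α β : ℝ}

lemma exists_weighted_max {f : ℝ → ℝ} (hf : ContinuousOn f (Icc 0 Real.pi)) {ν θ : ℝ}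
    (hν : 0 ≤ ν) (hθ : θ ∈ Icc 0 Real.pi) (K : ℕ) : ∃ τ ∈ Icc 0 Real.pi,
    |f θ| * (1 + ν * |τ - θ|) ^ K ≤ |f τ| ∧
    ∀ t ∈ Icc 0 Real.pi, |f t| ≤ |f τ| * (1 + ν * |t - τ|) ^ K := by
  have hB : ∀ t : ℝ, 0 < 1 + ν * |t - θ| := fun t => by positivity
  obtain ⟨τ, hτ, hmax⟩ := isCompact_Icc.exists_isMaxOn ⟨θ, hθ⟩
    (f := fun t => |f t| / (1 + ν * |t - θ|) ^ K)
    (hf.abs.div (by fun_prop) fun t _ => (pow_pos (hB t) K).ne')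
  have hquot : ∀ t ∈ Icc 0 Real.pi,
      |f t| / (1 + ν * |t - θ|) ^ K ≤ |f τ| / (1 + ν * |τ - θ|) ^ K := fun t ht => hmax ht
  refine ⟨τ, hτ, ?_, fun t ht => ?_⟩
  · have := hquot θ hθ
    rwa [sub_self, abs_zero, mul_zero, add_zero, one_pow, div_one,
      le_div_iff₀ (pow_pos (hB τ) K)] at this
  · have htri : 1 + ν * |t - θ| ≤ (1 + ν * |t - τ|) * (1 + ν * |τ - θ|) := by
      have hsub : ν * |t - θ| ≤ ν * (|t - τ| + |τ - θ|) := by gcongr; exact abs_sub_le _ _ _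
      have hprod : 0 ≤ (ν * |t - τ|) * (ν * |τ - θ|) := by positivity
      linarith
    have := hB τ
    calc |f t| ≤ |f τ| / (1 + ν * |τ - θ|) ^ K * (1 + ν * |t - θ|) ^ K :=
          (div_le_iff₀ (pow_pos (hB t) K)).1 (hquot t ht)
      _ ≤ |f τ| / (1 + ν * |τ - θ|) ^ K * ((1 + ν * |t - τ|) * (1 + ν * |τ - θ|)) ^ K := by
          gcongr
      _ = _ := by rw [mul_pow]; field_simp

lemma exists_sq_eval_cos_mul_integral_le (hα : -1 < α) (hβ : -1 < β) {A : ℕ}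
    (hA : |2 * α + 1| + |2 * β + 1| ≤ A) : ∃ C, 0 < C ∧ ∀ n : ℕ, 1 ≤ n → ∀ θ ∈ Icc 0 Real.pi,
    ∀ q : ℝ[X], q.natDegree ≤ 2 * n →
    q.eval (Real.cos θ) ^ 2 * ∫ y, 1 / arccosWeight n θ y ^ (A + 2) ∂jacobiMeasure α β ≤
      C * ∫ y, q.eval y ^ 2 / arccosWeight n θ y ^ (A + 2) ∂jacobiMeasure α β := by
  obtain ⟨C, hC, hupper⟩ := exists_integral_one_div_arccosWeight_le hα hβ hA
  obtain ⟨c, hc, hc1, hhalf⟩ := exists_half_abs_eval_cos_le (A + 1)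
  obtain ⟨κ, hκ, hlower⟩ := exists_sq_mul_localWeight_le_integral hα hβ hc hc1 (A + 2)
  refine ⟨C * κ, by positivity, fun n hn θ hθ q hq => ?_⟩
  have hn1 : (1 : ℝ) ≤ n := mod_cast hn
  have hn0 : (0 : ℝ) < n := zero_lt_one.trans_le hn1
  obtain ⟨τ, hτ, hθτ, hgrowth⟩ := exists_weighted_max (f := fun t => q.eval (Real.cos t))
    (by fun_prop) n.cast_nonneg hθ (A + 1)
  have hlow := hlower n hn1 τ hτ θ q
    (hhalf n hn q hq τ hτ.1 hτ.2 fun t ht htπ => hgrowth t ⟨ht, htπ⟩)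
  have hlocal := localWeight_le_pow_mul hA hn0 hθ hτ
  have hL := localWeight_pos (2 * α + 1) (2 * β + 1) hn0 hτ
  set L := localWeight (2 * α + 1) (2 * β + 1) n τ
  set B := 1 + (n : ℝ) * |τ - θ|
  have hB : 0 < B := by positivity
  have hsq : q.eval (Real.cos θ) ^ 2 * (B ^ A * B ^ (A + 2)) ≤ q.eval (Real.cos τ) ^ 2 := by
    calc _ = (|q.eval (Real.cos θ)| * B ^ (A + 1)) ^ 2 := by rw [mul_pow, sq_abs]; ring
      _ ≤ |q.eval (Real.cos τ)| ^ 2 := by gcongr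
      _ = _ := sq_abs _
  calc _ ≤ q.eval (Real.cos θ) ^ 2 * (C * (B ^ A * L) / n) := by
        gcongr
        exact (hupper n hn1 θ hθ).trans (by gcongr)
    _ = C * (q.eval (Real.cos θ) ^ 2 * (B ^ A * B ^ (A + 2)) / B ^ (A + 2) * (L / n)) := by
        field_simp
    _ ≤ C * (q.eval (Real.cos τ) ^ 2 / B ^ (A + 2) * (L / n)) := by gcongr
    _ ≤ _ := by rw [mul_assoc]; gcongr

end Nikolskii

/-! ### Uniform boundedness of the de la Vallée Poussin operator -/

section SchurTest

variable {X Y : Type*} [MeasurableSpace X] [MeasurableSpace Y] {ν : Measure X} {μ : Measure Y}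

/-- Schur's test. -/
lemma integral_abs_integral_mul_rpow_le [SFinite ν] [SFinite μ] {k : X → Y → ℝ} {g : Y → ℝ}
    {p C D : ℝ} (hp : 1 ≤ p) (hC : 0 ≤ C) (hk : ∀ᵐ x ∂ν, Integrable (k x) μ)
    (hkg : ∀ᵐ x ∂ν, Integrable (fun y => k x y * g y) μ)
    (hkgp : Integrable (Function.uncurry fun x y => |k x y| * |g y| ^ p) (ν.prod μ))
    (hgp : Integrable (fun y => |g y| ^ p) μ) (hrow : ∀ᵐ x ∂ν, ∫ y, |k x y| ∂μ ≤ C)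
    (hcol : ∀ᵐ y ∂μ, ∫ x, |k x y| ∂ν ≤ D) :
    ∫ x, |∫ y, k x y * g y ∂μ| ^ p ∂ν ≤ C ^ (p - 1) * D * ∫ y, |g y| ^ p ∂μ := by
  calc ∫ x, |∫ y, k x y * g y ∂μ| ^ p ∂ν
      ≤ ∫ x, C ^ (p - 1) * ∫ y, |k x y| * |g y| ^ p ∂μ ∂ν := by
        refine integral_mono_of_nonneg (ae_of_all _ fun x => by positivity)
          (hkgp.integral_prod_left.const_mul _) ?_
        filter_upwards [hk, hkg, hkgp.prod_right_ae, hrow] with x hx hxg hxgp hxC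
        refine (abs_integral_mul_rpow_le hp hx hxg hxgp).trans ?_
        gcongr
    _ = C ^ (p - 1) * ∫ y, (∫ x, |k x y| ∂ν) * |g y| ^ p ∂μ := by
        rw [integral_const_mul, integral_integral_swap hkgp]
        simp only [integral_mul_const]
    _ ≤ C ^ (p - 1) * ∫ y, D * |g y| ^ p ∂μ := by
        refine mul_le_mul_of_nonneg_left (integral_mono_of_nonneg (ae_of_all _ fun y =>
          mul_nonneg (integral_nonneg fun x => abs_nonneg _) (by positivity))
          (hgp.const_mul _) ?_) (by positivity)
        filter_upwards [hcol] with y hy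
        gcongr
    _ = _ := by rw [integral_const_mul, mul_assoc]

end SchurTest

section UniformBound

variable {α β : ℝ}

lemma integral_one_div_arccosWeight_pos (hα : -1 < α) (hβ : -1 < β) (ν θ : ℝ) (M : ℕ) :
    0 < ∫ y, 1 / arccosWeight ν θ y ^ M ∂jacobiMeasure α β := by
  have hpos : ∀ y, 0 < 1 / arccosWeight ν θ y ^ M := fun y => by
    positivity [one_lt_arccosWeight ν θ y]
  rw [integral_pos_iff_support_of_nonneg (fun y => (hpos y).le)
    (integrable_jacobiMeasure_of_continuousOn hα hβ
      (continuous_div_arccosWeight_pow ν θ M continuous_const).continuousOn),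
    Function.support_eq_univ fun y => (hpos y).ne']
  exact jacobiMeasure_univ_pos α β

lemma integral_sq_div_arccosWeight_le (hα : -1 < α) (hβ : -1 < β) (ν θ : ℝ) (M : ℕ) {f : ℝ[X]}
    {B : ℝ} (hf : ∀ y ∈ Icc (-1 : ℝ) 1, |f.eval y| ≤ B) :
    ∫ y, f.eval y ^ 2 / arccosWeight ν θ y ^ M ∂jacobiMeasure α β ≤
      B ^ 2 * ∫ y, 1 / arccosWeight ν θ y ^ M ∂jacobiMeasure α β := by
  have hint : ∀ {F : ℝ → ℝ}, Continuous F →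
      Integrable (fun y => F y / arccosWeight ν θ y ^ M) (jacobiMeasure α β) := fun hF =>
    integrable_jacobiMeasure_of_continuousOn hα hβ
      (continuous_div_arccosWeight_pow ν θ M hF).continuousOn
  rw [← integral_const_mul]
  refine integral_mono_ae (hint (by fun_prop)) ((hint continuous_const).const_mul _) ?_
  filter_upwards [ae_jacobiMeasure_mem_Ioo α β] with y hy
  have hsq : f.eval y ^ 2 ≤ B ^ 2 :=
    sq_le_sq.2 ((hf y (Ioo_subset_Icc_self hy)).trans (le_abs_self B))
  have := one_lt_arccosWeight ν θ y
  rw [mul_one_div]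
  gcongr

lemma exists_abs_V_eval_le (hα : -1 < α) (hβ : -1 < β) {η : ℝ → ℝ} (hη : Admissible η) :
    ∃ C, 0 ≤ C ∧ ∀ n : ℕ, 1 ≤ n → ∀ (f : ℝ[X]) (B : ℝ), 0 ≤ B →
      (∀ y ∈ Icc (-1 : ℝ) 1, |f.eval y| ≤ B) → ∀ x ∈ Icc (-1 : ℝ) 1,
      |V η α β n (fun x => f.eval x) x| ≤ C * B := by
  obtain ⟨A, hA⟩ := exists_nat_ge (|2 * α + 1| + |2 * β + 1|)
  obtain ⟨C, hC, hnikolskii⟩ := exists_sq_eval_cos_mul_integral_le hα hβ hA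
  obtain ⟨D, hD, hweighted⟩ := exists_integral_V_sq_div_le hα hβ hη (A + 2)
  refine ⟨√(C * D), Real.sqrt_nonneg _, fun n hn f B hB hf x hx => ?_⟩
  have hpoint := hnikolskii n hn (Real.arccos x) ⟨Real.arccos_nonneg x, Real.arccos_le_pi x⟩
    (valleePoussinPoly η α β n fun x => f.eval x) (natDegree_valleePoussinPoly_le hα hβ η n _)
  simp only [eval_valleePoussinPoly, Real.cos_arccos hx.1 hx.2] at hpoint
  have hle : V η α β n (fun x => f.eval x) x ^ 2 ≤ C * D * B ^ 2 := by
    refine le_of_mul_le_mul_right ?_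
      (integral_one_div_arccosWeight_pos hα hβ n (Real.arccos x) (A + 2))
    calc _ ≤ _ := hpoint
      _ ≤ C * (D * (B ^ 2 * ∫ y, 1 / arccosWeight n (Real.arccos x) y ^ (A + 2)
            ∂jacobiMeasure α β)) := by
          gcongr
          exact (hweighted n hn _ f).trans
            (by gcongr; exact integral_sq_div_arccosWeight_le hα hβ _ _ _ hf)
      _ = _ := by ring
  refine abs_le_of_sq_le_sq ?_ (by positivity)
  rwa [mul_pow, Real.sq_sqrt (by positivity)]

/-- The kernel of the de la Vallée Poussin operator with respect to the Jacobi measure. -/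
def valleePoussinKernel (η : ℝ → ℝ) (α β : ℝ) (n : ℕ) (x y : ℝ) : ℝ :=
  ∑ k ∈ Finset.range (2 * n + 1), η ((k : ℝ) / (n : ℝ)) / hJ α β k * J α β k x * J α β k y

lemma valleePoussinKernel_symm (η : ℝ → ℝ) (α β : ℝ) (n : ℕ) (x y : ℝ) :
    valleePoussinKernel η α β n x y = valleePoussinKernel η α β n y x :=
  Finset.sum_congr rfl fun k _ => by ring

lemma continuous_valleePoussinKernel (η : ℝ → ℝ) (α β : ℝ) (n : ℕ) (x : ℝ) :
    Continuous (valleePoussinKernel η α β n x) :=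
  continuous_finsetSum _ fun k _ => continuous_const.mul (continuous_J α β k)

lemma integrable_valleePoussinKernel_mul (hα : -1 < α) (hβ : -1 < β) (η : ℝ → ℝ) (n : ℕ) (x : ℝ)
    {f : ℝ → ℝ} (hf : ContinuousOn f (Icc (-1 : ℝ) 1)) :
    Integrable (fun y => valleePoussinKernel η α β n x y * f y) (jacobiMeasure α β) :=
  integrable_jacobiMeasure_of_continuousOn hα hβ
    ((continuous_valleePoussinKernel η α β n x).continuousOn.mul hf)

lemma integrable_valleePoussinKernel (hα : -1 < α) (hβ : -1 < β) (η : ℝ → ℝ) (n : ℕ) (x : ℝ) :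
    Integrable (valleePoussinKernel η α β n x) (jacobiMeasure α β) :=
  integrable_jacobiMeasure_of_continuousOn hα hβ
    (continuous_valleePoussinKernel η α β n x).continuousOn

lemma V_eq_integral_valleePoussinKernel (hα : -1 < α) (hβ : -1 < β) (η : ℝ → ℝ) (n : ℕ)
    {f : ℝ → ℝ} (hf : ContinuousOn f (Icc (-1 : ℝ) 1)) (x : ℝ) :
    V η α β n f x = ∫ y, valleePoussinKernel η α β n x y * f y ∂jacobiMeasure α β := by
  unfold V valleePoussinKernel
  simp only [Finset.sum_mul]
  rw [integral_finsetSum _ fun k _ => ?_]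
  swap
  · exact integrable_jacobiMeasure_of_continuousOn hα hβ
      ((continuous_const.mul (continuous_J α β k)).continuousOn.mul hf)
  refine Finset.sum_congr rfl fun k _ => ?_
  have hfactor : ∀ y, η (k / n) / hJ α β k * J α β k x * J α β k y * f y =
      η (k / n) / hJ α β k * J α β k x * (f y * J α β k y) := fun y => by ring
  simp only [hfactor]
  rw [coeff, ip_eq_integral, integral_const_mul]
  ring

lemma V_sub (hα : -1 < α) (hβ : -1 < β) (η : ℝ → ℝ) (n : ℕ) {f g : ℝ → ℝ}
    (hf : ContinuousOn f (Icc (-1 : ℝ) 1)) (hg : ContinuousOn g (Icc (-1 : ℝ) 1)) (x : ℝ) :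
    V η α β n (fun y => f y - g y) x = V η α β n f x - V η α β n g x := by
  rw [V_eq_integral_valleePoussinKernel hα hβ η n hf,
    V_eq_integral_valleePoussinKernel hα hβ η n hg,
    V_eq_integral_valleePoussinKernel hα hβ η n (f := fun y => f y - g y) (hf.sub hg),
    ← integral_sub (integrable_valleePoussinKernel_mul hα hβ η n x hf)
      (integrable_valleePoussinKernel_mul hα hβ η n x hg)]
  simp only [mul_sub]

lemma abs_V_le_mul_integral (hα : -1 < α) (hβ : -1 < β) (η : ℝ → ℝ) (n : ℕ) {f : ℝ → ℝ}
    (hf : ContinuousOn f (Icc (-1 : ℝ) 1)) {B : ℝ} (hB : ∀ y ∈ Icc (-1 : ℝ) 1, |f y| ≤ B) (x : ℝ) :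
    |V η α β n f x| ≤ B * ∫ y, |valleePoussinKernel η α β n x y| ∂jacobiMeasure α β := by
  rw [V_eq_integral_valleePoussinKernel hα hβ η n hf, ← integral_const_mul]
  refine abs_integral_le_integral_abs.trans (integral_mono_ae
    (integrable_valleePoussinKernel_mul hα hβ η n x hf).abs
    ((integrable_valleePoussinKernel hα hβ η n x).abs.const_mul _) ?_)
  filter_upwards [ae_jacobiMeasure_mem_Ioo α β] with y hy
  rw [abs_mul, mul_comm]
  exact mul_le_mul_of_nonneg_right (hB y (Ioo_subset_Icc_self hy)) (abs_nonneg _)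

lemma exists_abs_V_le (hα : -1 < α) (hβ : -1 < β) {η : ℝ → ℝ} (hη : Admissible η) :
    ∃ C, 0 ≤ C ∧ ∀ n : ℕ, 1 ≤ n → ∀ f : ℝ → ℝ, ContinuousOn f (Icc (-1 : ℝ) 1) →
      ∀ B : ℝ, 0 ≤ B → (∀ y ∈ Icc (-1 : ℝ) 1, |f y| ≤ B) → ∀ x ∈ Icc (-1 : ℝ) 1,
      |V η α β n f x| ≤ C * B := by
  obtain ⟨C, hC, hpoly⟩ := exists_abs_V_eval_le hα hβ hη
  refine ⟨C, hC, fun n hn f hf B hB hfB x hx => ?_⟩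
  set k := ∫ y, |valleePoussinKernel η α β n x y| ∂jacobiMeasure α β
  have : 0 ≤ k := integral_nonneg fun y => abs_nonneg _
  refine le_of_forall_pos_le_add fun δ hδ => ?_
  have hε : 0 < δ / (C + k + 1) := by positivity
  have hεδ : δ / (C + k + 1) * (C + k + 1) = δ := div_mul_cancel₀ _ (by positivity)
  set ε := δ / (C + k + 1)
  obtain ⟨q, hq⟩ := exists_polynomial_near_of_continuousOn (-1) 1 f hf ε hε
  have hqc : ContinuousOn (fun x => q.eval x) (Icc (-1 : ℝ) 1) := by fun_prop
  have hmain : |V η α β n (fun x => q.eval x) x| ≤ C * (B + ε) :=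
    hpoly n hn q (B + ε) (by positivity) (fun y hy => by
      linarith [abs_sub_abs_le_abs_sub (q.eval y) (f y), hq y hy, hfB y hy]) x hx
  have herror : |V η α β n f x - V η α β n (fun x => q.eval x) x| ≤ ε * k := by
    rw [← V_sub hα hβ η n hf hqc]
    exact abs_V_le_mul_integral hα hβ η n (f := fun y => f y - q.eval y) (hf.sub hqc)
      (fun y hy => by rw [abs_sub_comm]; exact (hq y hy).le) x
  nlinarith [abs_sub_abs_le_abs_sub (V η α β n f x) (V η α β n (fun x => q.eval x) x)]

/-- The `L¹` norm of the kernel is the norm of the functional `f ↦ V f x` on `C[-1,1]`, tested on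
the regularized sign `K / (|K| + ε)` of the kernel. -/
lemma exists_integral_abs_valleePoussinKernel_le (hα : -1 < α) (hβ : -1 < β) {η : ℝ → ℝ}
    (hη : Admissible η) : ∃ C, 0 ≤ C ∧ ∀ n : ℕ, 1 ≤ n → ∀ x ∈ Icc (-1 : ℝ) 1,
      ∫ y, |valleePoussinKernel η α β n x y| ∂jacobiMeasure α β ≤ C := by
  obtain ⟨C, hC, hV⟩ := exists_abs_V_le hα hβ hη
  refine ⟨C, hC, fun n hn x hx => ?_⟩
  have := isFiniteMeasure_jacobiMeasure hα hβ
  refine le_of_forall_pos_le_add fun δ hδ => ?_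
  set m := (jacobiMeasure α β).real univ
  have : 0 ≤ m := measureReal_nonneg
  have hε : 0 < δ / (m + 1) := by positivity
  have hεδ : δ / (m + 1) * (m + 1) = δ := div_mul_cancel₀ _ (by positivity)
  set ε := δ / (m + 1)
  set K := valleePoussinKernel η α β n x
  have hK : Continuous K := continuous_valleePoussinKernel η α β n x
  have hsign : Continuous fun y => K y / (|K y| + ε) :=
    hK.div (hK.abs.add continuous_const) fun y => by positivity
  have hbound := hV n hn _ hsign.continuousOn 1 zero_le_one (fun y _ => by
    rw [abs_div, div_le_one (by positivity), abs_of_pos (a := |K y| + ε) (by positivity)]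
    linarith) x hx
  have hint := integrable_valleePoussinKernel_mul hα hβ η n x hsign.continuousOn
  rw [mul_one, V_eq_integral_valleePoussinKernel hα hβ η n hsign.continuousOn] at hbound
  calc ∫ y, |K y| ∂jacobiMeasure α β
      ≤ ∫ y, (K y * (K y / (|K y| + ε)) + ε) ∂jacobiMeasure α β := by
        refine integral_mono (integrable_valleePoussinKernel hα hβ η n x).abs
          (hint.add (integrable_const ε)) fun y => ?_
        change |K y| ≤ _
        rw [← mul_div_assoc, ← abs_mul_abs_self, ← sub_le_iff_le_add, le_div_iff₀ (by positivity)]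
        nlinarith
    _ = (∫ y, K y * (K y / (|K y| + ε)) ∂jacobiMeasure α β) + m * ε := by
        rw [integral_add hint (integrable_const ε), integral_const, smul_eq_mul]
    _ ≤ C + δ := by linarith [(le_abs_self _).trans hbound]

lemma exists_integral_abs_V_rpow_le (hα : -1 < α) (hβ : -1 < β) {η : ℝ → ℝ} (hη : Admissible η)
    {p : ℝ} (hp : 1 ≤ p) : ∃ C, 0 ≤ C ∧ ∀ n : ℕ, 1 ≤ n → ∀ g : ℝ → ℝ, Continuous g →
      ∫ x, |V η α β n g x| ^ p ∂jacobiMeasure α β ≤ C * ∫ x, |g x| ^ p ∂jacobiMeasure α β := by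
  obtain ⟨C, hC, hK⟩ := exists_integral_abs_valleePoussinKernel_le hα hβ hη
  refine ⟨C ^ (p - 1) * C, by positivity, fun n hn g hg => ?_⟩
  have := isFiniteMeasure_jacobiMeasure hα hβ
  have hgp : Continuous fun y => |g y| ^ p := hg.abs.rpow_const fun _ => Or.inr (by linarith)
  have hint : ∀ {F : ℝ → ℝ}, Continuous F → Integrable F (jacobiMeasure α β) := fun hF =>
    integrable_jacobiMeasure_of_continuousOn hα hβ hF.continuousOn
  have hprod : Integrable (Function.uncurry fun x y =>
      |valleePoussinKernel η α β n x y| * |g y| ^ p)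
      ((jacobiMeasure α β).prod (jacobiMeasure α β)) := by
    have hsum : Integrable (fun z : ℝ × ℝ => ∑ k ∈ Finset.range (2 * n + 1),
        η ((k : ℝ) / (n : ℝ)) / hJ α β k * J α β k z.1 * (J α β k z.2 * |g z.2| ^ p))
        ((jacobiMeasure α β).prod (jacobiMeasure α β)) :=
      integrable_finsetSum _ fun k _ => Integrable.mul_prod
        (hint (continuous_const.mul (continuous_J α β k))) (hint ((continuous_J α β k).mul hgp))
    refine hsum.abs.congr (ae_of_all _ fun z => ?_)
    simp only [Function.uncurry_def, valleePoussinKernel, ← mul_assoc, ← Finset.sum_mul, abs_mul,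
      abs_of_nonneg (Real.rpow_nonneg (abs_nonneg (g z.2)) p)]
  have hrow : ∀ᵐ x ∂jacobiMeasure α β,
      ∫ y, |valleePoussinKernel η α β n x y| ∂jacobiMeasure α β ≤ C := by
    filter_upwards [ae_jacobiMeasure_mem_Ioo α β] with x hx using hK n hn x (Ioo_subset_Icc_self hx)
  simp only [V_eq_integral_valleePoussinKernel hα hβ η n hg.continuousOn]
  exact integral_abs_integral_mul_rpow_le hp hC
    (ae_of_all _ fun x => integrable_valleePoussinKernel hα hβ η n x)
    (ae_of_all _ fun x => integrable_valleePoussinKernel_mul hα hβ η n x hg.continuousOn) hprod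
    (hint hgp) hrow (by simpa only [valleePoussinKernel_symm η α β n _] using hrow)

lemma V_eval_of_natDegree_le (hα : -1 < α) (hβ : -1 < β) {η : ℝ → ℝ} (hη : Admissible η) {n : ℕ}
    (hn : 1 ≤ n) {q : ℝ[X]} (hq : q.natDegree ≤ n) (x : ℝ) :
    V η α β n (fun x => q.eval x) x = q.eval x := by
  rw [eval_eq_sum_coeff_mul_J hα hβ (by omega : q.natDegree < 2 * n + 1) x]
  refine Finset.sum_congr rfl fun k _ => ?_
  have hn0 : (0 : ℝ) < n := mod_cast hn
  rcases le_or_gt k n with hkn | hkn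
  · rw [hη.2.1 _ (by positivity) (by rw [div_le_one hn0]; exact_mod_cast hkn), one_mul]
  · rw [coeff_eval_eq_zero_of_natDegree_lt hα hβ (hq.trans_lt hkn), mul_zero]

end UniformBound

/-! ### Near-best approximation -/

section WeightedNorm

variable {α β : ℝ} {p : ℝ≥0∞}

lemma one_le_toReal (hp : 1 ≤ p) (hpt : p ≠ ⊤) : 1 ≤ p.toReal := by
  simpa using ENNReal.toReal_mono hpt hp

lemma LpW_eq_integral_rpow (hpt : p ≠ ⊤) (f : ℝ → ℝ) :
    LpW α β p f = (∫ x, |f x| ^ p.toReal ∂jacobiMeasure α β) ^ (1 / p.toReal) := by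
  rw [LpW, if_neg hpt, integral_jacobiMeasure]

lemma LpW_eq_lpNorm (hp : 1 ≤ p) (hpt : p ≠ ⊤) {f : ℝ → ℝ} (hf : Continuous f) :
    LpW α β p f = lpNorm f p (jacobiMeasure α β) := by
  rw [LpW_eq_integral_rpow hpt, one_div, lpNorm_eq_integral_norm_rpow_toReal
    (zero_lt_one.trans_le hp).ne' hpt hf.aestronglyMeasurable]
  simp only [Real.norm_eq_abs]

lemma LpW_nonneg (α β : ℝ) (p : ℝ≥0∞) (f : ℝ → ℝ) : 0 ≤ LpW α β p f := by
  by_cases hpt : p = ⊤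
  · rw [LpW, if_pos hpt]
    refine Real.sSup_nonneg ?_
    rintro _ ⟨x, _, rfl⟩
    exact abs_nonneg _
  · rw [LpW_eq_integral_rpow hpt]
    positivity

lemma LpW_le_of_integral_rpow_le (hpt : p ≠ ⊤) {D : ℝ} (hD : 0 ≤ D) {f g : ℝ → ℝ}
    (h : ∫ x, |f x| ^ p.toReal ∂jacobiMeasure α β ≤
      D * ∫ x, |g x| ^ p.toReal ∂jacobiMeasure α β) :
    LpW α β p f ≤ D ^ (1 / p.toReal) * LpW α β p g := by
  rw [LpW_eq_integral_rpow hpt, LpW_eq_integral_rpow hpt, ← Real.mul_rpow hD (by positivity)]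
  gcongr

lemma LpW_top_le {f : ℝ → ℝ} {B : ℝ} (h : ∀ x ∈ Icc (-1 : ℝ) 1, |f x| ≤ B) :
    LpW α β ⊤ f ≤ B := by
  rw [LpW, if_pos rfl]
  refine csSup_le ((nonempty_Icc.2 (by norm_num)).image _) ?_
  rintro _ ⟨x, hx, rfl⟩
  exact h x hx

lemma abs_le_LpW_top (α β : ℝ) {f : ℝ → ℝ} (hf : Continuous f) {x : ℝ} (hx : x ∈ Icc (-1 : ℝ) 1) :
    |f x| ≤ LpW α β ⊤ f := by
  rw [LpW, if_pos rfl]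
  exact le_csSup (isCompact_Icc.image hf.abs).bddAbove (mem_image_of_mem (fun x => |f x|) hx)

lemma LpW_sub_le (hα : -1 < α) (hβ : -1 < β) (hp : 1 ≤ p) {f g : ℝ → ℝ} (hf : Continuous f)
    (hg : Continuous g) : LpW α β p (fun x => f x - g x) ≤ LpW α β p f + LpW α β p g := by
  by_cases hpt : p = ⊤
  · subst hpt
    exact LpW_top_le fun x hx => (abs_sub _ _).trans
      (add_le_add (abs_le_LpW_top α β hf hx) (abs_le_LpW_top α β hg hx))
  · have hmem : MemLp f p (jacobiMeasure α β) := by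
      rw [← integrable_norm_rpow_iff hf.aestronglyMeasurable (zero_lt_one.trans_le hp).ne' hpt]
      exact integrable_jacobiMeasure_of_continuousOn hα hβ
        (hf.norm.rpow_const fun _ => Or.inr ENNReal.toReal_nonneg).continuousOn
    rw [LpW_eq_lpNorm hp hpt hf, LpW_eq_lpNorm hp hpt hg, LpW_eq_lpNorm hp hpt (by fun_prop)]
    exact lpNorm_sub_le hmem hp

lemma exists_LpW_V_le (hα : -1 < α) (hβ : -1 < β) {η : ℝ → ℝ} (hη : Admissible η) (hp : 1 ≤ p) :
    ∃ C, 0 ≤ C ∧ ∀ n : ℕ, 1 ≤ n → ∀ g : ℝ → ℝ, Continuous g →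
      LpW α β p (V η α β n g) ≤ C * LpW α β p g := by
  by_cases hpt : p = ⊤
  · subst hpt
    obtain ⟨C, hC, hV⟩ := exists_abs_V_le hα hβ hη
    exact ⟨C, hC, fun n hn g hg => LpW_top_le <| hV n hn g hg.continuousOn _ (LpW_nonneg α β ⊤ g)
      fun y hy => abs_le_LpW_top α β hg hy⟩
  · obtain ⟨C, hC, hV⟩ := exists_integral_abs_V_rpow_le hα hβ hη (one_le_toReal hp hpt)
    exact ⟨C ^ (1 / p.toReal), by positivity, fun n hn g hg =>
      LpW_le_of_integral_rpow_le hpt hC (hV n hn g hg)⟩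

lemma exists_LpW_sub_V_le (hα : -1 < α) (hβ : -1 < β) {η : ℝ → ℝ} (hη : Admissible η)
    (hp : 1 ≤ p) : ∃ C, 0 < C ∧ ∀ n : ℕ, 1 ≤ n → ∀ g : ℝ → ℝ, Continuous g →
      LpW α β p (fun x => g x - V η α β n g x) ≤ C * E α β p n g := by
  obtain ⟨C, hC, hV⟩ := exists_LpW_V_le hα hβ hη hp
  have hpos : 0 < 1 + C := by positivity
  refine ⟨1 + C, hpos, fun n hn g hg => ?_⟩
  rw [← div_le_iff₀' hpos]
  refine le_csInf ⟨_, 0, by simp, rfl⟩ ?_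
  rintro _ ⟨q, hq, rfl⟩
  rw [div_le_iff₀' hpos]
  have hgq : Continuous fun x => g x - q.eval x := by fun_prop
  have hreproduce : ∀ x, g x - V η α β n g x =
      (g x - q.eval x) - V η α β n (fun y => g y - q.eval y) x := fun x => by
    rw [V_sub hα hβ η n hg.continuousOn (by fun_prop), V_eval_of_natDegree_le hα hβ hη hn hq]
    ring
  simp only [hreproduce]
  linarith [LpW_sub_le hα hβ hp hgq (continuous_V η α β n fun y => g y - q.eval y),
    hV n hn _ hgq]

end WeightedNorm

/-! ### Hardy's inequality for Jacobi weights -/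

section Hardy

variable {α β r θ : ℝ}

/-- Jensen's inequality for the probability measure proportional to `k • ν`, applied to `G / k`. -/
lemma abs_integral_rpow_le_mul_integral {X : Type*} [MeasurableSpace X] {ν : Measure X}
    {k G : X → ℝ} (hr : 1 ≤ r) (hk : Integrable k ν) (hk0 : ∀ᵐ t ∂ν, 0 < k t)
    (hG : Integrable G ν) (hGr : Integrable (fun t => k t ^ (1 - r) * |G t| ^ r) ν) :
    |∫ t, G t ∂ν| ^ r ≤ (∫ t, k t ∂ν) ^ (r - 1) * ∫ t, k t ^ (1 - r) * |G t| ^ r ∂ν := by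
  have hmul : (fun t => k t * (G t / k t)) =ᵐ[ν] G := by
    filter_upwards [hk0] with t ht using mul_div_cancel₀ _ ht.ne'
  have hpow : (fun t => |k t| * |G t / k t| ^ r) =ᵐ[ν] fun t => k t ^ (1 - r) * |G t| ^ r := by
    filter_upwards [hk0] with t ht
    rw [abs_div, abs_of_pos ht, Real.div_rpow (abs_nonneg _) ht.le, Real.rpow_sub ht, Real.rpow_one]
    ring
  have habs : (fun t => |k t|) =ᵐ[ν] k := by
    filter_upwards [hk0] with t ht using abs_of_pos ht
  have hjensen := abs_integral_mul_rpow_le hr hk (hG.congr hmul.symm) (hGr.congr hpow.symm)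
  rwa [integral_congr_ae hmul, integral_congr_ae hpow, integral_congr_ae habs] at hjensen

lemma abs_integral_rpow_le_of_rpow_le {X : Type*} [MeasurableSpace X] {ν : Measure X}
    {k ω G : X → ℝ} {B : ℝ} (hr : 1 ≤ r) (hk : Integrable k ν) (hk0 : ∀ᵐ t ∂ν, 0 < k t)
    (hG : Integrable G ν) (hGω : Integrable (fun t => |G t| ^ r * ω t) ν)
    (hkω : ∀ᵐ t ∂ν, k t ^ (1 - r) ≤ B * ω t) :
    |∫ t, G t ∂ν| ^ r ≤ (∫ t, k t ∂ν) ^ (r - 1) * (B * ∫ t, |G t| ^ r * ω t ∂ν) := by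
  have hle : ∀ᵐ t ∂ν, k t ^ (1 - r) * |G t| ^ r ≤ B * (|G t| ^ r * ω t) := by
    filter_upwards [hkω] with t ht
    linarith [mul_le_mul_of_nonneg_right ht (by positivity : 0 ≤ |G t| ^ r)]
  have hint : Integrable (fun t => k t ^ (1 - r) * |G t| ^ r) ν := by
    refine (hGω.const_mul B).mono' ((hk.aemeasurable.pow_const _).mul
      (hG.abs.aemeasurable.pow_const r)).aestronglyMeasurable ?_
    filter_upwards [hle, hk0] with t ht hkt
    rwa [Real.norm_of_nonneg (by positivity)]
  have hk' : 0 ≤ ∫ t, k t ∂ν := integral_nonneg_of_ae (hk0.mono fun t ht => ht.le)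
  refine (abs_integral_rpow_le_mul_integral hr hk hk0 hG hint).trans
    (mul_le_mul_of_nonneg_left ?_ (Real.rpow_nonneg hk' _))
  rw [← integral_const_mul]
  exact integral_mono_ae hint (hGω.const_mul B) hle

lemma abs_intervalIntegral_rpow_le (hα : -1 < α) (hβ : -1 < β) (hr : 1 ≤ r)
    (hθ : θ ∈ Icc (-1 : ℝ) 1) {k : ℝ → ℝ} (hk0 : ∀ t ∈ Ioo (-1 : ℝ) 1, 0 < k t)
    (hk : IntegrableOn k (Ioo (-1) 1)) {x B : ℝ} (hx : x ∈ Ioo (-1 : ℝ) 1) (hB : 0 ≤ B)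
    (hkB : ∀ t ∈ Ioo (min θ x) (max θ x), k t ^ (1 - r) ≤ B * w α β t) {G : ℝ → ℝ}
    (hG : Continuous G) :
    |∫ t in θ..x, G t| ^ r ≤
      (∫ t in Ioo (-1 : ℝ) 1, k t) ^ (r - 1) * (B * ∫ t, |G t| ^ r ∂jacobiMeasure α β) := by
  have hGr : Continuous fun t => |G t| ^ r := hG.abs.rpow_const fun _ => Or.inr (by linarith)
  have hGw := (integrable_jacobiMeasure_iff α β _).1
    (integrable_jacobiMeasure_of_continuousOn hα hβ hGr.continuousOn)
  set S := Ioo (min θ x) (max θ x)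
  have hS : MeasurableSet S := measurableSet_Ioo
  have hsub : S ⊆ Ioo (-1) 1 :=
    Ioo_subset_Ioo (le_min hθ.1 hx.1.le) (max_le hθ.2 hx.2.le)
  have hkS : 0 ≤ ∫ t in S, k t := setIntegral_nonneg hS fun t ht => (hk0 t (hsub ht)).le
  have hGS : 0 ≤ ∫ t in S, |G t| ^ r * w α β t :=
    setIntegral_nonneg hS fun t ht => by positivity [w_pos α β (hsub ht)]
  rw [intervalIntegral.abs_intervalIntegral_eq, uIoc, integral_Ioc_eq_integral_Ioo,
    integral_jacobiMeasure]
  calc |∫ t in S, G t| ^ r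
      ≤ (∫ t in S, k t) ^ (r - 1) * (B * ∫ t in S, |G t| ^ r * w α β t) :=
        abs_integral_rpow_le_of_rpow_le hr (hk.mono_set hsub)
          (ae_restrict_of_forall_mem hS fun t ht => hk0 t (hsub ht))
          (hG.integrableOn_Icc.mono_set Ioo_subset_Icc_self) (hGw.mono_set hsub)
          (ae_restrict_of_forall_mem hS hkB)
    _ ≤ _ := by
        gcongr
        · exact Real.rpow_nonneg (hkS.trans (setIntegral_mono_set hk
            (ae_restrict_of_forall_mem measurableSet_Ioo fun t ht => (hk0 t ht).le)
            hsub.eventuallyLE)) _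
        · exact ae_restrict_of_forall_mem measurableSet_Ioo fun t ht => (hk0 t ht).le
        · exact ae_restrict_of_forall_mem measurableSet_Ioo fun t ht => by
            positivity [w_pos α β ht]

lemma exists_integral_abs_intervalIntegral_rpow_le (hα : -1 < α) (hβ : -1 < β) (hr : 1 ≤ r)
    (hθ : θ ∈ Icc (-1 : ℝ) 1) {k ψ : ℝ → ℝ} {C : ℝ} (hC : 0 ≤ C)
    (hk0 : ∀ t ∈ Ioo (-1 : ℝ) 1, 0 < k t) (hk : IntegrableOn k (Ioo (-1) 1))
    (hψ0 : ∀ x ∈ Ioo (-1 : ℝ) 1, 0 ≤ ψ x) (hψ : Integrable ψ (jacobiMeasure α β))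
    (hkψ : ∀ x ∈ Ioo (-1 : ℝ) 1, ∀ t ∈ Ioo (min θ x) (max θ x),
      k t ^ (1 - r) ≤ C * ψ x * w α β t) :
    ∃ D, 0 ≤ D ∧ ∀ G : ℝ → ℝ, Continuous G →
      ∫ x, |∫ t in θ..x, G t| ^ r ∂jacobiMeasure α β ≤
        D * ∫ x, |G x| ^ r ∂jacobiMeasure α β := by
  have hK : 0 ≤ ∫ t in Ioo (-1 : ℝ) 1, k t :=
    setIntegral_nonneg measurableSet_Ioo fun t ht => (hk0 t ht).le
  have hΨ : 0 ≤ ∫ x, ψ x ∂jacobiMeasure α β := integral_nonneg_of_ae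
    ((ae_jacobiMeasure_mem_Ioo α β).mono hψ0)
  set K := ∫ t in Ioo (-1 : ℝ) 1, k t
  refine ⟨K ^ (r - 1) * C * ∫ x, ψ x ∂jacobiMeasure α β, by positivity, fun G hG => ?_⟩
  set P := ∫ x, |G x| ^ r ∂jacobiMeasure α β
  calc ∫ x, |∫ t in θ..x, G t| ^ r ∂jacobiMeasure α β
      ≤ ∫ x, K ^ (r - 1) * C * P * ψ x ∂jacobiMeasure α β := by
        refine integral_mono_of_nonneg (ae_of_all _ fun x => by positivity) (hψ.const_mul _) ?_
        filter_upwards [ae_jacobiMeasure_mem_Ioo α β] with x hx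
        refine (abs_intervalIntegral_rpow_le hα hβ hr hθ hk0 hk hx
          (mul_nonneg hC (hψ0 x hx)) (hkψ x hx) hG).trans_eq ?_
        ring
    _ = _ := by rw [integral_const_mul]; ring

/-- One endpoint of the weight condition in Hardy's inequality, with `u` and `v` the distances of
`t` and `x` from an endpoint of `[-1, 1]` and `δ` that of the base point `θ`. -/
lemma exists_rpow_le_mul_rpow_mul_rpow {α δ : ℝ} (hα : -1 < α) (hδ : δ ≤ 2)
    (h : 0 < δ ∨ ∃ γ < 1, α ≤ γ * (r - 1)) :
    ∃ γ a C : ℝ, γ < 1 ∧ a < α + 1 ∧ 0 < C ∧ ∀ u ∈ Ioo (0 : ℝ) 2, ∀ v ∈ Ioo (0 : ℝ) 2,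
      min δ v < u → u ^ (γ * (r - 1)) ≤ C * v ^ (-a) * u ^ α := by
  by_cases hγ : ∃ γ < 1, α ≤ γ * (r - 1)
  · obtain ⟨γ, hγ1, hγα⟩ := hγ
    refine ⟨γ, 0, 2 ^ (γ * (r - 1) - α), hγ1, by linarith, by positivity, fun u hu v _ _ => ?_⟩
    have : 0 < u := hu.1
    calc u ^ (γ * (r - 1)) = u ^ (γ * (r - 1) - α) * u ^ α := by
          rw [← Real.rpow_add hu.1, sub_add_cancel]
      _ ≤ 2 ^ (γ * (r - 1) - α) * u ^ α := by
          gcongr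
          exact hu.2.le
      _ = _ := by rw [neg_zero, Real.rpow_zero, mul_one]
  · have hδ0 := h.resolve_right hγ
    have hα0 : 0 ≤ α := le_of_not_ge fun hα0 => hγ ⟨0, one_pos, by simpa using hα0⟩
    refine ⟨0, α, (2 / δ) ^ α, one_pos, by linarith, by positivity, fun u hu v hv huv => ?_⟩
    have hvu : v ≤ 2 / δ * u := by
      rw [div_mul_eq_mul_div, le_div_iff₀ hδ0]
      rcases min_lt_iff.1 huv with hlt | hlt <;> nlinarith [hu.1, hv.1, hv.2]
    have : 0 < v ^ α := Real.rpow_pos_of_pos hv.1 α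
    rw [zero_mul, Real.rpow_zero, Real.rpow_neg hv.1.le, mul_right_comm,
      ← Real.mul_rpow (by positivity) hu.1.le, ← div_eq_mul_inv, one_le_div this]
    exact Real.rpow_le_rpow hv.1.le hvu hα0

lemma w_mul_w (a b c d : ℝ) {x : ℝ} (hx : x ∈ Ioo (-1 : ℝ) 1) :
    w a b x * w c d x = w (a + c) (b + d) x := by
  unfold w
  rw [Real.rpow_add (sub_pos.2 hx.2), Real.rpow_add (by linarith [hx.1])]
  ring

lemma w_rpow (a b c : ℝ) {x : ℝ} (hx : x ∈ Ioo (-1 : ℝ) 1) :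
    w a b x ^ c = w (a * c) (b * c) x := by
  have h1 : 0 ≤ 1 - x := by linarith [hx.2]
  have h2 : 0 ≤ 1 + x := by linarith [hx.1]
  unfold w
  rw [Real.mul_rpow (by positivity) (by positivity), ← Real.rpow_mul h1, ← Real.rpow_mul h2]

lemma exists_integral_abs_primitive_rpow_le (hα : -1 < α) (hβ : -1 < β) (hr : 1 ≤ r)
    (hθ : θ ∈ Icc (-1 : ℝ) 1) (hright : θ < 1 ∨ ∃ γ < 1, α ≤ γ * (r - 1))
    (hleft : -1 < θ ∨ ∃ γ < 1, β ≤ γ * (r - 1)) :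
    ∃ C, 0 ≤ C ∧ ∀ G : ℝ → ℝ, Continuous G →
      ∫ x, |∫ t in θ..x, G t| ^ r ∂jacobiMeasure α β ≤
        C * ∫ x, |G x| ^ r ∂jacobiMeasure α β := by
  obtain ⟨γ, a, A, hγ, ha, hA, hrightEnd⟩ := exists_rpow_le_mul_rpow_mul_rpow (r := r)
    (δ := 1 - θ) hα (by linarith [hθ.1]) (hright.imp_left fun h => by linarith)
  obtain ⟨κ, b, B, hκ, hb, hB, hleftEnd⟩ := exists_rpow_le_mul_rpow_mul_rpow (r := r)
    (δ := 1 + θ) hβ (by linarith [hθ.2]) (hleft.imp_left fun h => by linarith)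
  refine exists_integral_abs_intervalIntegral_rpow_le (k := w (-γ) (-κ)) (ψ := w (-a) (-b))
    (C := A * B) hα hβ hr hθ (by positivity) (fun t ht => w_pos _ _ ht)
    (integrableOn_w (by linarith) (by linarith)) (fun x hx => (w_pos _ _ hx).le) ?_ ?_
  · refine (integrable_jacobiMeasure_iff α β _).2 ((integrableOn_w (α := -a + α) (β := -b + β)
      (by linarith) (by linarith)).congr_fun (fun x hx => ?_) measurableSet_Ioo)
    exact (w_mul_w _ _ _ _ hx).symm
  · intro x hx t ht
    have htI : t ∈ Ioo (-1 : ℝ) 1 :=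
      Ioo_subset_Ioo (le_min hθ.1 hx.1.le) (max_le hθ.2 hx.2.le) ht
    obtain ⟨hx1, hx2⟩ := hx
    have hR := hrightEnd (1 - t) ⟨by linarith [htI.2], by linarith [htI.1]⟩ (1 - x)
      ⟨by linarith, by linarith⟩ (min_lt_iff.2 <| by
        rcases lt_max_iff.1 ht.2 with h | h <;> [left; right] <;> linarith)
    have hL := hleftEnd (1 + t) ⟨by linarith [htI.1], by linarith [htI.2]⟩ (1 + x)
      ⟨by linarith, by linarith⟩ (min_lt_iff.2 <| by
        rcases min_lt_iff.1 ht.1 with h | h <;> [left; right] <;> linarith)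
    rw [w_rpow _ _ _ htI, show -γ * (1 - r) = γ * (r - 1) by ring,
      show -κ * (1 - r) = κ * (r - 1) by ring]
    unfold w
    have : 0 < 1 + t := by linarith [htI.1]
    calc _ ≤ (A * (1 - x) ^ (-a) * (1 - t) ^ α) * (B * (1 + x) ^ (-b) * (1 + t) ^ β) :=
          mul_le_mul hR hL (by positivity) ((Real.rpow_nonneg (by linarith [htI.2]) _).trans hR)
      _ = _ := by ring

lemma LpW_top_primitive_le (α β : ℝ) (hθ : θ ∈ Icc (-1 : ℝ) 1) {G : ℝ → ℝ} (hG : Continuous G) :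
    LpW α β ⊤ (fun x => ∫ t in θ..x, G t) ≤ 2 * LpW α β ⊤ G := by
  refine LpW_top_le fun x hx => ?_
  have hbound := intervalIntegral.norm_integral_le_of_norm_le_const (f := G) (a := θ) (b := x)
    fun t ht => abs_le_LpW_top α β hG (uIcc_subset_Icc hθ hx (uIoc_subset_uIcc ht))
  have hlength : |x - θ| ≤ 2 := by
    rw [abs_le]
    constructor <;> linarith [hx.1, hx.2, hθ.1, hθ.2]
  calc |∫ t in θ..x, G t| ≤ LpW α β ⊤ G * |x - θ| := hbound
    _ ≤ LpW α β ⊤ G * 2 := mul_le_mul_of_nonneg_left hlength (LpW_nonneg α β ⊤ G)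
    _ = _ := mul_comm _ _

lemma exists_lt_one_le_mul_toReal_sub_one {p : ℝ≥0∞} (hp : 1 ≤ p) (hpt : p ≠ ⊤) {a : ℝ}
    (hlt : 1 < p → p ≠ ⊤ → a < p.toReal - 1) (hone : p = 1 → a ≤ 0) :
    ∃ γ < 1, a ≤ γ * (p.toReal - 1) := by
  rcases hp.eq_or_lt with rfl | hp
  · exact ⟨0, one_pos, by simpa using hone rfl⟩
  · have hpos : 0 < p.toReal - 1 := by
      simpa using (ENNReal.toReal_lt_toReal ENNReal.one_ne_top hpt).2 hp
    exact ⟨a / (p.toReal - 1), (div_lt_one hpos).2 (hlt hp hpt), (div_mul_cancel₀ a hpos.ne').ge⟩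

lemma exists_LpW_primitive_le {p : ℝ≥0∞} (hα : -1 < α) (hβ : -1 < β) (hp : 1 ≤ p)
    (hθ : θ ∈ Ioo (-1 : ℝ) 1 ∨
      (θ = -1 ∧ (1 < p → p ≠ ⊤ → β < p.toReal - 1) ∧ (p = 1 → β ≤ 0)) ∨
      (θ = 1 ∧ (1 < p → p ≠ ⊤ → α < p.toReal - 1) ∧ (p = 1 → α ≤ 0))) :
    ∃ C, 0 ≤ C ∧ ∀ G : ℝ → ℝ, Continuous G →
      LpW α β p (fun x => ∫ t in θ..x, G t) ≤ C * LpW α β p G := by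
  have hθI : θ ∈ Icc (-1 : ℝ) 1 := by
    rcases hθ with hθ | ⟨rfl, -⟩ | ⟨rfl, -⟩
    exacts [Ioo_subset_Icc_self hθ, by norm_num, by norm_num]
  by_cases hpt : p = ⊤
  · subst hpt
    exact ⟨2, zero_le_two, fun G hG => LpW_top_primitive_le α β hθI hG⟩
  have hright : θ < 1 ∨ ∃ γ < 1, α ≤ γ * (p.toReal - 1) := by
    rcases hθ with hθ | ⟨rfl, -⟩ | ⟨-, hlt, hone⟩
    exacts [.inl hθ.2, .inl (by norm_num),
      .inr (exists_lt_one_le_mul_toReal_sub_one hp hpt hlt hone)]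
  have hleft : -1 < θ ∨ ∃ γ < 1, β ≤ γ * (p.toReal - 1) := by
    rcases hθ with hθ | ⟨-, hlt, hone⟩ | ⟨rfl, -⟩
    exacts [.inl hθ.1, .inr (exists_lt_one_le_mul_toReal_sub_one hp hpt hlt hone),
      .inl (by norm_num)]
  obtain ⟨C, hC, hG⟩ := exists_integral_abs_primitive_rpow_le hα hβ (one_le_toReal hp hpt) hθI
    hright hleft
  exact ⟨C ^ (1 / p.toReal), by positivity, fun G hGc =>
    LpW_le_of_integral_rpow_le hpt hC (hG G hGc)⟩

end Hardy

/-! ### Iterated primitives -/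

section IteratedPrimitive

lemma eq_sum_iteratedDeriv_add_integral {m : ℕ} {f : ℝ → ℝ} (hf : ContDiff ℝ (m + 1 : ℕ) f)
    (θ x : ℝ) :
    f x = (∑ k ∈ Finset.range (m + 1), iteratedDeriv k f θ * (x - θ) ^ k / k.factorial) +
      ∫ t in θ..x, (x - t) ^ m / m.factorial * iteratedDeriv (m + 1) f t := by
  rcases eq_or_ne θ x with rfl | hne
  · rw [intervalIntegral.integral_same, add_zero, Finset.sum_range_succ']
    simp
  have hiterated : ∀ k ≤ m + 1, ∀ t ∈ uIcc θ x,
      iteratedDerivWithin k f (uIcc θ x) t = iteratedDeriv k f t := fun k hk t ht =>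
    iteratedDerivWithin_eq_iteratedDeriv (uniqueDiffOn_uIcc hne)
      (hf.of_le (by exact_mod_cast hk)).contDiffAt ht
  have htaylor := taylor_integral_remainder (x := x) (x₀ := θ) (n := m) hf.contDiffOn
  rw [taylor_within_apply, sub_eq_iff_eq_add'] at htaylor
  rw [htaylor]
  congr 1
  · refine Finset.sum_congr rfl fun k hk => ?_
    rw [hiterated k (Finset.mem_range.1 hk).le θ left_mem_uIcc, smul_eq_mul]
    ring
  · refine intervalIntegral.integral_congr fun t ht => ?_
    simp only [hiterated _ le_rfl t ht, smul_eq_mul]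

/-- The `m`-th iterated primitive of `h`, all primitives being taken with base point `θ`. -/
def iteratedPrimitive (θ : ℝ) (h : ℝ → ℝ) : ℕ → ℝ → ℝ
  | 0 => h
  | m + 1 => fun x => ∫ t in θ..x, iteratedPrimitive θ h m t

variable {θ : ℝ} {h : ℝ → ℝ}

lemma iteratedPrimitive_succ_self (m : ℕ) : iteratedPrimitive θ h (m + 1) θ = 0 :=
  intervalIntegral.integral_same

lemma continuous_iteratedPrimitive (hh : Continuous h) :
    ∀ m, Continuous (iteratedPrimitive θ h m)
  | 0 => hh
  | m + 1 => intervalIntegral.continuous_primitive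
      (fun a b => (continuous_iteratedPrimitive hh m).intervalIntegrable a b) θ

lemma hasDerivAt_iteratedPrimitive (hh : Continuous h) (m : ℕ) (x : ℝ) :
    HasDerivAt (iteratedPrimitive θ h (m + 1)) (iteratedPrimitive θ h m x) x :=
  ((continuous_iteratedPrimitive hh m).integral_hasStrictDerivAt θ x).hasDerivAt

lemma deriv_iteratedPrimitive (hh : Continuous h) (m : ℕ) :
    deriv (iteratedPrimitive θ h (m + 1)) = iteratedPrimitive θ h m :=
  funext fun x => (hasDerivAt_iteratedPrimitive hh m x).deriv

lemma contDiff_iteratedPrimitive (hh : Continuous h) :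
    ∀ m : ℕ, ContDiff ℝ m (iteratedPrimitive θ h m)
  | 0 => by simpa using continuous_iteratedPrimitive hh 0
  | m + 1 => by
    push_cast
    rw [contDiff_succ_iff_deriv, deriv_iteratedPrimitive hh]
    exact ⟨fun x => (hasDerivAt_iteratedPrimitive hh m x).differentiableAt, by simp,
      contDiff_iteratedPrimitive hh m⟩

lemma iteratedDeriv_iteratedPrimitive (hh : Continuous h) {k m : ℕ} (hk : k ≤ m) :
    iteratedDeriv k (iteratedPrimitive θ h m) = iteratedPrimitive θ h (m - k) := by
  induction k with
  | zero => simp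
  | succ k ih =>
    rw [iteratedDeriv_succ, ih (by omega), show m - k = m - (k + 1) + 1 by omega,
      deriv_iteratedPrimitive hh]

/-- Cauchy's formula for repeated integration. -/
lemma iteratedPrimitive_succ_eq_integral (hh : Continuous h) (m : ℕ) (x : ℝ) :
    iteratedPrimitive θ h (m + 1) x = ∫ t in θ..x, (x - t) ^ m / m.factorial * h t := by
  rw [eq_sum_iteratedDeriv_add_integral (contDiff_iteratedPrimitive hh (m + 1)) θ x,
    Finset.sum_eq_zero, zero_add, iteratedDeriv_iteratedPrimitive hh le_rfl, Nat.sub_self]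
  · rfl
  · intro k hk
    have hkm := Finset.mem_range_succ_iff.1 hk
    rw [iteratedDeriv_iteratedPrimitive hh (by omega), show m + 1 - k = m - k + 1 by omega,
      iteratedPrimitive_succ_self, zero_mul, zero_div]

lemma sub_VS_eq_iteratedPrimitive (η : ℝ → ℝ) (α β θ : ℝ) (n : ℕ) {s : ℕ} (hs : 1 ≤ s)
    {f : ℝ → ℝ} (hf : ContDiff ℝ s f) :
    (fun x => f x - VS η α β s θ n f x) =
      iteratedPrimitive θ (fun t => iteratedDeriv s f t - V η α β n (iteratedDeriv s f) t) s := by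
  obtain ⟨m, rfl⟩ := Nat.exists_eq_add_of_le' hs
  have hg : Continuous (iteratedDeriv (m + 1) f) := hf.continuous_iteratedDeriv (m + 1) le_rfl
  have hV := continuous_V η α β n (iteratedDeriv (m + 1) f)
  have hh : Continuous fun t =>
      iteratedDeriv (m + 1) f t - V η α β n (iteratedDeriv (m + 1) f) t := hg.sub hV
  ext x
  rw [iteratedPrimitive_succ_eq_integral hh, VS, eq_sum_iteratedDeriv_add_integral hf θ x,
    add_sub_add_left_eq_sub, Nat.add_sub_cancel, ← intervalIntegral.integral_sub]
  · simp only [mul_sub]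
  · exact Continuous.intervalIntegrable (by fun_prop) _ _
  · exact Continuous.intervalIntegrable (by fun_prop) _ _

lemma LpW_iteratedPrimitive_le {α β C : ℝ} {p : ℝ≥0∞} (hC : 0 ≤ C)
    (hprimitive : ∀ G : ℝ → ℝ, Continuous G →
      LpW α β p (fun x => ∫ t in θ..x, G t) ≤ C * LpW α β p G) (hh : Continuous h) (m : ℕ) :
    LpW α β p (iteratedPrimitive θ h m) ≤ C ^ m * LpW α β p h := by
  induction m with
  | zero => simp [iteratedPrimitive]
  | succ m ih =>
    calc LpW α β p (iteratedPrimitive θ h (m + 1))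
        ≤ C * LpW α β p (iteratedPrimitive θ h m) :=
          hprimitive _ (continuous_iteratedPrimitive hh m)
      _ ≤ C * (C ^ m * LpW α β p h) := by gcongr
      _ = _ := by ring

lemma WNorm_le_of_forall_LpW_iteratedDeriv_le {α β B : ℝ} {p : ℝ≥0∞} (hp : 1 ≤ p) {s : ℕ}
    {f : ℝ → ℝ} (hB : 0 ≤ B) (hf : ∀ k ≤ s, LpW α β p (iteratedDeriv k f) ≤ B) :
    WNorm α β p s f ≤ (s + 1) * B := by
  have hone : (1 : ℝ) ≤ s + 1 := by simp
  by_cases hpt : p = ⊤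
  · subst hpt
    rw [WNorm, if_pos rfl]
    exact Finset.sup'_le _ _ fun k hk =>
      (hf k (Finset.mem_range_succ_iff.1 hk)).trans (le_mul_of_one_le_left hB hone)
  rw [WNorm, if_neg hpt]
  have hr := one_le_toReal hp hpt
  have hsum : ∑ k ∈ Finset.range (s + 1), LpW α β p (iteratedDeriv k f) ^ p.toReal ≤
      ((s + 1) * B) ^ p.toReal := by
    calc _ ≤ ∑ _k ∈ Finset.range (s + 1), B ^ p.toReal :=
          Finset.sum_le_sum fun k hk => Real.rpow_le_rpow (LpW_nonneg _ _ _ _)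
            (hf k (Finset.mem_range_succ_iff.1 hk)) (by linarith)
      _ = (s + 1) * B ^ p.toReal := by simp
      _ ≤ (s + 1) ^ p.toReal * B ^ p.toReal := by
          gcongr
          exact Real.self_le_rpow_of_one_le hone hr
      _ = _ := (Real.mul_rpow (by positivity) hB).symm
  rw [one_div, Real.rpow_inv_le_iff_of_pos (Finset.sum_nonneg fun k _ =>
    Real.rpow_nonneg (LpW_nonneg _ _ _ _) _) (by positivity) (by linarith)]
  exact hsum

lemma WNorm_iteratedPrimitive_le {α β C : ℝ} {p : ℝ≥0∞} (hp : 1 ≤ p) (hC : 0 ≤ C)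
    (hprimitive : ∀ G : ℝ → ℝ, Continuous G →
      LpW α β p (fun x => ∫ t in θ..x, G t) ≤ C * LpW α β p G) (hh : Continuous h) (s : ℕ) :
    WNorm α β p s (iteratedPrimitive θ h s) ≤ (s + 1) * (1 + C) ^ s * LpW α β p h := by
  have hh0 := LpW_nonneg α β p h
  rw [mul_assoc]
  refine WNorm_le_of_forall_LpW_iteratedDeriv_le hp (by positivity) fun k hk => ?_
  rw [iteratedDeriv_iteratedPrimitive hh hk]
  refine (LpW_iteratedPrimitive_le hC hprimitive hh (s - k)).trans ?_
  gcongr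
  calc C ^ (s - k) ≤ (1 + C) ^ (s - k) := by gcongr; linarith
    _ ≤ (1 + C) ^ s := pow_le_pow_right₀ (by linarith) (Nat.sub_le s k)

end IteratedPrimitive

theorem statement15 (α β : ℝ) (hα : -1 < α) (hβ : -1 < β) (s : ℕ) (hs : 1 ≤ s)
    (p : ℝ≥0∞) (hp : 1 ≤ p) (η : ℝ → ℝ) (hη : Admissible η) (θ : ℝ)
    (hθ : θ ∈ Ioo (-1 : ℝ) 1 ∨
      (θ = -1 ∧ (1 < p → p ≠ ⊤ → β < p.toReal - 1) ∧ (p = 1 → β ≤ 0)) ∨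
      (θ = 1 ∧ (1 < p → p ≠ ⊤ → α < p.toReal - 1) ∧ (p = 1 → α ≤ 0))) :
    ∃ c : ℝ, 0 < c ∧ ∀ f : ℝ → ℝ, MemW α β p s f → ∀ n : ℕ, 1 ≤ n →
      WNorm α β p s (fun x => f x - VS η α β s θ n f x)
        ≤ c * E α β p n (iteratedDeriv s f) := by
  obtain ⟨C, hC, hhardy⟩ := exists_LpW_primitive_le hα hβ hp hθ
  obtain ⟨D, hD, hV⟩ := exists_LpW_sub_V_le hα hβ hη hp
  refine ⟨(s + 1) * (1 + C) ^ s * D, by positivity, fun f hf n hn => ?_⟩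
  set g := iteratedDeriv s f
  have hg : Continuous g := hf.1.continuous_iteratedDeriv s le_rfl
  have hgV : Continuous fun t => g t - V η α β n g t := hg.sub (continuous_V η α β n g)
  calc WNorm α β p s (fun x => f x - VS η α β s θ n f x)
      = WNorm α β p s (iteratedPrimitive θ (fun t => g t - V η α β n g t) s) := by
        rw [sub_VS_eq_iteratedPrimitive η α β θ n hs hf.1]
    _ ≤ (s + 1) * (1 + C) ^ s * LpW α β p (fun t => g t - V η α β n g t) :=
        WNorm_iteratedPrimitive_le hp hC hhardy hgV s
    _ ≤ (s + 1) * (1 + C) ^ s * (D * E α β p n g) := by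
        gcongr
        exact hV n hn g hg
    _ = _ := by ring

end JacobiApprox
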